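/- arXiv:1411.4796 — 4 statements merged into one kernel-verified Lean document; each statement's English description precedes it below -/
import Mathlib

section
/- For every instance (g, h) of the infinite Post Correspondence Problem with morphisms g, h : A* → B* over finite alphabets A and B, there exists an integer weighted automaton 𝒜 over the alphabet A having exactly 5 states such that for every infinite word w ∈ A^ω: w is a solution of the instance (g, h) if and only if w is not accepted by 𝒜 (i.e., w ∉ L(𝒜)). -/
/-- Extension of a letter-to-word map (a monoid morphism `A* → B*` given by its values on
letters) to finite words. -/
def wordImage {a b : ℕ} (g : Fin a → List (Fin b)) (p : List (Fin a)) : List (Fin b) :=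
  p.flatMap g

/-- `u` is a proper prefix of `v`: `v = u ++ w` with both `u` and `w` nonempty. -/
def IsProperPrefix {β : Type*} (u v : List β) : Prop :=
  u ≠ [] ∧ u <+: v ∧ u ≠ v

/-- The finite prefix of length `n` of an infinite word. -/
def wordPrefix {a : ℕ} (w : ℕ → Fin a) (n : ℕ) : List (Fin a) :=
  (List.range n).map w

/-- An infinite word `w` is a solution of the ωPCP instance `(g, h)` if for every finite
nonempty prefix `p` of `w`, either `h(p)` is a proper prefix of `g(p)` or `g(p)` is a proper
prefix of `h(p)`. -/
def IsOmegaPCPSolution {a b : ℕ} (g h : Fin a → List (Fin b)) (w : ℕ → Fin a) : Prop :=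
  ∀ n : ℕ,
    IsProperPrefix (wordImage h (wordPrefix w (n + 1))) (wordImage g (wordPrefix w (n + 1))) ∨
    IsProperPrefix (wordImage g (wordPrefix w (n + 1))) (wordImage h (wordPrefix w (n + 1)))

/-- `π` is a path of the integer weighted automaton with transition set `σ` and initial state
`q0` for the infinite word `w`: all transitions belong to `σ`, the first transition starts in
`q0`, consecutive transitions match, and the `j`-th transition reads the letter `w j`. -/
def IsPathFor {Q A : Type*} (σ : Finset (Q × A × Q × ℤ)) (q0 : Q) (w : ℕ → A)
    (π : ℕ → Q × A × Q × ℤ) : Prop :=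
  (∀ j, π j ∈ σ) ∧ (π 0).1 = q0 ∧ (∀ j, (π j).2.2.1 = (π (j + 1)).1) ∧ (∀ j, (π j).2.1 = w j)

/-- The infinite word `w` is accepted by the integer weighted automaton `(σ, q0, F)`:
some path for `w` has a finite prefix of weight `0` reaching a final state. -/
def WAAccepts {Q A : Type*} (σ : Finset (Q × A × Q × ℤ)) (q0 : Q) (F : Finset Q)
    (w : ℕ → A) : Prop :=
  ∃ π, IsPathFor σ q0 w π ∧
    ∃ n, (∑ j ∈ Finset.range (n + 1), (π j).2.2.2) = 0 ∧ (π n).2.2.1 ∈ F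

namespace OmegaPCPAux

/-- Finite reachability with accumulated weight. -/
inductive Reach {Q A : Type*} (σ : Finset (Q × A × Q × ℤ)) (q0 : Q) (w : ℕ → A) :
    ℕ → Q → ℤ → Prop
  | zero : Reach σ q0 w 0 q0 0
  | step {n q S p z} : Reach σ q0 w n q S → (q, w n, p, z) ∈ σ → Reach σ q0 w (n + 1) p (S + z)

theorem exists_path {Q A : Type*} (σ : Finset (Q × A × Q × ℤ))
    (hc : ∀ q x, ∃ p z, (q, x, p, z) ∈ σ) (w : ℕ → A) (q : Q) : ∃ π, IsPathFor σ q w π := by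
  choose P Z hPZ using hc
  let st : ℕ → Q := fun n => Nat.rec q (fun k r => P r (w k)) n
  refine ⟨fun n => (st n, w n, P (st n) (w n), Z (st n) (w n)), ?_, rfl, ?_, ?_⟩
  · intro j; exact hPZ _ _
  · intro j; rfl
  · intro j; rfl

theorem Reach.exists_path {Q A : Type*} {σ : Finset (Q × A × Q × ℤ)} {q0 : Q} {w : ℕ → A}
    (hc : ∀ q x, ∃ p z, (q, x, p, z) ∈ σ) {n : ℕ} {q : Q} {S : ℤ} (hr : Reach σ q0 w n q S) :
    ∃ π, IsPathFor σ q0 w π ∧ (∑ j ∈ Finset.range n, (π j).2.2.2) = S ∧ (π n).1 = q := by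
  induction hr with
  | zero =>
    obtain ⟨π, hπ⟩ := OmegaPCPAux.exists_path σ hc w q0
    exact ⟨π, hπ, by simp, hπ.2.1⟩
  | @step n q S p z hr ht ih =>
    obtain ⟨π, ⟨h1, h2, h3, h4⟩, hS, hq⟩ := ih
    obtain ⟨ρ, r1, r2, r3, r4⟩ := OmegaPCPAux.exists_path σ hc (fun j => w (n + 1 + j)) p
    have key : ∃ π' : ℕ → Q × A × Q × ℤ, (∀ j, j < n → π' j = π j) ∧ π' n = (q, w n, p, z) ∧
        ∀ j, π' (n + 1 + j) = ρ j := by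
      refine ⟨fun j => if j < n then π j else if j = n then (q, w n, p, z) else ρ (j - n - 1),
        ?_, ?_, ?_⟩
      · intro j hj; simp [hj]
      · simp
      · intro j
        have e1 : ¬ (n + 1 + j < n) := by omega
        have e2 : ¬ (n + 1 + j = n) := by omega
        have e3 : n + 1 + j - n - 1 = j := by omega
        simp only [e1, e2, e3, if_false]
    obtain ⟨π', k1, k2, k3⟩ := key
    have cases3 : ∀ j, j < n ∨ j = n ∨ ∃ i, j = n + 1 + i := by
      intro j
      rcases lt_trichotomy j n with h | h | h
      · exact Or.inl h
      · exact Or.inr (Or.inl h)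
      · exact Or.inr (Or.inr ⟨j - n - 1, by omega⟩)
    refine ⟨π', ⟨?_, ?_, ?_, ?_⟩, ?_, ?_⟩
    · intro j
      rcases cases3 j with h | rfl | ⟨i, rfl⟩
      · rw [k1 j h]; exact h1 j
      · rw [k2]; exact ht
      · rw [k3]; exact r1 i
    · rcases Nat.eq_zero_or_pos n with h | h
      · subst h; rw [k2, ← h2, hq]
      · rw [k1 0 h, h2]
    · intro j
      rcases cases3 j with h | rfl | ⟨i, rfl⟩
      · rw [k1 j h]
        rcases Nat.lt_or_ge (j + 1) n with h' | h'
        · rw [k1 _ h']; exact h3 j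
        · have : j + 1 = n := by omega
          rw [h3 j, this, k2, hq]
      · rw [k2]
        have := k3 0
        rw [Nat.add_zero] at this
        rw [this, r2]
      · rw [k3, Nat.add_assoc, k3]; exact r3 i
    · intro j
      rcases cases3 j with h | rfl | ⟨i, rfl⟩
      · rw [k1 j h]; exact h4 j
      · rw [k2]
      · rw [k3]; exact r4 i
    · rw [Finset.sum_range_succ, k2, ← hS]
      congr 1
      apply Finset.sum_congr rfl
      intro j hj
      rw [k1 j (Finset.mem_range.1 hj)]
    · have := k3 0
      rw [Nat.add_zero] at this
      rw [this, r2]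

theorem accepts_iff {Q A : Type*} {σ : Finset (Q × A × Q × ℤ)} {q0 : Q} {F : Finset Q}
    (hc : ∀ q x, ∃ p z, (q, x, p, z) ∈ σ) (w : ℕ → A) :
    WAAccepts σ q0 F w ↔ ∃ n, ∃ p ∈ F, Reach σ q0 w (n + 1) p 0 := by
  constructor
  · rintro ⟨π, ⟨h1, h2, h3, h4⟩, n, hs, hF⟩
    have hr : ∀ n, Reach σ q0 w n (π n).1 (∑ j ∈ Finset.range n, (π j).2.2.2) := by
      intro n
      induction n with
      | zero => rw [h2]; simpa using Reach.zero
      | succ n ih =>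
        rw [Finset.sum_range_succ]
        refine Reach.step ih ?_
        rw [← h3 n, ← h4 n]
        exact h1 n
    refine ⟨n, _, hF, ?_⟩
    rw [← hs, h3 n]
    exact hr (n + 1)
  · rintro ⟨n, p, hp, hr⟩
    obtain ⟨π, hπ, hs, hq⟩ := hr.exists_path hc
    exact ⟨π, hπ, n, hs, by rw [hπ.2.2.1 n, hq]; exact hp⟩

/-- The transition relation. States: `0` initial, `1` (`g`-letter guessed), `2` (`h`-letter
guessed), `3` final, `4` sink. -/
def Tr {a b : ℕ} (g h : Fin a → List (Fin b)) (q : Fin 5) (x : Fin a) (p : Fin 5) (m e : ℤ) :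
    Prop :=
  (q = 0 ∧ p = 0 ∧ m = (g x).length - (h x).length ∧ e = 0) ∨
  (q = 0 ∧ p = 3 ∧ m = (g x).length - (h x).length ∧ e = 0) ∨
  (q = 0 ∧ p = 3 ∧ (g x = [] ∨ h x = []) ∧ m = 0 ∧ e = 0) ∨
  (q = 0 ∧ p = 3 ∧ ∃ (i j : ℕ) (c d : Fin b), (g x)[i]? = some c ∧ (h x)[j]? = some d ∧ c ≠ d ∧
    m = i - j ∧ e = 0) ∨
  (q = 0 ∧ p = 1 ∧ ∃ (i : ℕ) (c d : Fin b), (g x)[i]? = some c ∧ c ≠ d ∧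
    m = i - (h x).length ∧ e = d) ∨
  (q = 0 ∧ p = 2 ∧ ∃ (i : ℕ) (c d : Fin b), (h x)[i]? = some c ∧ c ≠ d ∧
    m = (g x).length - i ∧ e = - (d : ℤ)) ∨
  (q = 1 ∧ p = 1 ∧ m = - (h x).length ∧ e = 0) ∨
  (q = 1 ∧ p = 3 ∧ ∃ (i : ℕ) (c : Fin b), (h x)[i]? = some c ∧ m = - i ∧ e = - (c : ℤ)) ∨
  (q = 2 ∧ p = 2 ∧ m = (g x).length ∧ e = 0) ∨
  (q = 2 ∧ p = 3 ∧ ∃ (i : ℕ) (c : Fin b), (g x)[i]? = some c ∧ m = i ∧ e = c) ∨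
  (q = 3 ∧ p = 4 ∧ m = 0 ∧ e = 0) ∨
  (q = 4 ∧ p = 4 ∧ m = 0 ∧ e = 0)

theorem getElem?_lt {β : Type*} {l : List β} {i : ℕ} {c : β} (hh : l[i]? = some c) :
    i < l.length := (List.getElem?_eq_some_iff.1 hh).1

theorem exists_sigma {a b : ℕ} (g h : Fin a → List (Fin b)) :
    ∃ σ : Finset (Fin 5 × Fin a × Fin 5 × ℤ), ∀ q x p z,
      (q, x, p, z) ∈ σ ↔ ∃ m e, Tr g h q x p m e ∧ z = (b + 1 : ℤ) * m + e := by
  classical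
  let L : ℤ := ∑ x, (((g x).length : ℤ) + (h x).length)
  have hL : ∀ x, ((g x).length : ℤ) + (h x).length ≤ L := by
    intro x
    exact Finset.single_le_sum (f := fun x => ((g x).length : ℤ) + (h x).length)
      (fun i _ => by positivity) (Finset.mem_univ x)
  have hfin : Set.Finite {t : Fin 5 × Fin a × Fin 5 × ℤ |
      ∃ m e, Tr g h t.1 t.2.1 t.2.2.1 m e ∧ t.2.2.2 = (b + 1 : ℤ) * m + e} := by
    apply Set.Finite.subset (Set.Finite.image
      (fun u : Fin 5 × Fin a × Fin 5 × ℤ × ℤ =>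
        (u.1, u.2.1, u.2.2.1, (b + 1 : ℤ) * u.2.2.2.1 + u.2.2.2.2))
      (Finset.finite_toSet ((Finset.univ : Finset (Fin 5)) ×ˢ (Finset.univ : Finset (Fin a)) ×ˢ
        (Finset.univ : Finset (Fin 5)) ×ˢ Finset.Icc (-L) L ×ˢ Finset.Icc (-(b : ℤ)) b)))
    rintro ⟨q, x, p, z⟩ ⟨m, e, ht, hz⟩
    simp only at ht hz
    refine ⟨(q, x, p, m, e), ?_, by simp [hz]⟩
    have hx := hL x
    simp only [Finset.coe_product, Set.mem_prod, Finset.coe_univ, Set.mem_univ, true_and,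
      Finset.coe_Icc, Set.mem_Icc]
    rcases ht with ⟨-, -, h1, h2⟩ | ⟨-, -, h1, h2⟩ | ⟨-, -, -, h1, h2⟩ |
      ⟨-, -, i, j, c, d, hi, hj, -, h1, h2⟩ | ⟨-, -, i, c, d, hi, -, h1, h2⟩ |
      ⟨-, -, i, c, d, hi, -, h1, h2⟩ | ⟨-, -, h1, h2⟩ | ⟨-, -, i, c, hi, h1, h2⟩ |
      ⟨-, -, h1, h2⟩ | ⟨-, -, i, c, hi, h1, h2⟩ | ⟨-, -, h1, h2⟩ | ⟨-, -, h1, h2⟩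
    · omega
    · omega
    · omega
    · have := getElem?_lt hi
      have := getElem?_lt hj
      omega
    all_goals first
      | omega
      | (have := getElem?_lt hi; have := c.2; have := d.2; omega)
      | (have := getElem?_lt hi; have := c.2; omega)
  exact ⟨hfin.toFinset, fun q x p z => by simp⟩

theorem wordImage_succ {a b : ℕ} (g : Fin a → List (Fin b)) (w : ℕ → Fin a) (n : ℕ) :
    wordImage g (wordPrefix w (n + 1)) = wordImage g (wordPrefix w n) ++ g (w n) := by
  simp [wordImage, wordPrefix, List.range_succ]

theorem wordImage_zero {a b : ℕ} (g : Fin a → List (Fin b)) (w : ℕ → Fin a) :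
    wordImage g (wordPrefix w 0) = [] := by
  simp [wordImage, wordPrefix]

theorem image_find {a b : ℕ} (g : Fin a → List (Fin b)) (w : ℕ → Fin a) (n i : ℕ) (c : Fin b)
    (hi : (wordImage g (wordPrefix w n))[i]? = some c) :
    ∃ s j, (g (w s))[j]? = some c ∧ i = (wordImage g (wordPrefix w s)).length + j := by
  induction n with
  | zero => simp [wordImage_zero] at hi
  | succ n ih =>
    rw [wordImage_succ] at hi
    rcases Nat.lt_or_ge i (wordImage g (wordPrefix w n)).length with h | h
    · rw [List.getElem?_append_left h] at hi; exact ih hi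
    · rw [List.getElem?_append_right h] at hi
      exact ⟨n, _, hi, by omega⟩

theorem image_mono {a b : ℕ} {g : Fin a → List (Fin b)} {w : ℕ → Fin a} {n i : ℕ} {c : Fin b}
    (hi : (wordImage g (wordPrefix w n))[i]? = some c) :
    (wordImage g (wordPrefix w (n + 1)))[i]? = some c := by
  rw [wordImage_succ, List.getElem?_append_left (getElem?_lt hi)]; exact hi

theorem image_last {a b : ℕ} {g : Fin a → List (Fin b)} {w : ℕ → Fin a} {n j : ℕ} {c : Fin b}
    (hi : (g (w n))[j]? = some c) :
    (wordImage g (wordPrefix w (n + 1)))[(wordImage g (wordPrefix w n)).length + j]? = some c := by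
  rw [wordImage_succ, List.getElem?_append_right (by omega)]; simpa using hi

theorem prefix_getElem? {β : Type*} {u v : List β} (huv : u <+: v) {i : ℕ} {c : β}
    (hc : u[i]? = some c) : v[i]? = some c := by
  obtain ⟨t, rfl⟩ := huv
  rw [List.getElem?_append_left (getElem?_lt hc)]; exact hc

theorem exists_mismatch {β : Type*} (u v : List β) (h1 : ¬ u <+: v) (h2 : ¬ v <+: u) :
    ∃ (i : ℕ) (c d : β), u[i]? = some c ∧ v[i]? = some d ∧ c ≠ d := by
  induction u generalizing v with
  | nil => simp at h1
  | cons x u ih =>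
    cases v with
    | nil => simp at h2
    | cons y v =>
      by_cases hxy : x = y
      · subst hxy
        simp only [List.cons_prefix_cons, true_and] at h1 h2
        obtain ⟨i, c, d, hc, hd, hcd⟩ := ih v h1 h2
        exact ⟨i + 1, c, d, by simpa using hc, by simpa using hd, hcd⟩
      · exact ⟨0, x, y, by simp, by simp, hxy⟩

theorem not_sol_of_mismatch {a b : ℕ} {g h : Fin a → List (Fin b)} {w : ℕ → Fin a} {n i : ℕ}
    {c d : Fin b} (hg : (wordImage g (wordPrefix w (n + 1)))[i]? = some c)
    (hh : (wordImage h (wordPrefix w (n + 1)))[i]? = some d) (hcd : c ≠ d) :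
    ¬ IsOmegaPCPSolution g h w := by
  intro hs
  rcases hs n with ⟨-, hp, -⟩ | ⟨-, hp, -⟩
  · have := prefix_getElem? hp hh
    rw [hg] at this; exact hcd (Option.some.inj this)
  · have := prefix_getElem? hp hg
    rw [hh] at this; exact hcd (Option.some.inj this).symm

theorem not_sol_of_length {a b : ℕ} {g h : Fin a → List (Fin b)} {w : ℕ → Fin a} {n : ℕ}
    (hl : (wordImage g (wordPrefix w (n + 1))).length = (wordImage h (wordPrefix w (n + 1))).length) :
    ¬ IsOmegaPCPSolution g h w := by
  intro hs
  rcases hs n with ⟨-, hp, hne⟩ | ⟨-, hp, hne⟩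
  · exact hne (hp.eq_of_length hl.symm)
  · exact hne (hp.eq_of_length hl)

theorem split_zero {b : ℕ} {m e : ℤ} (he1 : -(b : ℤ) ≤ e) (he2 : e ≤ b)
    (h0 : (b + 1 : ℤ) * m + e = 0) : m = 0 ∧ e = 0 := by
  have hm : m = 0 := by
    by_contra hne
    rcases lt_or_gt_of_ne hne with h | h
    · nlinarith
    · nlinarith
  subst hm
  exact ⟨rfl, by simpa using h0⟩

/-- Invariant along runs. -/
def RunInv {a b : ℕ} (g h : Fin a → List (Fin b)) (w : ℕ → Fin a) (n : ℕ) (q : Fin 5) (S : ℤ) :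
    Prop :=
  (q = 0 → S = (b + 1 : ℤ) * ((wordImage g (wordPrefix w n)).length -
    (wordImage h (wordPrefix w n)).length)) ∧
  (q = 1 → ∃ (i : ℕ) (c d : Fin b), (wordImage g (wordPrefix w n))[i]? = some c ∧ c ≠ d ∧
    S = (b + 1 : ℤ) * (i - (wordImage h (wordPrefix w n)).length) + d) ∧
  (q = 2 → ∃ (i : ℕ) (c d : Fin b), (wordImage h (wordPrefix w n))[i]? = some c ∧ c ≠ d ∧
    S = (b + 1 : ℤ) * ((wordImage g (wordPrefix w n)).length - i) - d) ∧
  (q = 3 → S = 0 → ¬ IsOmegaPCPSolution g h w)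

theorem inv_step {a b : ℕ} {g h : Fin a → List (Fin b)} {w : ℕ → Fin a} {n : ℕ} {q p : Fin 5}
    {S m e : ℤ} (hI : RunInv g h w n q S) (ht : Tr g h q (w n) p m e) :
    RunInv g h w (n + 1) p (S + ((b + 1 : ℤ) * m + e)) := by
  obtain ⟨I0, I1, I2, I3⟩ := hI
  have lg : ((wordImage g (wordPrefix w (n + 1))).length : ℤ) =
      (wordImage g (wordPrefix w n)).length + (g (w n)).length := by
    rw [wordImage_succ, List.length_append]; push_cast; rfl
  have lh : ((wordImage h (wordPrefix w (n + 1))).length : ℤ) =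
      (wordImage h (wordPrefix w n)).length + (h (w n)).length := by
    rw [wordImage_succ, List.length_append]; push_cast; rfl
  rcases ht with ⟨rfl, rfl, rfl, rfl⟩ | ⟨rfl, rfl, rfl, rfl⟩ | ⟨rfl, rfl, hx, rfl, rfl⟩ |
      ⟨rfl, rfl, i, j, c, d, hi, hj, hcd, rfl, rfl⟩ | ⟨rfl, rfl, i, c, d, hi, hcd, rfl, rfl⟩ |
      ⟨rfl, rfl, i, c, d, hi, hcd, rfl, rfl⟩ | ⟨rfl, rfl, rfl, rfl⟩ |
      ⟨rfl, rfl, i, c, hi, rfl, rfl⟩ |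
      ⟨rfl, rfl, rfl, rfl⟩ | ⟨rfl, rfl, i, c, hi, rfl, rfl⟩ | ⟨rfl, rfl, rfl, rfl⟩ |
      ⟨rfl, rfl, rfl, rfl⟩
  · refine ⟨fun _ => ?_, by simp, by simp, by simp⟩
    rw [I0 rfl, lg, lh]; ring
  · refine ⟨by simp, by simp, by simp, fun _ hS => ?_⟩
    rw [I0 rfl] at hS
    have := (split_zero (b := b) (m := (wordImage g (wordPrefix w (n + 1))).length -
      (wordImage h (wordPrefix w (n + 1))).length) (e := 0) (by omega) (by omega)
      (by rw [lg, lh]; linear_combination hS)).1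
    exact not_sol_of_length (n := n) (by omega)
  · refine ⟨by simp, by simp, by simp, fun _ hS => ?_⟩
    rw [I0 rfl] at hS
    have := (split_zero (b := b) (m := (wordImage g (wordPrefix w n)).length -
      (wordImage h (wordPrefix w n)).length) (e := 0) (by omega) (by omega)
      (by linear_combination hS)).1
    cases n with
    | zero =>
      intro hs
      have h0 := hs 0
      simp only [wordImage_succ, wordImage_zero, List.nil_append, IsProperPrefix] at h0
      rcases hx with hx | hx
      · rw [hx] at h0
        rcases h0 with ⟨h1, h2, -⟩ | ⟨h1, -, -⟩
        · exact h1 (List.prefix_nil.1 h2)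
        · exact h1 rfl
      · rw [hx] at h0
        rcases h0 with ⟨h1, -, -⟩ | ⟨h1, h2, -⟩
        · exact h1 rfl
        · exact h1 (List.prefix_nil.1 h2)
    | succ n => exact not_sol_of_length (n := n) (by omega)
  · refine ⟨by simp, by simp, by simp, fun _ hS => ?_⟩
    rw [I0 rfl] at hS
    have := (split_zero (b := b) (m := ((wordImage g (wordPrefix w n)).length + i) -
      ((wordImage h (wordPrefix w n)).length + j)) (e := 0) (by omega) (by omega)
      (by linear_combination hS)).1
    have h1 := image_last hi
    have h2 := image_last hj
    have h3 : (wordImage g (wordPrefix w n)).length + i =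
      (wordImage h (wordPrefix w n)).length + j := by omega
    rw [← h3] at h2
    exact not_sol_of_mismatch h1 h2 hcd
  · refine ⟨by simp, fun _ => ?_, by simp, by simp⟩
    refine ⟨_, c, d, image_last hi, hcd, ?_⟩
    rw [I0 rfl, lh]; push_cast; ring
  · refine ⟨by simp, by simp, fun _ => ?_, by simp⟩
    refine ⟨_, c, d, image_last hi, hcd, ?_⟩
    rw [I0 rfl, lg]; push_cast; ring
  · refine ⟨by simp, fun _ => ?_, by simp, by simp⟩
    obtain ⟨i, c, d, hi, hcd, hS⟩ := I1 rfl
    refine ⟨i, c, d, image_mono hi, hcd, ?_⟩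
    rw [hS, lh]; ring
  · refine ⟨by simp, by simp, by simp, fun _ h0 => ?_⟩
    obtain ⟨k, c', d, hk, hcd, hS⟩ := I1 rfl
    rw [hS] at h0
    have := c.2
    have := d.2
    have := split_zero (b := b) (m := (k : ℤ) - ((wordImage h (wordPrefix w n)).length + i))
      (e := (d : ℤ) - (c : ℤ)) (by omega) (by omega) (by linear_combination h0)
    have h3 : k = (wordImage h (wordPrefix w n)).length + i := by omega
    have h4 : d = c := by apply Fin.ext; omega
    have h2 := image_last hi
    rw [← h3, ← h4] at h2
    exact not_sol_of_mismatch (image_mono hk) h2 hcd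
  · refine ⟨by simp, by simp, fun _ => ?_, by simp⟩
    obtain ⟨i, c, d, hi, hcd, hS⟩ := I2 rfl
    refine ⟨i, c, d, image_mono hi, hcd, ?_⟩
    rw [hS, lg]; ring
  · refine ⟨by simp, by simp, by simp, fun _ h0 => ?_⟩
    obtain ⟨k, c', d, hk, hcd, hS⟩ := I2 rfl
    rw [hS] at h0
    have := c.2
    have := d.2
    have := split_zero (b := b) (m := ((wordImage g (wordPrefix w n)).length + i) - (k : ℤ))
      (e := (c : ℤ) - (d : ℤ)) (by omega) (by omega) (by linear_combination h0)
    have h3 : k = (wordImage g (wordPrefix w n)).length + i := by omega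
    have h4 : d = c := by apply Fin.ext; omega
    have h2 := image_last hi
    rw [← h3, ← h4] at h2
    exact not_sol_of_mismatch h2 (image_mono hk) hcd.symm
  · exact ⟨by simp, by simp, by simp, by simp⟩
  · exact ⟨by simp, by simp, by simp, by simp⟩

end OmegaPCPAux

open OmegaPCPAux

/-- For every instance `(g, h)` of the infinite Post Correspondence Problem there is an
integer weighted automaton with exactly 5 states (and a complete transition relation) such
that an infinite word `w` is a solution of `(g, h)` iff `w` is not accepted by the automaton. -/
theorem omegaPCP_to_five_state_weighted_automaton (a b : ℕ)
    (g h : Fin a → List (Fin b)) :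
    ∃ (σ : Finset (Fin 5 × Fin a × Fin 5 × ℤ)) (q0 : Fin 5) (F : Finset (Fin 5)),
      (∀ q : Fin 5, ∀ x : Fin a, ∃ p z, (q, x, p, z) ∈ σ) ∧
      ∀ w : ℕ → Fin a, (IsOmegaPCPSolution g h w ↔ ¬ WAAccepts σ q0 F w) := by
  obtain ⟨σ, hσ⟩ := exists_sigma g h
  have hc : ∀ q : Fin 5, ∀ x : Fin a, ∃ p z, (q, x, p, z) ∈ σ := by
    intro q x
    have : ∃ p m e, Tr g h q x p m e := by
      unfold Tr
      fin_cases q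
      · exact ⟨0, _, _, Or.inl ⟨rfl, rfl, rfl, rfl⟩⟩
      · exact ⟨1, - (h x).length, 0, by simp⟩
      · exact ⟨2, (g x).length, 0, by simp⟩
      · exact ⟨4, 0, 0, by simp⟩
      · exact ⟨4, 0, 0, by simp⟩
    obtain ⟨p, m, e, ht⟩ := this
    exact ⟨p, _, (hσ _ _ _ _).2 ⟨m, e, ht, rfl⟩⟩
  refine ⟨σ, 0, {3}, hc, fun w => ?_⟩
  rw [accepts_iff hc]
  constructor
  · rintro hs ⟨n, p, hp, hr⟩
    have hinv : ∀ n q S, Reach σ 0 w n q S → RunInv g h w n q S := by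
      intro n q S hr
      induction hr with
      | zero => simp [RunInv, wordImage_zero]
      | step hr ht ih =>
        obtain ⟨m, e, htr, rfl⟩ := (hσ _ _ _ _).1 ht
        exact inv_step ih htr
    exact (hinv _ _ _ hr).2.2.2 (Finset.mem_singleton.1 hp) rfl hs
  · intro hna
    by_contra hns
    apply hna
    have step : ∀ {n q S p m e S'}, Reach σ 0 w n q S → Tr g h q (w n) p m e →
        S + ((b + 1 : ℤ) * m + e) = S' → Reach σ 0 w (n + 1) p S' := by
      intro n q S p m e S' hr ht hS
      rw [← hS]
      exact Reach.step hr ((hσ _ _ _ _).2 ⟨m, e, ht, rfl⟩)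
    have lg : ∀ n, ((wordImage g (wordPrefix w (n + 1))).length : ℤ) =
        (wordImage g (wordPrefix w n)).length + (g (w n)).length := by
      intro n; rw [wordImage_succ, List.length_append]; push_cast; rfl
    have lh : ∀ n, ((wordImage h (wordPrefix w (n + 1))).length : ℤ) =
        (wordImage h (wordPrefix w n)).length + (h (w n)).length := by
      intro n; rw [wordImage_succ, List.length_append]; push_cast; rfl
    have r0 : ∀ n, Reach σ 0 w n 0 ((b + 1 : ℤ) * ((wordImage g (wordPrefix w n)).length -
        (wordImage h (wordPrefix w n)).length)) := by
      intro n
      induction n with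
      | zero => simpa [wordImage_zero] using Reach.zero
      | succ n ih =>
        refine step ih (Or.inl ⟨rfl, rfl, rfl, rfl⟩) ?_
        rw [lg, lh]; ring
    unfold IsOmegaPCPSolution at hns
    push Not at hns
    obtain ⟨n, hn1, hn2⟩ := hns
    have hempty : (g (w 0) = [] ∨ h (w 0) = []) → ∃ n, ∃ p ∈ ({3} : Finset (Fin 5)),
        Reach σ 0 w (n + 1) p 0 := by
      intro hx
      exact ⟨0, 3, by simp, step Reach.zero
        (Or.inr (Or.inr (Or.inl ⟨rfl, rfl, hx, rfl, rfl⟩))) (by simp)⟩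
    have hnil : ∀ f : Fin a → List (Fin b), wordImage f (wordPrefix w (n + 1)) = [] →
        f (w 0) = [] := by
      intro f hf
      simp only [wordImage, wordPrefix, List.flatMap_eq_nil_iff] at hf
      exact hf _ (List.mem_map.2 ⟨0, by simp, rfl⟩)
    by_cases hu : wordImage h (wordPrefix w (n + 1)) = []
    · exact hempty (Or.inr (hnil h hu))
    by_cases hv : wordImage g (wordPrefix w (n + 1)) = []
    · exact hempty (Or.inl (hnil g hv))
    by_cases he : wordImage g (wordPrefix w (n + 1)) = wordImage h (wordPrefix w (n + 1))
    · refine ⟨n, 3, by simp, step (r0 n) (Or.inr (Or.inl ⟨rfl, rfl, rfl, rfl⟩)) ?_⟩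
      have h1 := lg n
      have h2 := lh n
      rw [he] at h1
      have h3 : ((wordImage g (wordPrefix w n)).length : ℤ) - (wordImage h (wordPrefix w n)).length
        = -((g (w n)).length - (h (w n)).length) := by omega
      rw [h3]; ring
    have hp1 : ¬ wordImage g (wordPrefix w (n + 1)) <+: wordImage h (wordPrefix w (n + 1)) :=
      fun hp => hn2 ⟨hv, hp, he⟩
    have hp2 : ¬ wordImage h (wordPrefix w (n + 1)) <+: wordImage g (wordPrefix w (n + 1)) :=
      fun hp => hn1 ⟨hu, hp, fun h => he h.symm⟩
    obtain ⟨i, c, d, hc', hd, hcd⟩ := exists_mismatch _ _ hp1 hp2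
    obtain ⟨s, j, hj, hij⟩ := image_find _ _ _ _ _ hc'
    obtain ⟨t, k, hk, hik⟩ := image_find _ _ _ _ _ hd
    have hpos : ((wordImage g (wordPrefix w s)).length : ℤ) + j =
      (wordImage h (wordPrefix w t)).length + k := by omega
    rcases lt_trichotomy s t with hst | hst | hst
    · have r1 : ∀ r, Reach σ 0 w (s + 1 + r) 1 ((b + 1 : ℤ) * (i -
          (wordImage h (wordPrefix w (s + 1 + r))).length) + d) := by
        intro r
        induction r with
        | zero =>
          refine step (r0 s) (Or.inr (Or.inr (Or.inr (Or.inr (Or.inl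
            ⟨rfl, rfl, j, c, d, hj, hcd, rfl, rfl⟩))))) ?_
          rw [Nat.add_zero, lh, hij]; push_cast; ring
        | succ r ih =>
          refine step ih (p := 1) (m := - (h (w (s + 1 + r))).length) (e := 0) (by simp [Tr]) ?_
          rw [← Nat.add_assoc, lh]; ring
      obtain ⟨r, rfl⟩ : ∃ r, t = s + 1 + r := ⟨t - s - 1, by omega⟩
      refine ⟨_, 3, by simp, step (r1 r) (p := 3) (m := - k) (e := - (d : ℤ)) ?_ ?_⟩
      · unfold Tr
        iterate 7 right
        left
        exact ⟨rfl, rfl, k, d, hk, rfl, rfl⟩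
      · rw [hik]; push_cast; ring
    · subst hst
      refine ⟨s, 3, by simp, step (r0 s) (Or.inr (Or.inr (Or.inr (Or.inl
        ⟨rfl, rfl, j, k, c, d, hj, hk, hcd, rfl, rfl⟩)))) ?_⟩
      have : ((wordImage g (wordPrefix w s)).length : ℤ) - (wordImage h (wordPrefix w s)).length
        = -(j - k) := by omega
      rw [this]; ring
    · have r1 : ∀ r, Reach σ 0 w (t + 1 + r) 2 ((b + 1 : ℤ) * (
          (wordImage g (wordPrefix w (t + 1 + r))).length - i) - c) := by
        intro r
        induction r with
        | zero =>
          refine step (r0 t) (Or.inr (Or.inr (Or.inr (Or.inr (Or.inr (Or.inl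
            ⟨rfl, rfl, k, d, c, hk, hcd.symm, rfl, rfl⟩)))))) ?_
          rw [Nat.add_zero, lg, hik]; push_cast; ring
        | succ r ih =>
          refine step ih (p := 2) (m := (g (w (t + 1 + r))).length) (e := 0) (by simp [Tr]) ?_
          rw [← Nat.add_assoc, lg]; ring
      obtain ⟨r, rfl⟩ : ∃ r, s = t + 1 + r := ⟨s - t - 1, by omega⟩
      refine ⟨_, 3, by simp, step (r1 r) (p := 3) (m := j) (e := (c : ℤ)) ?_ ?_⟩
      · unfold Tr
        iterate 9 right
        left
        exact ⟨rfl, rfl, j, c, hj, rfl, rfl⟩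
      · rw [hij]; push_cast; ring
end

section
/- The universality problem for integer weighted automata on infinite words is undecidable: the predicate on encoded integer weighted automata 𝒜 (with state set Fin n, alphabet Fin m, transitions given by a finite list, an initial state and a list of final states, all encoded as natural numbers) asserting that L(𝒜) = A^ω, i.e., that every infinite word over the alphabet is accepted by 𝒜, is not a computable predicate. -/
/-- A code for an integer weighted automaton: the number of states `n` (states are
`0, …, n-1`), the number of letters `m` (letters are `0, …, m-1`), the list of transitions
`(source state, letter, target state, weight)`, the initial state, and the list of final
states. -/
abbrev WACode : Type := ℕ × ℕ × List (ℕ × ℕ × ℕ × ℤ) × ℕ × List ℕ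

/-- The code describes a genuine complete integer weighted automaton: all data are in range
and for every state `q` and letter `x` there is at least one transition `(q, x, p, z)`. -/
def WAWellFormed : WACode → Prop
  | (n, m, ts, q0, fs) =>
    q0 < n ∧ (∀ q ∈ fs, q < n) ∧
    (∀ t ∈ ts, t.1 < n ∧ t.2.1 < m ∧ t.2.2.1 < n) ∧
    (∀ q < n, ∀ x < m, ∃ p z, (q, x, p, z) ∈ ts)

/-- `π` is a path for the infinite word `w` over the transition list `ts` starting in `q0`. -/
def WAIsPath (ts : List (ℕ × ℕ × ℕ × ℤ)) (q0 : ℕ) (w : ℕ → ℕ)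
    (π : ℕ → ℕ × ℕ × ℕ × ℤ) : Prop :=
  (∀ j, π j ∈ ts) ∧ (π 0).1 = q0 ∧ (∀ j, (π j).2.2.1 = (π (j + 1)).1) ∧ (∀ j, (π j).2.1 = w j)

/-- The encoded automaton accepts the infinite word `w`: some path for `w` has a finite
prefix with weight `0` reaching a final state. -/
def WAAcceptsCode : WACode → (ℕ → ℕ) → Prop
  | (_, _, ts, q0, fs), w =>
    ∃ π, WAIsPath ts q0 w π ∧
      ∃ k, (∑ j ∈ Finset.range (k + 1), (π j).2.2.2) = 0 ∧ (π k).2.2.1 ∈ fs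

/-- `L(𝒜) = A^ω`: every infinite word over the alphabet is accepted. -/
def WAUniversal (c : WACode) : Prop :=
  ∀ w : ℕ → ℕ, (∀ i, w i < c.2.1) → WAAcceptsCode c w


namespace WAProof

open Classical

/-- A linear register system: rules with source and target control states, and for each
register `k` the linear relation `α * y = β * x + γ` between old value `x` and new value `y`. -/
structure LSys (T S K : Type) where
  src : T → S
  tgt : T → S
  al : T → K → ℕ
  be : T → K → ℕ
  ga : T → K → ℤ
  al_pos : ∀ t k, 0 < al t k
  s0 : S
  k0 : K

/-- One step by the rule `t`. -/
def LSys.StepBy {T S K : Type} (M : LSys T S K) (t : T) (c d : S × (K → ℕ)) : Prop :=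
  M.src t = c.1 ∧ M.tgt t = d.1 ∧
    ∀ k, (M.al t k : ℤ) * d.2 k = M.be t k * c.2 k + M.ga t k

/-- One step of the system. -/
def LSys.Step {T S K : Type} (M : LSys T S K) (c d : S × (K → ℕ)) : Prop :=
  ∃ t, M.StepBy t c d

/-- The initial registers. -/
noncomputable def LSys.ini {T S K : Type} (M : LSys T S K) (e : ℕ) : K → ℕ :=
  fun k => if k = M.k0 then e else 0

/-- States of the checking automaton. -/
inductive AS (T K : Type)
  | W0 | W | U | D | Acc | Dead
  | P (t : T) (k : K)
  | R (o : Option T) (k : K)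
  | C (o : Option T)

/-- Letters. -/
inductive Lt (T K : Type)
  | sep (o : Option T)
  | reg (k : K)

instance finAS {T K : Type} [Finite T] [Finite K] : Finite (AS T K) := by
  let f : AS T K → Fin 6 ⊕ (T × K) ⊕ (Option T × K) ⊕ Option T := fun
    | .W0 => .inl 0 | .W => .inl 1 | .U => .inl 2 | .D => .inl 3 | .Acc => .inl 4
    | .Dead => .inl 5
    | .P t k => .inr (.inl (t, k))
    | .R t k => .inr (.inr (.inl (t, k)))
    | .C o => .inr (.inr (.inr o))
  refine Finite.of_injective f ?_
  intro a b h
  cases a <;> cases b <;> simp_all [f]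

instance finLt {T K : Type} [Finite T] [Finite K] : Finite (Lt T K) := by
  let f : Lt T K → Option T ⊕ K := fun
    | .sep o => .inl o
    | .reg k => .inr k
  refine Finite.of_injective f ?_
  intro a b h
  cases a <;> cases b <;> simp_all [f]

section
variable {T S K : Type} (M : LSys T S K)

/-- coefficient for new values -/
def LSys.alo : Option T → K → ℕ
  | none, _ => 1
  | some t, k => M.al t k

/-- the state after a separator -/
def LSys.tgo : Option T → S
  | none => M.s0
  | some t => M.tgt t

/-- permitted succession of separators -/
def LSys.ok (o : Option T) : Lt T K → Prop
  | .reg _ => True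
  | .sep none => False
  | .sep (some t) => M.src t = M.tgo o

/-- number of occurrences of register letter `k` in a letter -/
noncomputable def ind (k : K) : Lt T K → ℕ
  | .reg j => if j = k then 1 else 0
  | .sep _ => 0

/-- Fixed transitions. -/
inductive Tr : AS T K → Lt T K → AS T K → ℤ → Prop
  | w0W : Tr .W0 (.sep none) .W 0
  | w0C : Tr .W0 (.sep none) (.C none) 0
  | w0P (t k) : Tr .W0 (.sep none) (.P t k) 0
  | w0R (k) (h : k ≠ M.k0) : Tr .W0 (.sep none) (.R none k) 0
  | w0s (t) : Tr .W0 (.sep (some t)) .Acc 0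
  | w0a (k) : Tr .W0 (.reg k) .Acc 0
  | wW (x) : Tr .W x .W 0
  | wP (o t k) : Tr .W (.sep o) (.P t k) 0
  | wC (o) : Tr .W (.sep o) (.C o) 0
  | pP (t k j) : Tr (.P t k) (.reg j) (.P t k) (M.be t k * ind k (.reg j : Lt T K))
  | pR (t k) : Tr (.P t k) (.sep (some t)) (.R (some t) k) (M.ga t k)
  | pD (t k x) : Tr (.P t k) x .Dead 0
  | rR (o k j) : Tr (.R o k) (.reg j) (.R o k) (-(M.alo o k * ind k (.reg j : Lt T K)))
  | rU (o k x) : Tr (.R o k) x .U (1 - (M.alo o k * ind k x))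
  | rD (o k o') : Tr (.R o k) (.sep o') .D (-1)
  | cC (o k) : Tr (.C o) (.reg k) (.C o) 0
  | cD (o x) : Tr (.C o) x .Dead 0
  | cA (o x) (h : ¬ M.ok o x) : Tr (.C o) x .Acc 0
  | uU (x) : Tr .U x .U 1
  | dD (x) : Tr .D x .D (-1)
  | aA (x) : Tr .Acc x .Acc 0
  | eE (x) : Tr .Dead x .Dead 0

theorem Tr.det {Q X P z z'} (h : Tr M Q X P z) (h' : Tr M Q X P z') : z = z' := by
  cases h <;> cases h' <;> rfl

theorem Tr.total (Q X) : ∃ P z, Tr M Q X P z := by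
  cases Q
  case W0 =>
    rcases X with (_ | t) | k
    exacts [⟨_, _, .w0W⟩, ⟨_, _, .w0s _⟩, ⟨_, _, .w0a _⟩]
  exacts [⟨_, _, .wW _⟩, ⟨_, _, .uU _⟩, ⟨_, _, .dD _⟩, ⟨_, _, .aA _⟩, ⟨_, _, .eE _⟩,
    ⟨_, _, .pD _ _ _⟩, ⟨_, _, .rU _ _ _⟩, ⟨_, _, .cD _ _⟩]

/-- All transitions, including the one depending on `e`. -/
def Tre (e : ℕ) (Q : AS T K) (X : Lt T K) (P : AS T K) (z : ℤ) : Prop :=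
  Tr M Q X P z ∨ (Q = .W0 ∧ X = .sep none ∧ P = .R none M.k0 ∧ z = e)

/-- Final states. -/
def Fin' : AS T K → Prop
  | .U | .D | .Acc => True
  | _ => False

/-- Finite runs. -/
inductive Run (e : ℕ) (w : ℕ → Lt T K) : ℕ → AS T K → ℤ → Prop
  | zero : Run e w 0 .W0 0
  | succ {n Q z P z'} : Run e w n Q z → Tre M e Q (w n) P z' → Run e w (n + 1) P (z + z')

variable {M} {e : ℕ} {w : ℕ → Lt T K}

theorem Run.step {n Q z P z' z''} (h : Run M e w n Q z) (ht : Tr M Q (w n) P z')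
    (hz : z'' = z + z') : Run M e w (n + 1) P z'' := hz ▸ h.succ (.inl ht)

theorem Run.upU (m : ℕ) : ∀ {n z}, Run M e w n .U z → Run M e w (n + m) .U (z + m) := by
  induction m with
  | zero => intro n z h; simpa using h
  | succ m ih =>
    intro n z h
    exact (ih h).step (.uU _) (by push_cast; ring)

theorem Run.dnD (m : ℕ) : ∀ {n z}, Run M e w n .D z → Run M e w (n + m) .D (z - m) := by
  induction m with
  | zero => intro n z h; simpa using h
  | succ m ih =>
    intro n z h
    exact (ih h).step (.dD _) (by push_cast; ring)

/-- Abstract acceptance. -/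
def Accd (M : LSys T S K) (e : ℕ) (w : ℕ → Lt T K) : Prop :=
  ∃ n Q, Fin' Q ∧ Run M e w n Q 0

theorem Run.accU {n z} (h : Run M e w n .U z) (hz : z ≤ 0) : Accd M e w := by
  refine ⟨n + (-z).toNat, .U, trivial, ?_⟩
  have := h.upU (-z).toNat
  rwa [Int.toNat_of_nonneg (by omega), add_neg_cancel] at this

theorem Run.accD {n z} (h : Run M e w n .D z) (hz : 0 ≤ z) : Accd M e w := by
  refine ⟨n + z.toNat, .D, trivial, ?_⟩
  have := h.dnD z.toNat
  rwa [Int.toNat_of_nonneg (by omega), sub_self] at this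

/-- count of letter `k` among the `n` letters starting at position `p`. -/
noncomputable def cnt (w : ℕ → Lt T K) (p : ℕ) (k : K) (n : ℕ) : ℕ :=
  ∑ j ∈ Finset.range n, ind k (w (p + j))

theorem cnt_succ (p : ℕ) (k : K) (n : ℕ) :
    cnt w p k (n + 1) = cnt w p k n + ind k (w (p + n)) := Finset.sum_range_succ _ _

/-- `p` is a position of a separator `o`, whose R-branches carry `g`. -/
def Good (M : LSys T S K) (e : ℕ) (w : ℕ → Lt T K) (p : ℕ) (o : Option T) (g : K → ℤ) : Prop :=
  Run M e w (p + 1) .W 0 ∧ Run M e w (p + 1) (.C o) 0 ∧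
  (∀ t k, Run M e w (p + 1) (.P t k) 0) ∧ ∀ k, Run M e w (p + 1) (.R o k) (g k)

theorem LSys.alo_pos (o : Option T) (k : K) : 0 < M.alo o k := by
  cases o
  · exact Nat.one_pos
  · exact M.al_pos _ _

theorem good_next [Fintype K] (hna : ¬ Accd M e w) {p o g} (h : Good M e w p o g) :
    ∃ (y : K → ℕ) (t : T) (p' : ℕ), (∀ k, (M.alo o k : ℤ) * y k = g k) ∧ M.src t = M.tgo o ∧
      Good M e w p' (some t) (fun k => M.be t k * y k + M.ga t k) := by
  obtain ⟨hW, hC, hP, hR⟩ := h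
  have hW' : ∀ n, Run M e w (p + 1 + n) .W 0 := by
    intro n
    induction n with
    | zero => exact hW
    | succ n ih => exact ih.step (.wW _) (by simp)
  have hR' : ∀ n, (∀ j < n, ∃ k, w (p + 1 + j) = .reg k) → ∀ k,
      Run M e w (p + 1 + n) (.R o k) (g k - M.alo o k * cnt w (p + 1) k n) := by
    intro n
    induction n with
    | zero => intro _ k; simpa [cnt] using hR k
    | succ n ih =>
      intro hj k
      obtain ⟨i, hi⟩ := hj n (by omega)
      refine (ih (fun j hj' => hj j (by omega)) k).step (P := .R o k)
        (z' := -(M.alo o k * ind k (.reg i : Lt T K))) ?_ ?_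
      · rw [hi]; exact .rR _ _ _
      · rw [cnt_succ, hi]; push_cast; ring
  have hP' : ∀ n, (∀ j < n, ∃ k, w (p + 1 + j) = .reg k) → ∀ t k,
      Run M e w (p + 1 + n) (.P t k) (M.be t k * cnt w (p + 1) k n) := by
    intro n
    induction n with
    | zero => intro _ t k; simpa [cnt] using hP t k
    | succ n ih =>
      intro hj t k
      obtain ⟨i, hi⟩ := hj n (by omega)
      refine (ih (fun j hj' => hj j (by omega)) t k).step (P := .P t k)
        (z' := (M.be t k * ind k (.reg i : Lt T K))) ?_ ?_
      · rw [hi]; exact .pP _ _ _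
      · rw [cnt_succ, hi]; push_cast; ring
  have hC' : ∀ n, (∀ j < n, ∃ k, w (p + 1 + j) = .reg k) →
      Run M e w (p + 1 + n) (.C o) 0 := by
    intro n
    induction n with
    | zero => intro _; simpa using hC
    | succ n ih =>
      intro hj
      obtain ⟨i, hi⟩ := hj n (by omega)
      refine (ih (fun j hj' => hj j (by omega))).step (P := .C o) (z' := 0) ?_ (by simp)
      rw [hi]; exact .cC _ _
  have hnn : ∀ n, (∀ j < n, ∃ k, w (p + 1 + j) = .reg k) → ∀ k,
      0 ≤ g k - M.alo o k * cnt w (p + 1) k n := by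
    intro n hj k
    by_contra hlt
    push Not at hlt
    refine hna (((hR' n hj k).step (.rU _ _ _) rfl).accU ?_)
    have : (0 : ℤ) ≤ M.alo o k * ind k (w (p + 1 + n)) := by positivity
    omega
  have hex : ∃ n, ∃ o', w (p + 1 + n) = .sep o' := by
    by_contra hcon
    push Not at hcon
    have hall : ∀ j, ∃ k, w (p + 1 + j) = .reg k := by
      intro j
      rcases hx : w (p + 1 + j) with o' | k
      · exact absurd hx (hcon j o')
      · exact ⟨k, rfl⟩
    have hsum : ∀ n, ∑ k, cnt w (p + 1) k n = n := by
      intro n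
      induction n with
      | zero => simp [cnt]
      | succ n ih =>
        obtain ⟨i, hi⟩ := hall n
        simp only [cnt_succ, Finset.sum_add_distrib, ih, hi]
        simp [ind]
    have hle : ∀ n k, cnt w (p + 1) k n ≤ (g k).toNat := by
      intro n k
      have h1 := hnn n (fun j _ => hall j) k
      have h2 : (1 : ℤ) ≤ M.alo o k := by exact_mod_cast M.alo_pos o k
      have h3 : (cnt w (p + 1) k n : ℤ) ≤ g k := by nlinarith
      omega
    have h1 := hsum ((∑ k, (g k).toNat) + 1)
    have h2 : ∑ k, cnt w (p + 1) k ((∑ k, (g k).toNat) + 1) ≤ ∑ k, (g k).toNat :=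
      Finset.sum_le_sum fun k _ => hle _ k
    omega
  let n := Nat.find hex
  obtain ⟨o', ho'⟩ : ∃ o', w (p + 1 + n) = .sep o' := Nat.find_spec hex
  have hj : ∀ j < n, ∃ k, w (p + 1 + j) = .reg k := by
    intro j hj
    have := Nat.find_min hex hj
    push Not at this
    rcases hx : w (p + 1 + j) with o' | k
    · exact absurd hx (this o')
    · exact ⟨k, rfl⟩
  have hok : M.ok o (w (p + 1 + n)) := by
    by_contra hno
    exact hna ⟨_, .Acc, trivial, (hC' n hj).step (.cA _ _ hno) (by simp)⟩
  rw [ho'] at hok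
  rcases o' with _ | t
  · exact hok.elim
  refine ⟨fun k => cnt w (p + 1) k n, t, p + 1 + n, ?_, hok, ?_, ?_, ?_, ?_⟩
  · intro k
    have h1 := hnn n hj k
    by_contra hne
    simp only at hne
    have hr : Run M e w (p + 1 + n + 1) .D (g k - M.alo o k * cnt w (p + 1) k n + -1) :=
      (hR' n hj k).step (by rw [ho']; exact .rD _ _ _) rfl
    exact hna (hr.accD (by omega))
  · exact (hW' n).step (.wW _) (by simp)
  · exact (hW' n).step (by rw [ho']; exact .wC _) (by simp)
  · intro t' k
    exact (hW' n).step (by rw [ho']; exact .wP _ _ _) (by simp)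
  · intro k
    exact (hP' n hj t k).step (by rw [ho']; exact .pR _ _) rfl

theorem good_init (hna : ¬ Accd M e w) : Good M e w 0 none (fun k => M.ini e k) := by
  have h0 : w 0 = .sep none := by
    by_contra hne
    refine hna ⟨1, .Acc, trivial, ?_⟩
    rcases hx : w 0 with (_ | t) | k
    · exact absurd hx hne
    · exact Run.zero.step (by rw [hx]; exact .w0s _) (by simp)
    · exact Run.zero.step (by rw [hx]; exact .w0a _) (by simp)
  refine ⟨Run.zero.step (by rw [h0]; exact .w0W) (by simp),
    Run.zero.step (by rw [h0]; exact .w0C) (by simp),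
    fun t k => Run.zero.step (by rw [h0]; exact .w0P _ _) (by simp), ?_⟩
  intro k
  by_cases hk : k = M.k0
  · subst hk
    have := (Run.zero (M := M) (e := e) (w := w)).succ
      (P := .R none M.k0) (z' := e) (.inr ⟨rfl, h0, rfl, rfl⟩)
    simpa [LSys.ini] using this
  · exact Run.zero.step (by rw [h0]; exact .w0R _ hk) (by simp [LSys.ini, hk])

/-- A rejected word yields a set of configurations closed under having successors. -/
theorem closed_of_rejected [Fintype K] (hna : ¬ Accd M e w) :
    ∃ I : Set (S × (K → ℕ)), (M.s0, M.ini e) ∈ I ∧ ∀ c ∈ I, ∃ d ∈ I, M.Step c d := by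
  refine ⟨{c | ∃ p o g, Good M e w p o g ∧ c.1 = M.tgo o ∧
    ∀ k, (M.alo o k : ℤ) * c.2 k = g k}, ?_, ?_⟩
  · exact ⟨0, none, _, good_init hna, rfl, fun k => by simp [LSys.alo]⟩
  · rintro ⟨s, x⟩ ⟨p, o, g, hg, hs, hx⟩
    simp only at hs hx
    obtain ⟨y, t, p', hy, hsrc, hg'⟩ := good_next hna hg
    have hxy : y = x := by
      funext k
      have h1 := hy k
      rw [← hx k] at h1
      have h2 : (M.alo o k : ℤ) ≠ 0 := by exact_mod_cast (M.alo_pos o k).ne'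
      exact_mod_cast mul_left_cancel₀ h2 h1
    subst hxy
    obtain ⟨y', -, -, hy', -, -⟩ := good_next hna hg'
    exact ⟨(M.tgt t, y'), ⟨p', some t, _, hg', rfl, hy'⟩, t, hsrc.trans hs.symm, rfl, hy'⟩

noncomputable def emitL (t : ℕ → T) (g : ℕ × (K → ℕ)) : Lt T K :=
  if h : ∃ k, 0 < g.2 k then .reg h.choose else .sep (some (t g.1))

/-- next state of the word generator -/
noncomputable def nextG (x : ℕ → K → ℕ) (g : ℕ × (K → ℕ)) : ℕ × (K → ℕ) :=
  if h : ∃ k, 0 < g.2 k then (g.1, fun i => if i = h.choose then g.2 i - 1 else g.2 i)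
  else (g.1 + 1, x (g.1 + 1))

/-- states of the word generator -/
noncomputable def genG (x : ℕ → K → ℕ) : ℕ → ℕ × (K → ℕ)
  | 0 => (0, x 0)
  | n + 1 => nextG x (genG x n)

/-- the word spelled by a run -/
noncomputable def wordOf (t : ℕ → T) (x : ℕ → K → ℕ) : ℕ → Lt T K
  | 0 => .sep none
  | n + 1 => emitL t (genG x n)

/-- separators of a run -/
def sepOf (t : ℕ → T) : ℕ → Option T
  | 0 => none
  | n + 1 => some (t n)

/-- invariant of all automaton runs over the word -/
def Inv (M : LSys T S K) (t : ℕ → T) (x : ℕ → K → ℕ) (g : ℕ × (K → ℕ)) : AS T K → ℤ → Prop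
  | .W0, _ => False
  | .W, v => v = 0
  | .U, v => 0 < v
  | .D, v => v < 0
  | .Acc, _ => False
  | .Dead, _ => True
  | .P t k, v => v = M.be t k * ((x g.1 k : ℤ) - g.2 k)
  | .R o k, v => o = sepOf t g.1 ∧ v = M.alo o k * g.2 k
  | .C o, _ => o = sepOf t g.1

theorem inv_step {t : ℕ → T} {x : ℕ → K → ℕ}
    (hs : ∀ j, M.src (t j) = M.tgo (sepOf t j))
    (hx : ∀ j k, (M.al (t j) k : ℤ) * x (j + 1) k = M.be (t j) k * x j k + M.ga (t j) k)
    {g Q P v z} (hi : Inv M t x g Q v) (ht : Tr M Q (emitL t g) P z) :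
    Inv M t x (nextG x g) P (v + z) := by
  obtain ⟨j, c⟩ := g
  by_cases h : ∃ k, 0 < c k
  · have h1 : emitL t (j, c) = .reg h.choose := dif_pos h
    have h2 : nextG x (j, c) = (j, fun i => if i = h.choose then c i - 1 else c i) := dif_pos h
    have h3 := h.choose_spec
    rw [h1] at ht
    rw [h2]
    generalize h.choose = k at *
    have key : ∀ i, (((if i = k then c i - 1 else c i : ℕ)) : ℤ) =
        c i - ind i (.reg k : Lt T K) := by
      intro i
      by_cases hik : i = k
      · subst hik; simp [ind]; omega
      · simp [ind, hik, Ne.symm hik]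
    cases ht <;> simp only [Inv, key] at hi ⊢ <;> try omega
    case pP => rw [hi]; ring
    case rR => refine ⟨hi.1, ?_⟩; rw [hi.2]; ring
    case rU o i =>
      have h4 := key i
      have h5 : (0 : ℤ) ≤ c i - ind i (.reg k : Lt T K) := by rw [← h4]; positivity
      have h6 : (0 : ℤ) ≤ M.alo o i * (c i - ind i (.reg k : Lt T K)) := by positivity
      rw [hi.2]; linarith
    case cA h => exact h trivial
  · have h1 : emitL t (j, c) = .sep (some (t j)) := dif_neg h
    have h2 : nextG x (j, c) = (j + 1, x (j + 1)) := dif_neg h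
    have hc : ∀ k, c k = 0 := by
      intro k; by_contra h'; exact h ⟨k, Nat.pos_of_ne_zero h'⟩
    rw [h1] at ht
    rw [h2]
    cases ht <;> simp only [Inv, hc] at hi ⊢ <;> try omega
    case wC => rfl
    case pR k => refine ⟨rfl, ?_⟩; simp [hi, LSys.alo, hx]
    case rU => rw [hi.2]; simp [ind]
    case cA o h => exact h (by rw [hi]; exact hs j)

theorem inv_all {t : ℕ → T} {x : ℕ → K → ℕ}
    (h0 : x 0 = M.ini e)
    (hs : ∀ j, M.src (t j) = M.tgo (sepOf t j))
    (hx : ∀ j k, (M.al (t j) k : ℤ) * x (j + 1) k = M.be (t j) k * x j k + M.ga (t j) k)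
    (n : ℕ) : ∀ Q v, Run M e (wordOf t x) (n + 1) Q v → Inv M t x (genG x n) Q v := by
  induction n with
  | zero =>
    intro Q v h
    cases h with
    | succ h ht =>
      cases h
      have hw : wordOf t x 0 = .sep none := rfl
      rw [hw] at ht
      rcases ht with ht | ⟨-, -, rfl, rfl⟩
      · cases ht <;> simp [Inv, genG, sepOf]
        case w0R h => simp [LSys.alo, h0, LSys.ini, h]
      · simp [Inv, genG, sepOf, LSys.alo, h0, LSys.ini]
  | succ n ih =>
    intro Q v h
    cases h with
    | succ h ht =>
      have hi := ih _ _ h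
      rcases ht with ht | ⟨rfl, -⟩
      · exact inv_step hs hx hi ht
      · exact hi.elim

theorem rejected_of_run {f : ℕ → S × (K → ℕ)} (h0 : f 0 = (M.s0, M.ini e))
    (hf : ∀ n, M.Step (f n) (f (n + 1))) : ∃ w : ℕ → Lt T K, ¬ Accd M e w := by
  choose t ht using hf
  refine ⟨wordOf t (fun n => (f n).2), ?_⟩
  rintro ⟨n, Q, hQ, hr⟩
  cases n with
  | zero => cases hr; exact hQ
  | succ n =>
    have := inv_all (M := M) (e := e) (t := t) (x := fun n => (f n).2) (by simp [h0]) ?_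
      (fun j k => (ht j).2.2 k) n Q 0 hr
    · cases Q <;> simp_all [Inv, Fin']
    · intro j
      cases j with
      | zero => rw [(ht 0).1, h0]; rfl
      | succ j => rw [(ht (j + 1)).1, ← (ht j).2.1]; rfl

/-! ### Coding of the automaton -/

theorem finite_tr [Finite T] [Finite K] (M : LSys T S K) :
    {q : AS T K × Lt T K × AS T K × ℤ | Tr M q.1 q.2.1 q.2.2.1 q.2.2.2}.Finite := by
  refine Set.Finite.of_finite_image (f := fun q => (q.1, q.2.1, q.2.2.1)) (Set.toFinite _) ?_
  rintro ⟨a, b, c, z⟩ h1 ⟨a', b', c', z'⟩ h2 h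
  simp only [Prod.mk.injEq] at h
  obtain ⟨rfl, rfl, rfl⟩ := h
  have := Tr.det M h1 h2
  simp_all

/-- number of a state -/
noncomputable def encS [Finite T] [Finite K] (Q : AS T K) : ℕ := (Finite.equivFin (AS T K) Q).1

/-- number of a letter -/
noncomputable def encL [Finite T] [Finite K] (Q : Lt T K) : ℕ := (Finite.equivFin (Lt T K) Q).1

theorem encS_inj [Finite T] [Finite K] {a b : AS T K} (h : encS a = encS b) : a = b :=
  (Finite.equivFin (AS T K)).injective (Fin.ext h)

theorem encL_inj [Finite T] [Finite K] {a b : Lt T K} (h : encL a = encL b) : a = b :=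
  (Finite.equivFin (Lt T K)).injective (Fin.ext h)

theorem encS_lt [Finite T] [Finite K] (a : AS T K) : encS a < Nat.card (AS T K) :=
  (Finite.equivFin (AS T K) a).2

theorem encL_lt [Finite T] [Finite K] (a : Lt T K) : encL a < Nat.card (Lt T K) :=
  (Finite.equivFin (Lt T K) a).2

theorem encS_surj [Finite T] [Finite K] {n : ℕ} (h : n < Nat.card (AS T K)) :
    ∃ a : AS T K, encS a = n :=
  ⟨(Finite.equivFin (AS T K)).symm ⟨n, h⟩, by simp [encS]⟩

theorem encL_surj [Finite T] [Finite K] {n : ℕ} (h : n < Nat.card (Lt T K)) :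
    ∃ a : Lt T K, encL a = n :=
  ⟨(Finite.equivFin (Lt T K)).symm ⟨n, h⟩, by simp [encL]⟩

/-- encoded transition -/
noncomputable def encT [Finite T] [Finite K] (q : AS T K × Lt T K × AS T K × ℤ) :
    ℕ × ℕ × ℕ × ℤ := (encS q.1, encL q.2.1, encS q.2.2.1, q.2.2.2)

/-- The fixed list of transitions. -/
noncomputable def fixedTs [Finite T] [Finite K] (M : LSys T S K) : List (ℕ × ℕ × ℕ × ℤ) :=
  (finite_tr M).toFinset.toList.map encT

/-- The list of transitions. -/
noncomputable def theTs [Finite T] [Finite K] (M : LSys T S K) (e : ℕ) :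
    List (ℕ × ℕ × ℕ × ℤ) :=
  (encS (.W0 : AS T K), encL (.sep none : Lt T K), encS (.R none M.k0 : AS T K), (e : ℤ)) ::
    fixedTs M

theorem mem_theTs [Finite T] [Finite K] {q : ℕ × ℕ × ℕ × ℤ} :
    q ∈ theTs M e ↔ ∃ Q X P z, Tre M e Q X P z ∧ q = encT (Q, X, P, z) := by
  simp only [theTs, fixedTs, List.mem_cons, List.mem_map, Finset.mem_toList, Set.Finite.mem_toFinset,
    Set.mem_ofPred_eq]
  constructor
  · rintro (rfl | ⟨⟨Q, X, P, z⟩, h, rfl⟩)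
    · exact ⟨_, _, _, _, .inr ⟨rfl, rfl, rfl, rfl⟩, rfl⟩
    · exact ⟨Q, X, P, z, .inl h, rfl⟩
  · rintro ⟨Q, X, P, z, h | ⟨rfl, rfl, rfl, rfl⟩, rfl⟩
    · exact .inr ⟨_, h, rfl⟩
    · exact .inl rfl

/-- The code of the automaton. -/
noncomputable def theCode [Finite T] [Finite K] (M : LSys T S K) (e : ℕ) : WACode :=
  (Nat.card (AS T K), Nat.card (Lt T K), theTs M e, encS (.W0 : AS T K),
    [encS (.U : AS T K), encS (.D : AS T K), encS (.Acc : AS T K)])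

theorem theCode_wf [Finite T] [Finite K] (M : LSys T S K) (e : ℕ) : WAWellFormed (theCode M e) := by
  refine ⟨encS_lt _, ?_, ?_, ?_⟩
  · intro q hq
    simp only [List.mem_cons, List.not_mem_nil, or_false] at hq
    rcases hq with rfl | rfl | rfl <;> exact encS_lt _
  · intro t ht
    obtain ⟨Q, X, P, z, -, rfl⟩ := mem_theTs.1 ht
    exact ⟨encS_lt _, encL_lt _, encS_lt _⟩
  · intro q hq x hx
    obtain ⟨Q, rfl⟩ := encS_surj (T := T) (K := K) hq
    obtain ⟨X, rfl⟩ := encL_surj (T := T) (K := K) hx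
    obtain ⟨P, z, h⟩ := Tr.total M Q X
    exact ⟨_, _, mem_theTs.2 ⟨Q, X, P, z, .inl h, rfl⟩⟩

theorem fin_mem [Finite T] [Finite K] (Q : AS T K) :
    encS Q ∈ [encS (.U : AS T K), encS (.D : AS T K), encS (.Acc : AS T K)] ↔ Fin' Q := by
  simp only [List.mem_cons, List.not_mem_nil, or_false]
  constructor
  · rintro (h | h | h) <;> rw [encS_inj h] <;> trivial
  · intro h
    cases Q <;> simp [Fin'] at h <;> simp

theorem Run.seq {n Q z} (h : Run M e w n Q z) : ∃ (s : ℕ → AS T K) (y : ℕ → ℤ), s 0 = .W0 ∧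
    s n = Q ∧ (∀ j < n, Tre M e (s j) (w j) (s (j + 1)) (y j)) ∧
    ∑ j ∈ Finset.range n, y j = z := by
  induction h with
  | zero => exact ⟨fun _ => .W0, fun _ => 0, rfl, rfl, by simp, by simp⟩
  | @succ n Q z P z' _ ht ih =>
    obtain ⟨s, y, h0, h1, h2, h3⟩ := ih
    refine ⟨fun j => if j = n + 1 then P else s j, fun j => if j = n then z' else y j,
      ?_, ?_, ?_, ?_⟩
    · simp [h0]
    · simp
    · intro j hj
      by_cases hjn : j = n
      · subst hjn; simpa [h1] using ht
      · have : j < n := by omega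
        have h4 : j ≠ n + 1 := by omega
        simpa [hjn, h4] using h2 j this
    · rw [Finset.sum_range_succ]
      congr 1
      · rw [← h3]
        refine Finset.sum_congr rfl fun j hj => ?_
        have := Finset.mem_range.1 hj
        rw [if_neg (by omega)]
      · simp

theorem final_loop {Q : AS T K} (h : Fin' Q) : ∃ c, ∀ X, Tre M e Q X Q c := by
  cases Q <;> simp [Fin'] at h
  exacts [⟨1, fun X => .inl (.uU X)⟩, ⟨-1, fun X => .inl (.dD X)⟩, ⟨0, fun X => .inl (.aA X)⟩]

theorem accepts_iff [Finite T] [Finite K] :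
    WAAcceptsCode (theCode M e) (fun i => encL (w i)) ↔ Accd M e w := by
  constructor
  · rintro ⟨π, ⟨h1, h2, h3, h4⟩, k, h5, h6⟩
    have h1' := fun j => mem_theTs.1 (h1 j)
    choose Q X P z ht hq using h1'
    have hX : ∀ j, X j = w j := fun j => encL_inj (by have := h4 j; rw [hq j] at this; exact this)
    have hP : ∀ j, P j = Q (j + 1) := fun j => encS_inj (by
      have := h3 j; rw [hq j, hq (j + 1)] at this; exact this)
    have hQ : Q 0 = .W0 := encS_inj (by rw [hq 0] at h2; exact h2)
    have hr : ∀ n, Run M e w n (Q n) (∑ j ∈ Finset.range n, z j) := by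
      intro n
      induction n with
      | zero => rw [hQ]; exact .zero
      | succ n ih =>
        rw [Finset.sum_range_succ, ← hP]
        refine ih.succ ?_
        rw [← hX]; exact ht n
    refine ⟨k + 1, Q (k + 1), ?_, ?_⟩
    · rw [hq k] at h6
      rw [← hP]
      exact (fin_mem _).1 h6
    · have : ∑ j ∈ Finset.range (k + 1), z j = 0 := by
        rw [← h5]
        exact Finset.sum_congr rfl fun j _ => by rw [hq j]; rfl
      rw [← this]
      exact hr _
  · rintro ⟨n, Q, hQ, hr⟩
    obtain ⟨c, hc⟩ := final_loop (M := M) (e := e) hQ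
    obtain ⟨s, y, h0, h1, h2, h3⟩ := hr.seq
    have hn : n ≠ 0 := by
      rintro rfl
      rw [← h1, h0] at hQ
      exact hQ
    obtain ⟨m, rfl⟩ := Nat.exists_eq_succ_of_ne_zero hn
    let s' : ℕ → AS T K := fun j => if j ≤ m + 1 then s j else Q
    let y' : ℕ → ℤ := fun j => if j ≤ m then y j else c
    have hstep : ∀ j, Tre M e (s' j) (w j) (s' (j + 1)) (y' j) := by
      intro j
      rcases lt_trichotomy j (m + 1) with h | h | h
      · have a1 : j ≤ m + 1 := by omega
        have a2 : j ≤ m := by omega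
        simpa [s', y', a1, a2] using h2 j h
      · subst h
        simpa [s', y', ← h1] using h1 ▸ hc _
      · have a1 : ¬ j ≤ m + 1 := by omega
        have a2 : ¬ j ≤ m := by omega
        simpa [s', y', a1, a2] using hc _
    refine ⟨fun j => encT (s' j, w j, s' (j + 1), y' j),
      ⟨fun j => mem_theTs.2 ⟨_, _, _, _, hstep j, rfl⟩, ?_, fun j => rfl, fun j => rfl⟩, m, ?_, ?_⟩
    · simp [encT, s', h0]
    · rw [← h3]
      refine Finset.sum_congr rfl fun j hj => ?_
      have := Finset.mem_range.1 hj
      simp [encT, y', show j ≤ m by omega]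
    · refine (fin_mem _).2 ?_
      simpa [s'] using h1 ▸ hQ

theorem universal_iff [Finite T] [Finite K] :
    WAUniversal (theCode M e) ↔ ∀ w : ℕ → Lt T K, Accd M e w := by
  constructor
  · intro h w
    exact accepts_iff.1 (h _ fun i => encL_lt _)
  · intro h w hw
    choose w' hw' using fun i => encL_surj (T := T) (K := K) (hw i)
    obtain rfl : (fun i => encL (w' i)) = w := funext hw'
    exact accepts_iff.2 (h w')

end


open Turing Turing.PartrecToTM2

/-- machine statements -/
abbrev Stm : Type := TM2.Stmt (fun _ : K' => Γ') Λ' (Option Γ')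

inductive MS
  | run (q : Stm)
  | lab (l : Λ')
  | pb (k : K') (a : Γ') (q : Stm)

inductive Op
  | nop
  | push (k : K') (a : Γ')
  | pop (k : K') (d : Option Γ')
  | fail

def rul : MS → Option Γ' → Option Γ' → (MS × Option Γ') × Op
  | .lab l, v, _ => ((.run (tr l), v), .nop)
  | .pb k a q, v, _ => ((.run q, v), .push k a)
  | .run (.push k f q), v, _ => ((.run q, v), .push k (f v))
  | .run (.peek k f q), v, none => ((.run q, f v none), .pop k none)
  | .run (.peek k f q), v, some a => ((.pb k a q, f v (some a)), .pop k (some a))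
  | .run (.pop k f q), v, d => ((.run q, f v d), .pop k d)
  | .run (.load f q), v, _ => ((.run q, f v), .nop)
  | .run (.branch p q₁ q₂), v, _ => ((.run (cond (p v) q₁ q₂), v), .nop)
  | .run (.goto l), v, _ => ((.lab (l v), v), .nop)
  | .run .halt, v, _ => ((.run .halt, v), .fail)

/-- meaning of operations -/
def opSem : Op → (K' → List Γ') → Option (K' → List Γ')
  | .nop, S => some S
  | .push k a, S => some (Function.update S k (a :: S k))
  | .pop k d, S => if (S k).head? = d then some (Function.update S k (S k).tail) else none
  | .fail, _ => none

/-- the symbol inspected -/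
def topOf : MS → (K' → List Γ') → Option Γ'
  | .run (.peek k _ _), S => (S k).head?
  | .run (.pop k _ _), S => (S k).head?
  | _, _ => none

/-- configurations -/
abbrev MC : Type := (MS × Option Γ') × (K' → List Γ')

def mstep (c : MC) : Option MC :=
  (opSem (rul c.1.1 c.1.2 (topOf c.1.1 c.2)).2 c.2).map
    fun S' => ((rul c.1.1 c.1.2 (topOf c.1.1 c.2)).1, S')

theorem rul_top {s v d S S'} (h : opSem (rul s v d).2 S = some S') :
    rul s v d = rul s v (topOf s S) := by
  rcases s with q | l | ⟨k, a, q⟩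
  · cases q <;> try rfl
    case peek k f q =>
      have : (S k).head? = d := by
        by_contra hne
        cases d <;> simp [rul, opSem, hne] at h
      simp [topOf, this]
    case pop k f q =>
      have : (S k).head? = d := by
        by_contra hne
        simp [rul, opSem, hne] at h
      simp [topOf, this]
  · rfl
  · rfl

/-- digits -/
def dig : Option Γ' → ℕ
  | none => 0
  | some .consₗ => 1
  | some .cons => 2
  | some .bit0 => 3
  | some .bit1 => 4

/-- code of a stack -/
def encStk : List Γ' → ℕ
  | [] => 0
  | a :: l => 5 * encStk l + dig (some a)

theorem encStk_eq (l : List Γ') : encStk l = 5 * encStk l.tail + dig l.head? := by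
  cases l <;> simp [encStk, dig]

theorem dig_lt (d : Option Γ') : dig d < 5 := by
  rcases d with _ | _ | _ | _ | _ <;> decide

theorem dig_inj {d d' : Option Γ'} (h : dig d = dig d') : d = d' := by
  rcases d with _ | _ | _ | _ | _ <;> rcases d' with _ | _ | _ | _ | _ <;> simp_all [dig]

/-- coefficients -/
def opCoef : Op → K' → ℕ × ℕ × ℤ
  | .nop, _ => (1, 1, 0)
  | .push k a, i => if i = k then (1, 5, dig (some a)) else (1, 1, 0)
  | .pop k d, i => if i = k then (5, 1, -dig d) else (1, 1, 0)
  | .fail, _ => (1, 0, -1)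

theorem opCoef_pos (o : Op) (k : K') : 0 < (opCoef o k).1 := by
  cases o <;> simp only [opCoef] <;> (try split_ifs) <;> simp

theorem op_rel (o : Op) (S : K' → List Γ') (y : K' → ℕ) :
    (∀ k, ((opCoef o k).1 : ℤ) * y k = (opCoef o k).2.1 * (encStk (S k) : ℤ) + (opCoef o k).2.2) ↔
      ∃ S', opSem o S = some S' ∧ y = fun k => encStk (S' k) := by
  cases o with
  | nop =>
    simp only [opCoef, opSem, Option.some.injEq, exists_eq_left']
    constructor
    · intro h; funext k; have := h k; push_cast at this; omega
    · rintro rfl k; simp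
  | fail =>
    simp only [opCoef, opSem, reduceCtorEq, false_and, exists_false, iff_false]
    intro h; have := h .main; push_cast at this; omega
  | push k a =>
    simp only [opCoef, opSem, Option.some.injEq, exists_eq_left']
    constructor
    · intro h; funext i
      have := h i
      by_cases hi : i = k
      · subst hi; simp [encStk] at this ⊢; omega
      · simp [hi] at this ⊢; omega
    · rintro rfl i
      by_cases hi : i = k
      · subst hi; simp [encStk]
      · simp [hi]
  | pop k d =>
    simp only [opCoef, opSem]
    constructor
    · intro h
      have hk := h k
      have h1 := encStk_eq (S k)
      have h2 := dig_lt d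
      have h3 := dig_lt (S k).head?
      simp only [if_true] at hk
      push_cast at hk
      have hd : (S k).head? = d := dig_inj (by omega)
      refine ⟨_, if_pos hd, ?_⟩
      funext i
      have := h i
      by_cases hi : i = k
      · subst hi; rw [hd] at h1; simp; omega
      · simp [hi] at this ⊢; omega
    · rintro ⟨S', hS, rfl⟩ i
      split_ifs at hS with hd
      simp only [Option.some.injEq] at hS
      subst hS
      by_cases hi : i = k
      · subst hi
        have h1 := encStk_eq (S i)
        rw [hd] at h1
        simp; omega
      · simp [hi]

/-- the register system of the machine restricted to the control points in `F` -/
noncomputable def sysOf (F : Set MS) (l0 : Λ') :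
    LSys (F × Option Γ' × Option Γ') (MS × Option Γ') K' where
  src t := (t.1, t.2.1)
  tgt t := (rul t.1 t.2.1 t.2.2).1
  al t k := (opCoef (rul t.1 t.2.1 t.2.2).2 k).1
  be t k := (opCoef (rul t.1 t.2.1 t.2.2).2 k).2.1
  ga t k := (opCoef (rul t.1 t.2.1 t.2.2).2 k).2.2
  al_pos t k := opCoef_pos _ k
  s0 := (.lab l0, none)
  k0 := .main

/-- coding of configurations -/
def encC (c : MC) : (MS × Option Γ') × (K' → ℕ) := (c.1, fun k => encStk (c.2 k))

theorem step_enc {F : Set MS} {l0 : Λ'} {c : MC} {d} (h : (sysOf F l0).Step (encC c) d) :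
    ∃ c', mstep c = some c' ∧ d = encC c' := by
  obtain ⟨⟨⟨s, v⟩, S⟩, ⟨d1, y⟩⟩ := c, d
  obtain ⟨⟨⟨s', hs'⟩, v', e⟩, h1, h2, h3⟩ := h
  simp only [sysOf, encC, Prod.mk.injEq] at h1 h2 h3
  obtain ⟨rfl, rfl⟩ := h1
  subst h2
  obtain ⟨S', hS', rfl⟩ := (op_rel _ _ _).1 h3
  refine ⟨((rul s' v' e).1, S'), ?_, rfl⟩
  have := rul_top hS'
  rw [this] at hS' ⊢
  simp [mstep, hS']

theorem enc_step {F : Set MS} {l0 : Λ'} {c c' : MC} (hF : c.1.1 ∈ F) (h : mstep c = some c') :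
    (sysOf F l0).Step (encC c) (encC c') := by
  obtain ⟨⟨s, v⟩, S⟩ := c
  simp only [mstep, Option.map_eq_some_iff] at h
  obtain ⟨S', hS', rfl⟩ := h
  exact ⟨(⟨s, hF⟩, v, topOf s S), rfl, rfl, (op_rel _ _ _).2 ⟨S', hS', rfl⟩⟩

def trc : TM2.Cfg (fun _ : K' => Γ') Λ' (Option Γ') → MC
  | ⟨some l, v, S⟩ => ((.lab l, v), S)
  | ⟨none, v, S⟩ => ((.run .halt, v), S)

theorem reach_head {a b c : MC} (h : mstep a = some b) (h2 : StateTransition.Reaches mstep b c) :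
    StateTransition.Reaches mstep a c :=
  Relation.ReflTransGen.head h h2

open StateTransition in
theorem reach_aux (q : Stm) : ∀ (v : Option Γ') (S : K' → List Γ'),
    Reaches mstep ((.run q, v), S) (trc (TM2.stepAux q v S)) := by
  induction q with
  | push k f q ih =>
    intro v S
    exact reach_head rfl (ih v (Function.update S k (f v :: S k)))
  | peek k f q ih =>
    intro v S
    rcases hS : S k with _ | ⟨a, l⟩
    · have hu : Function.update S k [] = S := by rw [← hS]; simp
      refine reach_head (b := ((.run q, f v none), S)) ?_ ?_
      · simp [mstep, rul, topOf, hS, opSem, hu]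
      · rw [TM2.stepAux, hS]; exact ih (f v none) S
    · have hu : Function.update S k (a :: l) = S := by rw [← hS]; simp
      refine reach_head (b := ((.pb k a q, f v (some a)), Function.update S k l)) ?_ ?_
      · simp [mstep, rul, topOf, hS, opSem]
      · refine reach_head (b := ((.run q, f v (some a)), S)) ?_ ?_
        · simp [mstep, rul, opSem, hu]
        · rw [TM2.stepAux, hS]; exact ih (f v (some a)) S
  | pop k f q ih =>
    intro v S
    refine reach_head (b := ((.run q, f v (S k).head?), Function.update S k (S k).tail)) ?_
      (ih (f v (S k).head?) (Function.update S k (S k).tail))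
    simp [mstep, rul, topOf, opSem]
  | load f q ih =>
    intro v S
    exact reach_head (b := ((.run q, f v), S)) rfl (ih (f v) S)
  | branch p q₁ q₂ ih₁ ih₂ =>
    intro v S
    refine reach_head (b := ((.run (cond (p v) q₁ q₂), v), S)) rfl ?_
    rw [TM2.stepAux]
    cases p v
    · exact ih₂ v S
    · exact ih₁ v S
  | goto l =>
    intro v S
    exact .single rfl
  | halt =>
    intro v S
    exact .refl

open StateTransition in
theorem respects_m : Respects (TM2.step tr) mstep (fun a b => b = trc a) := by
  rintro ⟨l, v, S⟩ _ rfl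
  cases l with
  | none => rfl
  | some l =>
    refine ⟨trc (TM2.stepAux (tr l) v S), rfl, ?_⟩
    have h0 : mstep ((.lab l, v), S) = some ((.run (tr l), v), S) := rfl
    exact Relation.TransGen.head' h0 (reach_aux (tr l) v S)

/-- the finite set of control points -/
def FS (c : ToPartrec.Code) : Set MS :=
  MS.lab '' (codeSupp c .halt : Set Λ') ∪
  MS.run '' {q | some q ∈ TM2.stmts tr (codeSupp c .halt)} ∪
  (fun x : K' × Γ' × Stm => MS.pb x.1 x.2.1 x.2.2) ''
    {x | some x.2.2 ∈ TM2.stmts tr (codeSupp c .halt)}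

instance finK' : Fintype K' := ⟨{.main, .rev, .aux, .stack}, fun k => by cases k <;> simp⟩

theorem FS_finite (c : ToPartrec.Code) : (FS c).Finite := by
  have h1 : {q : Stm | some q ∈ TM2.stmts tr (codeSupp c .halt)}.Finite :=
    Set.Finite.preimage (f := some) (Option.some_injective _).injOn
      (Finset.finite_toSet (TM2.stmts tr (codeSupp c .halt)))
  refine ((Set.Finite.image _ (Finset.finite_toSet _)).union (h1.image _)).union
    (Set.Finite.image _ ?_)
  refine Set.Finite.subset (Set.finite_univ.prod (Set.finite_univ.prod h1)) ?_
  rintro ⟨a, b, q⟩ h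
  exact ⟨trivial, trivial, h⟩

theorem FS_run {c : ToPartrec.Code} {q} :
    MS.run q ∈ FS c ↔ some q ∈ TM2.stmts tr (codeSupp c .halt) := by simp [FS]
theorem FS_lab {c : ToPartrec.Code} {l} : MS.lab l ∈ FS c ↔ l ∈ codeSupp c .halt := by simp [FS]
theorem FS_pb {c : ToPartrec.Code} {k a q} :
    MS.pb k a q ∈ FS c ↔ some q ∈ TM2.stmts tr (codeSupp c .halt) := by simp [FS]

theorem FS_closed (c : ToPartrec.Code) {s v d} (h : s ∈ FS c) : (rul s v d).1.1 ∈ FS c := by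
  have sub : ∀ {q q' : Stm}, q ∈ TM2.stmts₁ q' → MS.run q' ∈ FS c → MS.run q ∈ FS c :=
    fun h1 h2 => FS_run.2 (TM2.stmts_trans h1 (FS_run.1 h2))
  rcases s with q | l | ⟨k, a, q⟩
  · have self : ∀ q : Stm, q ∈ TM2.stmts₁ q := fun q => TM2.stmts₁_self
    cases q with
    | push k f q => exact sub (by simp [TM2.stmts₁, self]) h
    | peek k f q =>
      have := sub (q := q) (by simp [TM2.stmts₁, self]) h
      cases d with
      | none => exact this
      | some a => exact FS_pb.2 (FS_run.1 this)
    | pop k f q => exact sub (by simp [TM2.stmts₁, self]) h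
    | load f q => exact sub (by simp [TM2.stmts₁, self]) h
    | branch p q₁ q₂ =>
      refine sub ?_ h
      cases p v <;> simp [TM2.stmts₁, self]
    | goto l =>
      have := @TM2.stmts_supportsStmt _ _ _ _ ⟨trNormal c .halt⟩ _ _ _ (tr_supports c .halt)
        (FS_run.1 h)
      exact FS_lab.2 (this v)
    | halt => exact h
  · refine FS_run.2 ?_
    simp only [TM2.stmts, Finset.mem_insertNone, Finset.mem_biUnion, Option.mem_def]
    intro q hq
    cases hq
    exact ⟨l, FS_lab.1 h, TM2.stmts₁_self⟩
  · exact FS_run.2 (FS_pb.1 h)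

theorem mstep_closed (c : ToPartrec.Code) {a b : MC} (h : a.1.1 ∈ FS c) (hs : mstep a = some b) :
    b.1.1 ∈ FS c := by
  simp only [mstep, Option.map_eq_some_iff] at hs
  obtain ⟨S', hS', rfl⟩ := hs
  exact FS_closed c h

/-- the system for a code -/
noncomputable abbrev sysC (c : ToPartrec.Code) := sysOf (FS c) (trNormal c .halt)

instance finFS (c : ToPartrec.Code) : Finite (FS c) := FS_finite c

/-- initial value -/
def inpE (n : ℕ) : ℕ := encStk (trList [n])

theorem enc_init (c : ToPartrec.Code) (n : ℕ) :
    encC (trc (init c [n])) = ((sysC c).s0, (sysC c).ini (inpE n)) := by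
  refine Prod.ext rfl ?_
  funext k
  cases k <;> simp [encC, trc, init, LSys.ini, sysC, sysOf, inpE, encStk]

open StateTransition in
theorem universal_iff_halts (c : ToPartrec.Code) (n : ℕ) :
    WAUniversal (theCode (sysC c) (inpE n)) ↔ (c.eval [n]).Dom := by
  have hdom : (c.eval [n]).Dom ↔ (eval mstep (trc (init c [n]))).Dom := by
    have h1 := tr_eval_dom respects_m (a₁ := init c [n]) rfl
    have h2 := Turing.PartrecToTM2.tr_eval c [n]
    refine Iff.trans ?_ h1.symm
    have h3 : (eval (TM2.step tr) (init c [n])).Dom ↔ (halt <$> c.eval [n]).Dom :=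
      iff_of_eq (congrArg Part.Dom h2)
    rw [h3]
    rfl
  rw [hdom, universal_iff]
  constructor
  · intro h
    by_contra hnd
    have hns : ∀ b, Reaches mstep (trc (init c [n])) b → mstep b ≠ none := by
      intro b hb hn
      obtain ⟨h, -⟩ := mem_eval.2 ⟨hb, hn⟩
      exact hnd h
    let f : ℕ → MC := fun i => Nat.rec (trc (init c [n])) (fun _ a => (mstep a).getD a) i
    have hf : ∀ i, Reaches mstep (trc (init c [n])) (f i) ∧ (f i).1.1 ∈ FS c ∧
        mstep (f i) = some (f (i + 1)) := by
      intro i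
      induction i with
      | zero =>
        refine ⟨.refl, FS_lab.2 (tr_supports c .halt).1, ?_⟩
        obtain ⟨b, hb⟩ := Option.ne_none_iff_exists'.1 (hns (f 0) .refl)
        rw [hb]; congr 1
        change b = (mstep (f 0)).getD (f 0)
        rw [hb]; rfl
      | succ i ih =>
        obtain ⟨h1, h2, h3⟩ := ih
        have h4 : Reaches mstep (trc (init c [n])) (f (i + 1)) := h1.tail h3
        refine ⟨h4, mstep_closed c h2 h3, ?_⟩
        obtain ⟨b, hb⟩ := Option.ne_none_iff_exists'.1 (hns (f (i + 1)) h4)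
        rw [hb]; congr 1
        change b = (mstep (f (i + 1))).getD (f (i + 1))
        rw [hb]; rfl
    obtain ⟨w, hw⟩ := rejected_of_run (M := sysC c) (e := inpE n) (f := fun i => encC (f i))
      (enc_init c n) (fun i => enc_step (hf i).2.1 (hf i).2.2)
    exact hw (h w)
  · intro hd w
    by_contra hna
    obtain ⟨I, hI0, hI⟩ := closed_of_rejected hna
    obtain ⟨hr, hn⟩ := mem_eval.1 (Part.get_mem hd)
    have : ∀ b, Reaches mstep (trc (init c [n])) b → encC b ∈ I := by
      intro b hb
      induction hb with
      | refl => rw [enc_init]; exact hI0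
      | tail _ hs ih =>
        obtain ⟨d, hdI, hstep⟩ := hI _ ih
        obtain ⟨c', h1, rfl⟩ := step_enc hstep
        rw [Option.mem_def, h1] at hs
        cases hs
        exact hdI
    obtain ⟨d, -, hstep⟩ := hI _ (this _ hr)
    obtain ⟨c', h1, -⟩ := step_enc hstep
    rw [hn] at h1
    cases h1

/-! ### Computability -/

theorem trNat_bit1 (m : ℕ) : trNat (2 * m + 1) = Γ'.bit1 :: trNat m := by
  have h : ((2 * m + 1 : ℕ) : Num) = (m : Num).bit1 := by
    rw [← Num.to_nat_inj]; simp; exact Or.inl rfl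
  rw [trNat, trNat, h]
  cases (m : Num) <;> rfl

theorem trNat_bit0 (m : ℕ) (hm : m ≠ 0) : trNat (2 * m) = Γ'.bit0 :: trNat m := by
  have h : ((2 * m : ℕ) : Num) = (m : Num).bit0 := by
    rw [← Num.to_nat_inj]; simp; exact Or.inl rfl
  rw [trNat, trNat, h]
  have h0 : (m : Num) ≠ 0 := by
    rw [Ne, ← Num.to_nat_inj]; simpa using hm
  cases hx : (m : Num)
  · exact absurd hx h0
  · rfl

theorem inpE_zero : inpE 0 = 2 := by simp [inpE, trList, encStk, dig]

theorem inpE_rec (n : ℕ) (hn : n ≠ 0) : inpE n = 5 * inpE (n / 2) + (3 + n % 2) := by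
  rcases Nat.mod_two_eq_zero_or_one n with h | h
  · have h1 : n = 2 * (n / 2) := by omega
    have h2 : trNat n = Γ'.bit0 :: trNat (n / 2) := by
      conv_lhs => rw [h1]
      exact trNat_bit0 _ (by omega)
    simp [inpE, trList, h2, encStk, h, dig]
  · have h1 : n = 2 * (n / 2) + 1 := by omega
    have h2 : trNat n = Γ'.bit1 :: trNat (n / 2) := by
      conv_lhs => rw [h1]
      exact trNat_bit1 _
    simp [inpE, trList, h2, encStk, h, dig]

theorem inpE_primrec : Primrec inpE := by
  let g : Unit → List ℕ → Option ℕ := fun _ l =>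
    if l.length = 0 then some 2 else some (5 * l.getD (l.length / 2) 0 + (3 + l.length % 2))
  have hlen : Primrec (fun p : Unit × List ℕ => p.2.length) := Primrec.list_length.comp .snd
  have hg : Primrec₂ g := by
    refine Primrec.ite (PrimrecRel.comp Primrec.eq hlen (.const 0)) (.const _) ?_
    refine Primrec.option_some.comp ?_
    refine Primrec.nat_add.comp (Primrec.nat_mul.comp (.const 5) ?_)
      (Primrec.nat_add.comp (.const 3) (Primrec.nat_mod.comp hlen (.const 2)))
    exact (Primrec.list_getD 0).comp .snd (Primrec.nat_div.comp hlen (.const 2))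
  have := Primrec.nat_strong_rec (fun _ : Unit => inpE) hg (by
    intro _ n
    by_cases hn : n = 0
    · subst hn; simp [g, inpE_zero]
    · have h2 : n / 2 < n := by omega
      simp [g, hn, h2, inpE_rec n hn])
  exact this.comp (.const ()) .id

theorem intCast_primrec : Primrec (fun n : ℕ => (n : ℤ)) := by
  refine Primrec.encode_iff.1 ?_
  refine (Primrec.nat_mul.comp (.const 2) .id).of_eq fun n => ?_
  rfl

theorem theCode_computable (c : ToPartrec.Code) :
    Computable (fun n => theCode (sysC c) (inpE n)) := by
  refine Primrec.to_comp ?_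
  refine Primrec.pair (.const _) (Primrec.pair (.const _) (Primrec.pair ?_ (.const _)))
  refine Primrec.list_cons.comp ?_ (.const _)
  exact Primrec.pair (.const _) (Primrec.pair (.const _) (Primrec.pair (.const _)
    (intCast_primrec.comp inpE_primrec)))

theorem exists_hard : ∃ c : ToPartrec.Code, ¬ ComputablePred (fun n : ℕ => (c.eval [n]).Dom) := by
  let f : ℕ →. ℕ := fun n => (Denumerable.ofNat Nat.Partrec.Code n).eval 0
  have hf : Partrec f :=
    Nat.Partrec.Code.eval_part.comp (Computable.ofNat _) (Computable.const 0)
  obtain ⟨c, hc⟩ := ToPartrec.Code.exists_code (Nat.Partrec'.part_iff₁.2 hf)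
  refine ⟨c, fun h => ComputablePred.halting_problem 0 ?_⟩
  refine ComputablePred.computable_of_manyOneReducible ⟨Encodable.encode, Computable.encode, ?_⟩ h
  intro a
  have := hc ⟨[Encodable.encode a], rfl⟩
  simp only at this
  rw [this]
  change _ ↔ (f (Encodable.encode a)).Dom
  simp [f]

end WAProof

/-- The universality problem for integer weighted automata on infinite words is
undecidable. -/
theorem universality_weighted_automata_undecidable :
    ¬ ComputablePred (fun c : WACode => WAWellFormed c ∧ WAUniversal c) := by
  intro h
  obtain ⟨c, hc⟩ := WAProof.exists_hard
  refine hc (ComputablePred.computable_of_manyOneReducible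
    ⟨_, WAProof.theCode_computable c, fun n => ?_⟩ h)
  rw [WAProof.universal_iff_halts]
  exact ⟨fun h => ⟨WAProof.theCode_wf _ _, h⟩, fun h => h.2⟩
end

section
/- It is undecidable whether, for a given integer weighted automaton 𝒜 over a finite alphabet A, there exists an infinite word w ∈ A^ω such that for every path π for w and every finite prefix p of π, the weight γ(p) is nonzero: the predicate on encoded automata asserting the existence of such a word is not a computable predicate. -/
/-- There exists an infinite word `w` over the alphabet of the encoded automaton such that
for every path `π` for `w` and every finite prefix of `π` the weight is nonzero. -/
def WAHasAlwaysNonzeroWord (c : WACode) : Prop :=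
  ∃ w : ℕ → ℕ, (∀ i, w i < c.2.1) ∧
    ∀ π, WAIsPath c.2.2.1 c.2.2.2.1 w π →
      ∀ k, (∑ j ∈ Finset.range (k + 1), (π j).2.2.2) ≠ 0


namespace WAU

open Classical

/-! ### Finite runs of a coded automaton -/

/-- Finite runs of length `k` from `q0` over `w` ending in a state with a given weight. -/
inductive NRun (ts : List (ℕ × ℕ × ℕ × ℤ)) (q0 : ℕ) (w : ℕ → ℕ) : ℕ → ℕ → ℤ → Prop
  | zero : NRun ts q0 w 0 q0 0
  | step {k q W p z} : NRun ts q0 w k q W → (q, w k, p, z) ∈ ts → NRun ts q0 w (k + 1) p (W + z)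

theorem nrun_of_path {ts q0 w π} (h : WAIsPath ts q0 w π) (k : ℕ) :
    NRun ts q0 w (k + 1) (π k).2.2.1 (∑ j ∈ Finset.range (k + 1), (π j).2.2.2) := by
  obtain ⟨h1, h2, h3, h4⟩ := h
  induction k with
  | zero =>
    have := NRun.step (ts := ts) (q0 := q0) (w := w) NRun.zero
      (p := (π 0).2.2.1) (z := (π 0).2.2.2) (by
        have := h1 0
        rw [← h2, ← h4]; exact this)
    simpa using this
  | succ k ih =>
    rw [Finset.sum_range_succ]
    refine NRun.step ih ?_
    have := h1 (k + 1)
    rw [h3, ← h4]; exact this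

/-- An infinite path from state `q` reading `w` from time `k` on. -/
def PathFrom (ts : List (ℕ × ℕ × ℕ × ℤ)) (w : ℕ → ℕ) (k q : ℕ) (ρ : ℕ → ℕ × ℕ × ℕ × ℤ) : Prop :=
  (∀ j, ρ j ∈ ts) ∧ (ρ 0).1 = q ∧ (∀ j, (ρ j).2.2.1 = (ρ (j + 1)).1) ∧ ∀ j, (ρ j).2.1 = w (k + j)

theorem exists_pathFrom {n m ts q0 fs} (h : WAWellFormed (n, m, ts, q0, fs)) {w : ℕ → ℕ}
    (hw : ∀ i, w i < m) (k q : ℕ) (hq : q < n) : ∃ ρ, PathFrom ts w k q ρ := by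
  obtain ⟨h1, h2, h3, h4⟩ := h
  choose! P Z hPZ using h4
  have hP : ∀ q < n, ∀ x < m, P q x < n := fun q hq x hx => (h3 _ (hPZ q hq x hx)).2.2
  let st : ℕ → ℕ := fun j => Nat.rec q (fun j s => P s (w (k + j))) j
  have hst : ∀ j, st j < n := by
    intro j
    induction j with
    | zero => exact hq
    | succ j ih => exact hP _ ih _ (hw _)
  refine ⟨fun j => (st j, w (k + j), st (j + 1), Z (st j) (w (k + j))), ?_, rfl, ?_, ?_⟩
  · intro j
    exact hPZ _ (hst j) _ (hw _)
  · intro j; rfl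
  · intro j; rfl

theorem path_of_nrun {ts q0 w k q W} (h : NRun ts q0 w k q W) : ∀ ρ, PathFrom ts w k q ρ →
    ∃ π, WAIsPath ts q0 w π ∧ (∀ j, π (k + j) = ρ j) ∧
      ∑ j ∈ Finset.range k, (π j).2.2.2 = W := by
  induction h with
  | zero =>
    rintro ρ ⟨h1, h2, h3, h4⟩
    refine ⟨ρ, ⟨h1, h2, h3, fun j => by simpa using h4 j⟩, fun j => by simp, by simp⟩
  | @step k q W p z hr ht ih =>
    rintro ρ ⟨h1, h2, h3, h4⟩
    obtain ⟨π, hπ, e, s⟩ := ih (fun j => Nat.casesOn j (q, w k, p, z) ρ) (by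
      refine ⟨?_, rfl, ?_, ?_⟩
      · rintro (_ | j)
        · exact ht
        · exact h1 j
      · rintro (_ | j)
        · exact h2.symm
        · exact h3 j
      · rintro (_ | j)
        · rfl
        · simp only [h4]; congr 1; omega)
    refine ⟨π, hπ, fun j => ?_, ?_⟩
    · have := e (j + 1)
      rw [show k + 1 + j = k + (j + 1) by omega, this]
    · rw [Finset.sum_range_succ, s]
      have := e 0
      simp only [add_zero] at this
      rw [this]
      rfl

theorem hasWord_iff {n m ts q0 fs} (h : WAWellFormed (n, m, ts, q0, fs)) :
    WAHasAlwaysNonzeroWord (n, m, ts, q0, fs) ↔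
      ∃ w : ℕ → ℕ, (∀ i, w i < m) ∧ ∀ k q, ¬ NRun ts q0 w (k + 1) q 0 := by
  constructor
  · rintro ⟨w, hw, H⟩
    refine ⟨w, hw, fun k q hr => ?_⟩
    have hq : q < n := by
      generalize hk : k + 1 = k', hW : (0 : ℤ) = W' at hr
      cases hr with
      | zero => omega
      | step _ ht => exact (h.2.2.1 _ ht).2.2
    obtain ⟨ρ, hρ⟩ := exists_pathFrom h hw (k + 1) q hq
    obtain ⟨π, hπ, -, hs⟩ := path_of_nrun hr ρ hρ
    exact H π hπ k hs
  · rintro ⟨w, hw, H⟩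
    refine ⟨w, hw, fun π hπ k hs => ?_⟩
    have := nrun_of_path hπ k
    exact H k _ (hs ▸ this)

/-! ### Queue systems -/

section Queue

variable {A Q : Type} (δ : Q → A → Q) (o : Q → A → List A) (halt : A → Prop)

/-- One step of the queue system: pop a letter, push a word, change control. -/
def qstep : Q × List A → Q × List A
  | (q, []) => (q, [])
  | (q, a :: u) => (δ q a, u ++ o q a)

/-- The queue system halts if a halting letter ever shows up. -/
def QHalts (q0 : Q) (u : List A) : Prop :=
  ∃ i, ∃ a ∈ ((qstep δ o)^[i] (q0, u)).2, halt a

/-- control after reading the letters `s 0, …, s i` -/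
def ctl (q0 : Q) (s : ℕ → A) : ℕ → Q
  | 0 => q0
  | i + 1 => δ (ctl q0 s i) (s (i + 1))

/-- queue length after reading the letters `s 0, …, s i` -/
def qlen (q0 : Q) (u : List A) (s : ℕ → A) : ℕ → ℤ
  | 0 => u.length
  | i + 1 => qlen q0 u s i + (o (ctl δ q0 s i) (s (i + 1))).length - 1

/-- The letter `x` is acceptable where `a` was announced. -/
def Ok (a x : A) : Prop := x = a ∧ ¬ halt a

/-- Valid streams. -/
def GoodS (q0 : Q) (u : List A) (s : ℕ → A) : Prop :=
  (∀ (t : ℕ) a, u[t]? = some a → Ok halt a (s (1 + t))) ∧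
  ∀ (i t : ℕ) a, (o (ctl δ q0 s i) (s (i + 1)))[t]? = some a →
    ∀ p : ℕ, (p : ℤ) = i + 1 + qlen δ o q0 u s i + t → Ok halt a (s p)

variable {δ o halt}

theorem qstep_ne_nil (ho : ∀ q a, o q a ≠ []) {q0 : Q} {u : List A} (hu : u ≠ []) (i : ℕ) :
    ((qstep δ o)^[i] (q0, u)).2 ≠ [] := by
  induction i with
  | zero => exact hu
  | succ i ih =>
    rw [Function.iterate_succ_apply']
    rcases h : (qstep δ o)^[i] (q0, u) with ⟨q, _ | ⟨a, v⟩⟩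
    · simp [h] at ih
    · simp [qstep, ho]

theorem not_halts_of_good (ho : ∀ q a, o q a ≠ []) {q0 : Q} {u : List A} (hu : u ≠ [])
    {s : ℕ → A} (hs : GoodS δ o halt q0 u s) : ¬ QHalts δ o halt q0 u := by
  have key : ∀ i, ((qstep δ o)^[i] (q0, u)).1 = ctl δ q0 s i ∧
      (((qstep δ o)^[i] (q0, u)).2.length : ℤ) = qlen δ o q0 u s i ∧
      ∀ (t : ℕ) a, ((qstep δ o)^[i] (q0, u)).2[t]? = some a → Ok halt a (s (i + 1 + t)) := by
    intro i
    induction i with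
    | zero =>
      refine ⟨rfl, rfl, fun t a h => ?_⟩
      simpa using hs.1 t a h
    | succ i ih =>
      have hne := qstep_ne_nil (δ := δ) ho (q0 := q0) hu i
      rw [Function.iterate_succ_apply']
      rcases h : (qstep δ o)^[i] (q0, u) with ⟨q, _ | ⟨a, v⟩⟩
      · simp [h] at hne
      · rw [h] at ih
        obtain ⟨h1, h2, h3⟩ := ih
        simp only at h1 h2 h3
        have ha : s (i + 1) = a := (h3 0 a rfl).1
        simp only [qstep, ctl, qlen]
        rw [← h1, ha]
        refine ⟨rfl, ?_, ?_⟩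
        · rw [← h2]; simp; ring
        · intro t b hb
          by_cases ht : t < v.length
          · rw [List.getElem?_append_left ht] at hb
            have := h3 (t + 1) b (by simpa using hb)
            rw [show i + 1 + 1 + t = i + 1 + (t + 1) by omega]; exact this
          · rw [List.getElem?_append_right (by omega)] at hb
            rw [h1, ← ha] at hb
            refine hs.2 i _ b hb _ ?_
            rw [← h2]
            simp only [List.length_cons]
            push_cast
            omega
  rintro ⟨i, a, ha, hh⟩
  obtain ⟨t, ht⟩ := List.mem_iff_getElem?.1 ha
  exact ((key i).2.2 t a ht).2 hh

theorem good_of_not_halts (ho : ∀ q a, o q a ≠ []) {q0 : Q} {u : List A} (hu : u ≠ [])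
    (hh : ¬ QHalts δ o halt q0 u) : ∃ s, GoodS δ o halt q0 u s := by
  obtain ⟨a0, -⟩ := List.exists_mem_of_ne_nil u hu
  let C : ℕ → Q × List A := fun i => (qstep δ o)^[i] (q0, u)
  have hC : ∀ i, C (i + 1) = qstep δ o (C i) := fun i => Function.iterate_succ_apply' _ _ _
  let s : ℕ → A := fun i => Nat.casesOn i a0 (fun i => (C i).2.headD a0)
  have hs : ∀ i, s (i + 1) = (C i).2.headD a0 := fun i => rfl
  have hnn : ∀ i, (C i).2 ≠ [] := fun i => qstep_ne_nil ho hu i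
  have hform : ∀ i, ∃ v, (C i).2 = s (i + 1) :: v := by
    intro i
    rcases h : (C i).2 with _ | ⟨a, v⟩
    · exact absurd h (hnn i)
    · exact ⟨v, by rw [hs, h]; rfl⟩
  have key : ∀ i, (C i).1 = ctl δ q0 s i ∧ ((C i).2.length : ℤ) = qlen δ o q0 u s i := by
    intro i
    induction i with
    | zero => exact ⟨rfl, rfl⟩
    | succ i ih =>
      obtain ⟨v, hv⟩ := hform i
      obtain ⟨h1, h2⟩ := ih
      have hCi : C i = (ctl δ q0 s i, s (i + 1) :: v) := by rw [← h1, ← hv]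
      rw [hC, hCi]
      refine ⟨rfl, ?_⟩
      simp only [qstep, qlen]
      rw [← h2, hv]; simp; ring
  have hget : ∀ t i a, (C i).2[t]? = some a → s (i + 1 + t) = a := by
    intro t
    induction t with
    | zero =>
      intro i a h
      obtain ⟨v, hv⟩ := hform i
      rw [hv] at h
      simpa using h
    | succ t ih =>
      intro i a h
      obtain ⟨v, hv⟩ := hform i
      rw [show i + 1 + (t + 1) = i + 1 + 1 + t by omega]
      refine ih (i + 1) a ?_
      have hCi : C i = ((C i).1, s (i + 1) :: v) := by rw [← hv]
      rw [hC, hCi]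
      rw [hv] at h
      simp only [List.getElem?_cons_succ] at h
      simp only [qstep]
      rw [List.getElem?_append_left]
      · exact h
      · exact (List.getElem?_eq_some_iff.1 h).1
  have hok : ∀ t i a, (C i).2[t]? = some a → Ok halt a (s (i + 1 + t)) := fun t i a h =>
    ⟨hget t i a h, fun h' => hh ⟨i, a, List.mem_of_getElem? h, h'⟩⟩
  refine ⟨s, fun t a h => ?_, fun i t a h p hp => ?_⟩
  · have := hok t 0 a h
    simpa using this
  · obtain ⟨v, hv⟩ := hform i
    have hCi : C i = (ctl δ q0 s i, s (i + 1) :: v) := by rw [← (key i).1, ← hv]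
    have := hok (v.length + t) (i + 1) a (by
      rw [hC, hCi]
      simp only [qstep]
      rw [List.getElem?_append_right (by omega)]
      simpa using h)
    have e : p = i + 1 + 1 + (v.length + t) := by
      rw [← (key i).2, hv] at hp
      simp only [List.length_cons] at hp
      omega
    rw [e]; exact this

end Queue

/-! ### The weighted automaton of a queue system -/

section Automaton

variable {A Q : Type} [Fintype A] [Fintype Q]
  (δ : Q → A → Q) (o : Q → A → List A) (halt : A → Prop)

/-- States: `none` initial, `some none` the sink, `some (some (inl a))` waiting for the position
where `a` was announced, `some (some (inr q))` following the control. -/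
abbrev St (A Q : Type) := Option (Option (A ⊕ Q))

/-- Transitions (relation). -/
inductive Tr (q0 : Q) (u : List A) : St A Q → A → St A Q → ℤ → Prop
  | start (x) : Tr q0 u none x (some (some (.inr q0))) (((2 * u.length + 1 : ℕ) : ℤ))
  | guess0 (x) (t : ℕ) (a) : u[t]? = some a →
      Tr q0 u none x (some (some (.inl a))) (((2 * t + 1 : ℕ) : ℤ))
  | sink (x) : Tr q0 u (some none) x (some none) 0
  | count (x a) : Tr q0 u (some (some (.inl a))) x (some (some (.inl a))) (-2)
  | check (x a) : ¬ Ok halt a x → Tr q0 u (some (some (.inl a))) x (some none) (-1)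
  | follow (x q) : Tr q0 u (some (some (.inr q))) x (some (some (.inr (δ q x))))
      (2 * ((o q x).length - 1))
  | guess (x q) (t : ℕ) (a) : (o q x)[t]? = some a →
      Tr q0 u (some (some (.inr q))) x (some (some (.inl a))) (2 * (t - 1))

/-- Finite runs. -/
inductive TRun (q0 : Q) (u : List A) (s : ℕ → A) : ℕ → St A Q → ℤ → Prop
  | zero : TRun q0 u s 0 none 0
  | step {k q W p z} : TRun q0 u s k q W → Tr δ o halt q0 u q (s k) p z →
      TRun q0 u s (k + 1) p (W + z)

variable {δ o halt}

theorem good_inv {q0 : Q} {u : List A} {s : ℕ → A} (hs : GoodS δ o halt q0 u s) {k σ W}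
    (h : TRun δ o halt q0 u s k σ W) : match σ with
      | none => k = 0 ∧ W = 0
      | some none => W ≠ 0
      | some (some (.inl a)) => ∃ R : ℤ, W = 2 * R + 1 ∧
          ∀ p : ℕ, (p : ℤ) = k + R → (k : ℤ) ≤ p → Ok halt a (s p)
      | some (some (.inr q)) => ∃ j, k = j + 1 ∧ q = ctl δ q0 s j ∧
          W = 2 * qlen δ o q0 u s j + 1 := by
  induction h with
  | zero => simp
  | @step k q W p z hr ht ih =>
    cases ht with
    | start =>
      obtain ⟨rfl, rfl⟩ := ih
      exact ⟨0, rfl, rfl, by simp [qlen]⟩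
    | guess0 _ t a ha =>
      obtain ⟨rfl, rfl⟩ := ih
      refine ⟨t, by push_cast; ring, fun p hp _ => ?_⟩
      have : p = 1 + t := by push_cast at hp; omega
      rw [this]
      exact hs.1 t a ha
    | sink => simpa using ih
    | count _ a =>
      obtain ⟨R, h1, h2⟩ := ih
      refine ⟨R - 1, by rw [h1]; ring, fun p hp hle => h2 p ?_ ?_⟩
      · rw [hp]; push_cast; ring
      · push_cast at hle; omega
    | check _ a hb =>
      obtain ⟨R, h1, h2⟩ := ih
      intro h0
      have : R = 0 := by omega
      subst this
      exact hb (h2 k (by simp) le_rfl)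
    | follow _ q =>
      obtain ⟨j, rfl, rfl, h2⟩ := ih
      refine ⟨j + 1, rfl, rfl, ?_⟩
      rw [h2]; simp only [qlen]; ring
    | guess _ q t a ha =>
      obtain ⟨j, rfl, rfl, h2⟩ := ih
      refine ⟨qlen δ o q0 u s j + t - 1, by rw [h2]; ring, fun p hp _ => ?_⟩
      refine hs.2 j t a ha p ?_
      rw [hp]; push_cast; ring

theorem run_follow {q0 : Q} {u : List A} {s : ℕ → A} (i : ℕ) :
    TRun δ o halt q0 u s (i + 1) (some (some (.inr (ctl δ q0 s i))))
      (2 * qlen δ o q0 u s i + 1) := by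
  induction i with
  | zero =>
    have := TRun.step (TRun.zero (δ := δ) (o := o) (halt := halt) (q0 := q0) (u := u) (s := s))
      (Tr.start _)
    simpa [qlen, ctl] using this
  | succ i ih =>
    have := TRun.step ih (Tr.follow _ _)
    have e : 2 * qlen δ o q0 u s (i + 1) + 1 = 2 * qlen δ o q0 u s i + 1 +
        2 * ((o (ctl δ q0 s i) (s (i + 1))).length - 1) := by
      simp only [qlen]; ring
    rw [e]
    exact this

theorem run_count {q0 : Q} {u : List A} {s : ℕ → A} {k a W}
    (h : TRun δ o halt q0 u s k (some (some (.inl a))) W) (n : ℕ) :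
    TRun δ o halt q0 u s (k + n) (some (some (.inl a))) (W - 2 * n) := by
  induction n with
  | zero => simpa using h
  | succ n ih =>
    have := TRun.step ih (Tr.count _ _)
    have e : W - 2 * ((n + 1 : ℕ) : ℤ) = W - 2 * n + -2 := by push_cast; ring
    rw [e]
    exact this

theorem run_zero {q0 : Q} {u : List A} {s : ℕ → A} {k a} {n : ℕ}
    (h : TRun δ o halt q0 u s k (some (some (.inl a))) (2 * n + 1))
    (hb : ¬ Ok halt a (s (k + n))) : ∃ k' σ, TRun δ o halt q0 u s (k' + 1) σ 0 := by
  refine ⟨k + n, some none, ?_⟩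
  have := TRun.step (run_count h n) (Tr.check _ _ hb)
  convert this using 1
  ring

theorem qlen_pos (ho : ∀ q a, o q a ≠ []) {q0 : Q} {u : List A} (hu : u ≠ []) (s : ℕ → A) (i : ℕ) :
    1 ≤ qlen δ o q0 u s i := by
  induction i with
  | zero =>
    have := List.length_pos_iff.2 hu
    simp only [qlen]; omega
  | succ i ih =>
    have := List.length_pos_iff.2 (ho (ctl δ q0 s i) (s (i + 1)))
    simp only [qlen]; omega

theorem good_iff (ho : ∀ q a, o q a ≠ []) {q0 : Q} {u : List A} (hu : u ≠ []) (s : ℕ → A) :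
    GoodS δ o halt q0 u s ↔ ∀ k σ, ¬ TRun δ o halt q0 u s (k + 1) σ 0 := by
  constructor
  · intro hs k σ h
    have := good_inv hs h
    rcases σ with _ | _ | a | q
    · simp at this
    · simp at this
    · obtain ⟨R, h, -⟩ := this; omega
    · obtain ⟨R, -, -, h⟩ := this; omega
  · intro h
    refine ⟨fun t a ha => ?_, fun i t a ha p hp => ?_⟩
    · by_contra hb
      have h1 := TRun.step (TRun.zero (δ := δ) (o := o) (halt := halt) (q0 := q0) (u := u)
        (s := s)) (Tr.guess0 _ t a ha)
      obtain ⟨k, σ, hr⟩ := run_zero (n := t) (by simpa using h1) (by simpa using hb)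
      exact h k σ hr
    · by_contra hb
      have h1 := TRun.step (run_follow (δ := δ) (o := o) (halt := halt) (q0 := q0) (u := u)
        (s := s) i) (Tr.guess _ _ t a ha)
      have hq := qlen_pos (δ := δ) ho (q0 := q0) hu s i
      obtain ⟨n, hn⟩ := Int.eq_ofNat_of_zero_le (a := qlen δ o q0 u s i + t - 1) (by omega)
      obtain ⟨k, σ, hr⟩ := run_zero (n := n) (k := i + 1 + 1) (a := a) (by
        convert h1 using 1
        rw [← hn]; ring) (by
        have : i + 1 + 1 + n = p := by omega
        rw [this]; exact hb)
      exact h k σ hr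

variable (δ o halt)

/-- A finite list of the transitions not depending on the input. -/
theorem exists_fixed (q0 : Q) : ∃ l : List (St A Q × A × St A Q × ℤ), ∀ p x p' z,
    (p, x, p', z) ∈ l ↔ (p ≠ none ∧ Tr δ o halt q0 [] p x p' z) := by
  have hfin : {y : St A Q × A × St A Q × ℤ | y.1 ≠ none ∧
      Tr δ o halt q0 [] y.1 y.2.1 y.2.2.1 y.2.2.2}.Finite := by
    let B : ℕ := Finset.univ.sup (fun y : Q × A => (o y.1 y.2).length)
    have hB : ∀ q x, (o q x).length ≤ B := fun q x =>
      Finset.le_sup (f := fun y : Q × A => (o y.1 y.2).length) (Finset.mem_univ (q, x))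
    refine ((Set.finite_univ (α := St A Q)).prod ((Set.finite_univ (α := A)).prod
      ((Set.finite_univ (α := St A Q)).prod (Set.finite_Icc (-2 : ℤ) (2 * B))))).subset ?_
    rintro ⟨p, x, p', z⟩ ⟨h0, h⟩
    simp only [Set.mem_prod, Set.mem_univ, true_and, Set.mem_Icc]
    change Tr δ o halt q0 [] p x p' z at h
    cases h with
    | start => simp at h0
    | guess0 => simp at h0
    | sink => omega
    | count => omega
    | check => omega
    | follow _ q => have := hB q x; omega
    | guess _ q t a ha =>
      have := hB q x
      have := (List.getElem?_eq_some_iff.1 ha).1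
      omega
  refine ⟨hfin.toFinset.toList, fun p x p' z => by simp⟩

theorem tr_indep {q0 : Q} {u : List A} {p x p' z} (hp : p ≠ none) :
    Tr δ o halt q0 u p x p' z ↔ Tr δ o halt q0 [] p x p' z := by
  constructor <;>
  · intro h
    cases h with
    | start => simp at hp
    | guess0 => simp at hp
    | sink => constructor
    | count => constructor
    | check _ _ h => exact .check _ _ h
    | follow => constructor
    | guess _ _ t a h => exact .guess _ _ _ _ h

/-- Transitions depending on the input word (coded). -/
def inputTrans (q0c initc : ℕ) (ec : A → ℕ) (letters : List ℕ) (u : List A) :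
    List (ℕ × ℕ × ℕ × ℤ) :=
  letters.flatMap fun x => (initc, x, q0c, ((2 * u.length + 1 : ℕ) : ℤ)) ::
    ((List.range u.length).flatMap fun t => ((u[t]?).toList.map fun a =>
      (initc, x, ec a, ((2 * t + 1 : ℕ) : ℤ))))

theorem primrec_natCast : Primrec (fun n : ℕ => (n : ℤ)) := by
  refine Primrec.encode_iff.1 ?_
  have : (fun n : ℕ => Encodable.encode (n : ℤ)) = fun n => 2 * n := by
    funext n
    rfl
  rw [this]
  exact Primrec.nat_mul.comp (Primrec.const 2) Primrec.id

theorem inputTrans_primrec [Finite A] [Primcodable A] (q0c initc : ℕ) (ec : A → ℕ)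
    (letters : List ℕ) : Primrec (inputTrans q0c initc ec letters) := by
  have hlin : Primrec (fun n : ℕ => ((2 * n + 1 : ℕ) : ℤ)) :=
    primrec_natCast.comp (Primrec.succ.comp (Primrec.nat_mul.comp (Primrec.const 2) Primrec.id))
  refine Primrec.list_flatMap (Primrec.const letters) ?_
  refine Primrec.list_cons.comp ?_ ?_
  · exact Primrec.pair (Primrec.const _) (Primrec.pair Primrec.snd (Primrec.pair (Primrec.const _)
      (hlin.comp (Primrec.list_length.comp Primrec.fst))))
  · refine Primrec.list_flatMap (Primrec.list_range.comp (Primrec.list_length.comp Primrec.fst)) ?_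
    refine Primrec.list_map ?_ ?_
    · have h1 : Primrec (fun a : Option A => a.toList) := Primrec.dom_finite _
      exact h1.comp (Primrec.list_getElem?.comp (Primrec.fst.comp Primrec.fst) Primrec.snd)
    · refine Primrec.pair (Primrec.const _) (Primrec.pair ?_ (Primrec.pair ?_ ?_))
      · exact Primrec.snd.comp (Primrec.fst.comp Primrec.fst)
      · exact (Primrec.dom_finite ec).comp Primrec.snd
      · exact hlin.comp (Primrec.snd.comp Primrec.fst)

theorem exists_automaton [Primcodable A] (ho : ∀ q a, o q a ≠ []) (q0 : Q) :
    ∃ F : List A → WACode, Computable F ∧ ∀ u ≠ [], WAWellFormed (F u) ∧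
      (WAHasAlwaysNonzeroWord (F u) ↔ ¬ QHalts δ o halt q0 u) := by
  obtain ⟨l, hl⟩ := exists_fixed δ o halt q0
  let e := Fintype.equivFin (St A Q)
  let eA := Fintype.equivFin A
  let n := Fintype.card (St A Q)
  let m := Fintype.card A
  let c : St A Q × A × St A Q × ℤ → ℕ × ℕ × ℕ × ℤ := fun y =>
    ((e y.1 : ℕ), (eA y.2.1 : ℕ), (e y.2.2.1 : ℕ), y.2.2.2)
  let letters : List ℕ := (Finset.univ : Finset A).toList.map fun x => (eA x : ℕ)
  let I : List A → List (ℕ × ℕ × ℕ × ℤ) :=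
    inputTrans (e (some (some (.inr q0)))) (e none) (fun a => e (some (some (.inl a)))) letters
  let ts : List A → List (ℕ × ℕ × ℕ × ℤ) := fun u => I u ++ l.map c
  have hts : ∀ u y, y ∈ ts u ↔ ∃ p x p' z, y = c (p, x, p', z) ∧ Tr δ o halt q0 u p x p' z := by
    intro u y
    constructor
    · intro h
      rcases List.mem_append.1 h with h | h
      · simp only [I, inputTrans, List.mem_flatMap, List.mem_cons, List.mem_map, letters,
          Option.mem_toList, List.mem_range] at h
        obtain ⟨_, ⟨x, -, rfl⟩, rfl | ⟨t, ht, a, ha, rfl⟩⟩ := h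
        · exact ⟨_, x, _, _, rfl, .start x⟩
        · exact ⟨_, x, _, _, rfl, .guess0 x t a ha⟩
      · obtain ⟨⟨p, x, p', z⟩, h1, rfl⟩ := List.mem_map.1 h
        obtain ⟨h2, h3⟩ := (hl _ _ _ _).1 h1
        exact ⟨p, x, p', z, rfl, (tr_indep δ o halt h2).2 h3⟩
    · rintro ⟨p, x, p', z, rfl, h⟩
      by_cases hp : p = none
      · refine List.mem_append_left _ ?_
        simp only [I, inputTrans, List.mem_flatMap, List.mem_cons, List.mem_map, letters,
          Option.mem_toList, List.mem_range]
        refine ⟨_, ⟨x, by simp, rfl⟩, ?_⟩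
        subst hp
        cases h with
        | start => exact Or.inl rfl
        | guess0 _ t a ha =>
          exact Or.inr ⟨t, (List.getElem?_eq_some_iff.1 ha).1, a, ha, rfl⟩
      · refine List.mem_append_right _ (List.mem_map.2 ⟨_, (hl _ _ _ _).2 ⟨hp, ?_⟩, rfl⟩)
        exact (tr_indep δ o halt hp).1 h
  have hinj : ∀ {p x p' z r y r' v}, c (p, x, p', z) = c (r, y, r', v) →
      p = r ∧ x = y ∧ p' = r' ∧ z = v := by
    intro p x p' z r y r' v h
    simp only [c, Prod.mk.injEq] at h
    exact ⟨e.injective (Fin.ext h.1), eA.injective (Fin.ext h.2.1), e.injective (Fin.ext h.2.2.1),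
      h.2.2.2⟩
  have hwf : ∀ u, WAWellFormed (n, m, ts u, (e none : ℕ), []) := by
    intro u
    refine ⟨(e none).2, by simp, ?_, ?_⟩
    · intro t ht
      obtain ⟨p, x, p', z, rfl, h⟩ := (hts _ _).1 ht
      exact ⟨(e p).2, (eA x).2, (e p').2⟩
    · intro q hq x hx
      obtain ⟨p, rfl⟩ : ∃ p, q = (e p : ℕ) := ⟨e.symm ⟨q, hq⟩, by simp⟩
      obtain ⟨y, rfl⟩ : ∃ y, x = (eA y : ℕ) := ⟨eA.symm ⟨x, hx⟩, by simp⟩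
      have : ∃ p' z, Tr δ o halt q0 u p y p' z := by
        rcases p with _ | _ | a | q
        · exact ⟨_, _, .start y⟩
        · exact ⟨_, _, .sink y⟩
        · exact ⟨_, _, .count y a⟩
        · exact ⟨_, _, .follow y q⟩
      obtain ⟨p', z, h⟩ := this
      exact ⟨e p', z, (hts _ _).2 ⟨_, _, _, _, rfl, h⟩⟩
  have hrun : ∀ u (s : ℕ → A) k σ W, NRun (ts u) (e none) (fun i => (eA (s i) : ℕ)) k σ W ↔
      ∃ σ', σ = (e σ' : ℕ) ∧ TRun δ o halt q0 u s k σ' W := by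
    intro u s k σ W
    constructor
    · intro h
      induction h with
      | zero => exact ⟨none, rfl, .zero⟩
      | step hr ht ih =>
        obtain ⟨σ', rfl, h'⟩ := ih
        obtain ⟨p, x, p', z, hy, h⟩ := (hts _ _).1 ht
        simp only [c, Prod.mk.injEq] at hy
        obtain ⟨h1, h2, h3, rfl⟩ := hy
        obtain rfl := e.injective (Fin.ext h1)
        obtain rfl := eA.injective (Fin.ext h2)
        exact ⟨p', h3, .step h' h⟩
    · rintro ⟨σ', rfl, h⟩
      induction h with
      | zero => exact .zero
      | step hr ht ih =>
        exact NRun.step ih ((hts _ _).2 ⟨_, _, _, _, rfl, ht⟩)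
  refine ⟨fun u => (n, m, ts u, (e none : ℕ), []), ?_, ?_⟩
  · refine Primrec.to_comp ?_
    refine Primrec.pair (Primrec.const _) (Primrec.pair (Primrec.const _)
      (Primrec.pair ?_ (Primrec.const _)))
    exact Primrec.list_append.comp (inputTrans_primrec _ _ _ _) (Primrec.const _)
  · intro u hu
    refine ⟨hwf u, (hasWord_iff (hwf u)).trans ?_⟩
    constructor
    · rintro ⟨w, hw, H⟩
      let s : ℕ → A := fun i => eA.symm ⟨w i, hw i⟩
      have hs : w = fun i => (eA (s i) : ℕ) := by funext i; simp [s]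
      refine not_halts_of_good ho hu (s := s) ((good_iff ho hu s).2 fun k σ h => ?_)
      refine H k (e σ) ?_
      rw [hs]
      exact (hrun u s _ _ _).2 ⟨σ, rfl, h⟩
    · intro hh
      obtain ⟨s, hs⟩ := good_of_not_halts ho hu hh
      refine ⟨fun i => (eA (s i) : ℕ), fun i => (eA (s i)).2, fun k q h => ?_⟩
      obtain ⟨σ', -, h'⟩ := (hrun u s _ _ _).1 h
      exact (good_iff ho hu s).1 hs k σ' h'

end Automaton

/-! ### Cellular automata as queue systems -/

section CA

variable {C : Type} (bl : C) (f : C → C → C → C) (hal : C → Prop)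

/-- Letter by letter control. -/
def caδ : C × C → Option C → C × C
  | (_, p), some x => (p, x)
  | _, none => (bl, bl)

/-- Letter by letter output. -/
def caO : C × C → Option C → List (Option C)
  | (r, p), some x => [some (f r p x)]
  | (r, p), none => [some (f r p bl), some (f p bl bl), none]

/-- Halting letters. -/
def caHalt : Option C → Prop
  | some x => hal x
  | none => False

/-- One step of the cellular automaton. -/
def caStep (g : ℤ → C) (i : ℤ) : C := f (g (i - 1)) (g i) (g (i + 1))

/-- A segment of a row. -/
def seg (g : ℤ → C) (l : ℤ) (n : ℕ) : List (Option C) :=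
  (List.range n).map fun j : ℕ => some (g (l + (j : ℤ)))

theorem seg_succ (g : ℤ → C) (l : ℤ) (n : ℕ) :
    seg g l (n + 1) = some (g l) :: seg g (l + 1) n := by
  simp only [seg, List.range_succ_eq_map, List.map_cons, List.map_map]
  congr 1
  · simp
  · refine List.map_congr_left fun j _ => ?_
    simp only [Function.comp]
    congr 2
    push_cast; ring

theorem seg_snoc (g : ℤ → C) (l : ℤ) (n : ℕ) :
    seg g l (n + 1) = seg g l n ++ [some (g (l + n))] := by
  simp [seg, List.range_succ]

theorem mem_seg {g : ℤ → C} {l : ℤ} {n : ℕ} {x} (h : x ∈ seg g l n) : ∃ i, x = some (g i) := by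
  simp only [seg, List.mem_map] at h
  obtain ⟨j, -, rfl⟩ := h
  exact ⟨_, rfl⟩

/-- `g` is blank outside `[l, l + n)`. -/
def Supp (g : ℤ → C) (l : ℤ) (n : ℕ) : Prop := ∀ i, i < l ∨ l + n ≤ i → g i = bl

variable {bl f hal}

theorem supp_step (hf : f bl bl bl = bl) {g : ℤ → C} {l : ℤ} {n : ℕ} (h : Supp bl g l n) :
    Supp bl (caStep f g) (l - 1) (n + 2) := by
  intro i hi
  simp only [caStep]
  rw [h (i - 1), h i, h (i + 1), hf]
  all_goals push_cast at hi; omega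

theorem row_progress {g : ℤ → C} {l : ℤ} {n : ℕ} (h : Supp bl g l n) (j : ℕ) (hj : j ≤ n) :
    (qstep (caδ bl) (caO bl f))^[j] ((bl, bl), seg g l n ++ [none]) =
      ((g (l + j - 2), g (l + j - 1)),
        seg g (l + j) (n - j) ++ none :: seg (caStep f g) (l - 1) j) := by
  induction j with
  | zero =>
    simp only [Function.iterate_zero, id, Nat.cast_zero, add_zero, Nat.sub_zero]
    rw [h (l - 2) (by omega), h (l - 1) (by omega)]
    simp [seg]
  | succ j ih =>
    rw [Function.iterate_succ_apply', ih (by omega)]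
    rw [show n - j = (n - (j + 1)) + 1 by omega, seg_succ, seg_snoc]
    simp only [qstep, caδ, caO, List.cons_append, List.append_assoc, caStep]
    push_cast
    ring_nf

theorem row_full {g : ℤ → C} {l : ℤ} {n : ℕ} (h : Supp bl g l n) :
    (qstep (caδ bl) (caO bl f))^[n + 1] ((bl, bl), seg g l n ++ [none]) =
      ((bl, bl), seg (caStep f g) (l - 1) (n + 2) ++ [none]) := by
  rw [Function.iterate_succ_apply', row_progress h n le_rfl]
  have h1 := h (l + n) (by omega)
  have h2 := h (l + n + 1) (by omega)
  rw [seg_snoc, seg_snoc]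
  simp only [Nat.sub_self, seg, List.range_zero, List.map_nil, List.nil_append, qstep, caδ, caO,
    List.append_assoc, caStep, List.cons_append]
  have e1 : l - 1 + (n : ℤ) - 1 = l + n - 2 := by ring
  have e2 : l - 1 + (n : ℤ) = l + n - 1 := by ring
  have e3 : l - 1 + ((n + 1 : ℕ) : ℤ) = l + n := by push_cast; ring
  rw [e1, e2, e3, h1, h2, show l + (n : ℤ) - 1 + 1 = l + n by ring, h1]

theorem ca_of_qhalts (hf : f bl bl bl = bl) (i : ℕ) : ∀ (g : ℤ → C) (l : ℤ) (n : ℕ),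
    Supp bl g l n → (∃ a ∈ ((qstep (caδ bl) (caO bl f))^[i] ((bl, bl), seg g l n ++ [none])).2,
      caHalt hal a) → ∃ t k, hal ((caStep f)^[t] g k) := by
  induction i using Nat.strong_induction_on with
  | _ i ih =>
    intro g l n h ha
    by_cases hi : i ≤ n
    · rw [row_progress h i hi] at ha
      obtain ⟨a, ha, hh⟩ := ha
      simp only [List.mem_append, List.mem_cons] at ha
      rcases ha with ha | rfl | ha
      · obtain ⟨k, rfl⟩ := mem_seg ha
        exact ⟨0, k, hh⟩
      · exact hh.elim
      · obtain ⟨k, rfl⟩ := mem_seg ha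
        exact ⟨1, k, hh⟩
    · obtain ⟨i', rfl⟩ : ∃ i', i = i' + (n + 1) := ⟨i - (n + 1), by omega⟩
      rw [Function.iterate_add_apply, row_full h] at ha
      obtain ⟨t, k, hk⟩ := ih i' (by omega) _ _ _ (supp_step hf h) ha
      exact ⟨t + 1, k, hk⟩

theorem qhalts_of_ca (hf : f bl bl bl = bl) (hb : ¬ hal bl) (t : ℕ) : ∀ (g : ℤ → C) (l : ℤ) (n : ℕ),
    Supp bl g l n → (∃ k, hal ((caStep f)^[t] g k)) →
    QHalts (caδ bl) (caO bl f) (caHalt hal) (bl, bl) (seg g l n ++ [none]) := by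
  induction t with
  | zero =>
    rintro g l n h ⟨k, hk⟩
    refine ⟨0, some (g k), ?_, hk⟩
    have h1 : ¬ (k < l ∨ l + n ≤ k) := fun h' => hb (by rw [← h k h']; exact hk)
    simp only [Function.iterate_zero, id]
    refine List.mem_append_left _ ?_
    simp only [seg, List.mem_map, List.mem_range]
    exact ⟨(k - l).toNat, by omega, by congr 2; omega⟩
  | succ t ih =>
    rintro g l n h ⟨k, hk⟩
    obtain ⟨i, a, ha, hh⟩ := ih _ _ _ (supp_step hf h) ⟨k, hk⟩
    refine ⟨i + (n + 1), a, ?_, hh⟩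
    rw [Function.iterate_add_apply, row_full h]
    exact ha

theorem qhalts_iff_ca (hf : f bl bl bl = bl) (hb : ¬ hal bl) {g : ℤ → C} {l : ℤ} {n : ℕ}
    (h : Supp bl g l n) :
    QHalts (caδ bl) (caO bl f) (caHalt hal) (bl, bl) (seg g l n ++ [none]) ↔
      ∃ t k, hal ((caStep f)^[t] g k) :=
  ⟨fun ⟨i, hi⟩ => ca_of_qhalts hf i g l n h hi, fun ⟨t, ht⟩ => qhalts_of_ca hf hb t g l n h ht⟩

end CA

/-! ### Turing machines as cellular automata -/

section TM

open Turing

variable {Γ Λ : Type} [Inhabited Γ] [Inhabited Λ] (M : TM0.Machine Γ Λ)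

/-- head arriving from the left -/
def incR (c : Γ × Option Λ) : Option Λ :=
  match c.2 with
  | none => none
  | some q => match M q c.1 with
    | some (q', .move .right) => some q'
    | _ => none

/-- head arriving from the right -/
def incL (c : Γ × Option Λ) : Option Λ :=
  match c.2 with
  | none => none
  | some q => match M q c.1 with
    | some (q', .move .left) => some q'
    | _ => none

/-- The local rule. -/
def tmRule (l c r : Γ × Option Λ) : Γ × Option Λ :=
  match c.2 with
  | some q => match M q c.1 with
    | some (q', .write b) => (b, some q')
    | _ => (c.1, none)
  | none => (c.1, match incR M l with
    | some q => some q
    | none => incL M r)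

/-- Halting cells. -/
def tmHal (c : Γ × Option Λ) : Prop := ∃ q, c.2 = some q ∧ M q c.1 = none

/-- The row of a configuration with head at absolute position `p`. -/
def tmRow (c : TM0.Cfg Γ Λ) (p i : ℤ) : Γ × Option Λ :=
  (c.Tape.nth (i - p), if i = p then some c.q else none)

variable {M}

theorem tmRow_step {c c' : TM0.Cfg Γ Λ} (h : c' ∈ TM0.step M c) (p : ℤ) :
    ∃ p', caStep (tmRule M) (tmRow c p) = tmRow c' p' := by
  obtain ⟨q, T⟩ := c
  obtain ⟨⟨q', a⟩, hM, rfl⟩ := Option.map_eq_some_iff.1 h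
  change M q T.head = some (q', a) at hM
  rcases a with (_ | _) | b
  · refine ⟨p - 1, funext fun i => ?_⟩
    have e : i - (p - 1) - 1 = i - p := by ring
    simp only [caStep, tmRow, Tape.move_left_nth, e]
    by_cases h1 : i = p
    · subst h1
      simp [tmRule, hM, show i ≠ i - 1 by omega]
    · by_cases h2 : i + 1 = p
      · subst h2
        simp [tmRule, hM, incR, incL, show i - 1 ≠ i + 1 by omega]
      · have h3 : i ≠ p - 1 := by omega
        by_cases h4 : i - 1 = p
        · obtain rfl : i = p + 1 := by omega
          simp [tmRule, hM, incR, incL, show p + 1 + 1 ≠ p by omega, show p + 1 ≠ p - 1 by omega]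
        · simp [tmRule, h1, h2, h3, h4, incR, incL]
  · refine ⟨p + 1, funext fun i => ?_⟩
    have e : i - (p + 1) + 1 = i - p := by ring
    simp only [caStep, tmRow, Tape.move_right_nth, e]
    by_cases h1 : i = p
    · subst h1
      simp [tmRule, hM]
    · by_cases h2 : i + 1 = p
      · subst h2
        simp [tmRule, hM, incR, incL, show i - 1 ≠ i + 1 by omega, show i ≠ i + 1 + 1 by omega]
      · by_cases h4 : i - 1 = p
        · obtain rfl : i = p + 1 := by omega
          simp [tmRule, hM, incR, incL, show p + 1 + 1 ≠ p by omega]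
        · have h3 : i ≠ p + 1 := by omega
          simp [tmRule, h1, h2, h3, h4, incR, incL]
  · refine ⟨p, funext fun i => ?_⟩
    simp only [caStep, tmRow, Tape.write_nth]
    by_cases h1 : i = p
    · subst h1
      simp [tmRule, hM]
    · have h5 : i - p ≠ 0 := by omega
      by_cases h2 : i + 1 = p
      · subst h2
        simp [tmRule, hM, incR, incL, show i - 1 ≠ i + 1 by omega]
      · by_cases h4 : i - 1 = p
        · obtain rfl : i = p + 1 := by omega
          simp [tmRule, hM, incR, incL, show p + 1 + 1 ≠ p by omega]
        · simp [tmRule, h1, h2, h4, h5, incR, incL]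

theorem tmHal_row {c : TM0.Cfg Γ Λ} {p i : ℤ} (h : tmHal M (tmRow c p i)) :
    TM0.step M c = none := by
  obtain ⟨q, hq, hM⟩ := h
  simp only [tmRow] at hq hM
  split_ifs at hq with hi
  subst hi
  obtain ⟨q0, T⟩ := c
  simp only [Option.some.injEq] at hq
  subst hq
  simp only [sub_self, Tape.nth_zero] at hM
  simp [TM0.step, hM]

theorem halts_iff_ca (c : TM0.Cfg Γ Λ) (p : ℤ) : (StateTransition.eval (TM0.step M) c).Dom ↔
    ∃ t k, tmHal M ((caStep (tmRule M))^[t] (tmRow c p) k) := by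
  constructor
  · intro h
    obtain ⟨b, hb⟩ := Part.dom_iff_mem.1 h
    obtain ⟨hr, hn⟩ := StateTransition.mem_eval.1 hb
    have : ∃ t p', (caStep (tmRule M))^[t] (tmRow c p) = tmRow b p' := by
      clear hn hb
      induction hr with
      | refl => exact ⟨0, p, rfl⟩
      | tail _ h ih =>
        obtain ⟨t, p', e⟩ := ih
        obtain ⟨p'', e'⟩ := tmRow_step h p'
        exact ⟨t + 1, p'', by rw [Function.iterate_succ_apply', e, e']⟩
    obtain ⟨t, p', e⟩ := this
    refine ⟨t, p', ?_⟩
    rw [e]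
    obtain ⟨q, T⟩ := b
    refine ⟨q, by simp [tmRow], ?_⟩
    simpa [TM0.step, tmRow] using hn
  · rintro ⟨t, k, hk⟩
    by_contra hd
    have : ∀ t, ∃ b p', StateTransition.Reaches (TM0.step M) c b ∧
        (caStep (tmRule M))^[t] (tmRow c p) = tmRow b p' := by
      intro t
      induction t with
      | zero => exact ⟨c, p, Relation.ReflTransGen.refl, rfl⟩
      | succ t ih =>
        obtain ⟨b, p', hr, e⟩ := ih
        rcases hs : TM0.step M b with _ | b'
        · exact absurd (Part.dom_iff_mem.2 ⟨b, StateTransition.mem_eval.2 ⟨hr, hs⟩⟩) hd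
        · obtain ⟨p'', e'⟩ := tmRow_step (M := M) (c := b) (c' := b') hs p'
          exact ⟨b', p'', hr.tail hs, by rw [Function.iterate_succ_apply', e, e']⟩
    obtain ⟨b, p', hr, e⟩ := this t
    rw [e] at hk
    exact hd (Part.dom_iff_mem.2 ⟨b, StateTransition.mem_eval.2 ⟨hr, tmHal_row hk⟩⟩)

/-- The initial queue. -/
def initQ (l : List Γ) : List (Option (Γ × Option Λ)) :=
  (some (l.headI, some default) :: l.tail.map fun a => some (a, none)) ++ [none]

theorem mk₁_nth (l : List Γ) (i : ℤ) :
    (Tape.mk₁ l).nth i = if 0 ≤ i then l.getI i.toNat else default := by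
  rcases i with i | i
  · have := Tape.mk'_nth_nat (ListBlank.mk ([] : List Γ)) (ListBlank.mk l) i
    rw [ListBlank.nth_mk] at this
    simpa [Tape.mk₁, Tape.mk₂] using this
  · have : (Tape.mk₁ l).nth (Int.negSucc i) = (ListBlank.mk ([] : List Γ)).nth i := rfl
    rw [this, ListBlank.nth_mk]
    simp [List.getI]

theorem initQ_eq (l : List Γ) : initQ l =
    seg (tmRow (TM0.init l : TM0.Cfg Γ Λ) 0) 0 (l.tail.length + 1) ++ [none] := by
  rw [seg_succ, initQ]
  have hh : tmRow (TM0.init l : TM0.Cfg Γ Λ) 0 0 = (l.headI, some default) := by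
    simp only [tmRow, TM0.init]
    rw [mk₁_nth]
    cases l <;> simp [List.getI]
  have ht : (l.tail.map fun a => some (a, none)) =
      seg (tmRow (TM0.init l : TM0.Cfg Γ Λ) 0) (0 + 1) l.tail.length := by
    refine List.ext_getElem (by simp [seg]) fun i h1 h2 => ?_
    simp only [List.length_map] at h1
    simp only [seg, List.getElem_map, List.getElem_range, tmRow, TM0.init]
    rw [mk₁_nth]
    have : (0 + 1 + (i : ℤ) - 0).toNat = i + 1 := by omega
    rw [this, if_pos (by omega), if_neg (by omega)]
    cases l with
    | nil => simp at h1
    | cons a l =>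
      simp only [List.tail_cons] at h1
      simp [List.getI, h1]
  rw [hh, ht]

theorem init_supp (l : List Γ) :
    Supp (default, none) (tmRow (TM0.init l : TM0.Cfg Γ Λ) 0) 0 (l.tail.length + 1) := by
  intro i hi
  simp only [tmRow, TM0.init]
  rw [mk₁_nth]
  rw [if_neg (show ¬ i = 0 by omega)]
  split_ifs with h
  · congr 1
    have : l.length ≤ (i - 0).toNat := by
      have := l.length_tail
      omega
    rw [List.getI_eq_default _ this]
  · rfl

theorem tm_reduction : ∀ l : List Γ, QHalts (caδ ((default : Γ), (none : Option Λ)))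
    (caO (default, none) (tmRule M)) (caHalt (tmHal M)) ((default, none), (default, none)) (initQ l) ↔
    (StateTransition.eval (TM0.step M) (TM0.init l)).Dom := by
  intro l
  rw [initQ_eq, qhalts_iff_ca _ _ (init_supp l), ← halts_iff_ca]
  · simp [tmRule, incR, incL]
  · simp [tmHal]

end TM

/-! ### An undecidable halting problem for a fixed Turing machine -/

section Univ

open Turing

theorem tm0_restrict {Γ Λ : Type} [Inhabited Γ] [Inhabited Λ] (M : TM0.Machine Γ Λ)
    (S : Finset Λ) (ss : TM0.Supports M ↑S) :
    ∃ (Λ₂ : Type) (_ : Inhabited Λ₂) (_ : Finite Λ₂) (N : TM0.Machine Γ Λ₂), ∀ l : List Γ,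
      (StateTransition.eval (TM0.step N) (TM0.init l)).Dom ↔
        (StateTransition.eval (TM0.step M) (TM0.init l)).Dom := by
  letI : Inhabited {q // q ∈ S} := ⟨⟨default, ss.1⟩⟩
  let g₁ : PointedMap Λ {q // q ∈ S} :=
    ⟨fun q => if h : q ∈ S then ⟨q, h⟩ else default, by
      have : (default : Λ) ∈ S := ss.1
      simp only [this, dif_pos]
      rfl⟩
  let f : PointedMap Γ Γ := ⟨id, rfl⟩
  have hg : ∀ q ∈ (↑S : Set Λ), ((g₁ q : {q // q ∈ S}) : Λ) = q := by
    intro q hq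
    have : q ∈ S := hq
    change ((if h : q ∈ S then (⟨q, h⟩ : {q // q ∈ S}) else default : {q // q ∈ S}) : Λ) = q
    rw [dif_pos this]
  refine ⟨{q // q ∈ S}, inferInstance, inferInstance, M.map f f g₁ Subtype.val, fun l => ?_⟩
  refine StateTransition.tr_eval_dom
    (TM0.Machine.map_respects M f f g₁ Subtype.val ss (fun _ => rfl) hg) ⟨ss.1, ?_⟩
  rw [TM0.map_init f g₁ l]
  congr 1
  exact List.map_id l

theorem tm2_to_tm0 {K : Type} [DecidableEq K] {Γ : K → Type} {Λ σ : Type} [Inhabited Λ]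
    [Inhabited σ] [Finite σ] (M : Λ → TM2.Stmt Γ Λ σ) (S : Finset Λ) (ss : TM2.Supports M S)
    (k : K) :
    ∃ (Λ₂ : Type) (_ : Inhabited Λ₂) (_ : Finite Λ₂) (N : TM0.Machine (TM2to1.Γ' K Γ) Λ₂),
      ∀ L : List (Γ k), (StateTransition.eval (TM0.step N) (TM0.init (TM2to1.trInit k L))).Dom ↔
        (StateTransition.eval (TM2.step M) (TM2.init k L)).Dom := by
  letI := Fintype.ofFinite σ
  obtain ⟨Λ₂, i1, i2, N, hN⟩ := tm0_restrict (TM1to0.tr (TM2to1.tr M)) _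
    (TM1to0.tr_supports _ (TM2to1.tr_supports M ss))
  refine ⟨Λ₂, i1, i2, N, fun L => ?_⟩
  rw [hN]
  have h1 := TM1to0.tr_eval (TM2to1.tr M) (TM2to1.trInit k L)
  have h2 := TM2to1.tr_eval_dom M k L
  rw [← h1] at h2
  exact h2

open PartrecToTM2 in
theorem code_to_tm0 (c : ToPartrec.Code) :
    ∃ (Λ₂ : Type) (_ : Inhabited Λ₂) (_ : Finite Λ₂)
      (N : TM0.Machine (TM2to1.Γ' K' (fun _ => Γ')) Λ₂),
      ∀ v : List ℕ,
        (StateTransition.eval (TM0.step N)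
          (TM0.init (TM2to1.trInit K'.main (trList v)))).Dom ↔ (c.eval v).Dom := by
  letI : Inhabited PartrecToTM2.Λ' := ⟨trNormal c Cont'.halt⟩
  obtain ⟨Λ₂, i1, i2, N, hN⟩ := tm2_to_tm0 PartrecToTM2.tr _
    (PartrecToTM2.tr_supports c Cont'.halt) K'.main
  refine ⟨Λ₂, i1, i2, N, fun v => ?_⟩
  rw [hN]
  have h := PartrecToTM2.tr_eval c v
  have e : PartrecToTM2.init c v = TM2.init K'.main (trList v) := by
    unfold PartrecToTM2.init TM2.init
    congr 1
    funext k
    cases k <;> simp [Function.update, K'.elim]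
  rw [e] at h
  rw [h]
  rfl

theorem exists_undec_code : ∃ c : ToPartrec.Code, ¬ ComputablePred fun n : ℕ => (c.eval [n]).Dom := by
  have hU : Partrec (fun m : ℕ => Nat.Partrec.Code.eval (Denumerable.ofNat Nat.Partrec.Code m) 0) :=
    Nat.Partrec.Code.eval_part.comp (Computable.ofNat _) (Computable.const 0)
  obtain ⟨c, hc⟩ := ToPartrec.Code.exists_code (Nat.Partrec'.part_iff₁.2 hU)
  refine ⟨c, fun h => ComputablePred.halting_problem 0 ?_⟩
  obtain ⟨f, hf, e⟩ := ComputablePred.computable_iff.1 h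
  refine ComputablePred.computable_iff.2 ⟨fun c => f (Encodable.encode c),
    hf.comp Computable.encode, funext fun d => ?_⟩
  rw [← congrFun e (Encodable.encode d)]
  have := hc ⟨[Encodable.encode d], rfl⟩
  simp only [List.Vector.head] at this
  rw [this]
  simp only [Denumerable.ofNat_encode]
  rfl

open PartrecToTM2 in
theorem trNat_rec (n : ℕ) : trNat n = if n = 0 then [] else
    (if n % 2 = 0 then Γ'.bit0 else Γ'.bit1) :: trNat (n / 2) := by
  split_ifs with h h1
  · subst h; simp
  · obtain ⟨m, rfl⟩ : ∃ m, n = Nat.bit false m := ⟨n / 2, by simp [Nat.bit]; omega⟩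
    have e : Nat.bit false m / 2 = m := by simp [Nat.bit]
    rw [e]
    unfold trNat
    rw [← Num.ofNat'_eq, ← Num.ofNat'_eq, Num.ofNat'_bit, Num.ofNat'_eq]
    have : (m : Num) ≠ 0 := by
      intro hm
      have : m = 0 := by exact_mod_cast hm
      subst this; simp at h
    rcases hm : (m : Num) with _ | p
    · exact absurd hm this
    · rfl
  · obtain ⟨m, rfl⟩ : ∃ m, n = Nat.bit true m := ⟨n / 2, by simp [Nat.bit]; omega⟩
    have e : Nat.bit true m / 2 = m := by simp [Nat.bit]; omega
    rw [e]
    unfold trNat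
    rw [← Num.ofNat'_eq, ← Num.ofNat'_eq, Num.ofNat'_bit, Num.ofNat'_eq]
    rcases hm : (m : Num) with _ | p
    · rfl
    · rfl

open PartrecToTM2 in
theorem trNat_primrec [Primcodable Γ'] : Primrec trNat := by
  let g : Unit → List (List Γ') → Option (List Γ') := fun _ l =>
    if l.length = 0 then some [] else
      (l[l.length / 2]?).map fun t => (if l.length % 2 = 0 then Γ'.bit0 else Γ'.bit1) :: t
  have hg : Primrec₂ g := by
    have hl : Primrec fun p : Unit × List (List Γ') => p.2.length :=
      Primrec.list_length.comp Primrec.snd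
    refine Primrec.ite (Primrec.eq.comp hl (Primrec.const 0)) (Primrec.const _) ?_
    refine Primrec.option_map (Primrec.list_getElem?.comp Primrec.snd
      (Primrec.nat_div.comp hl (Primrec.const 2))) ?_
    refine Primrec.list_cons.comp ?_ Primrec.snd
    exact Primrec.ite (Primrec.eq.comp
      (Primrec.nat_mod.comp (hl.comp Primrec.fst) (Primrec.const 2)) (Primrec.const 0))
      (Primrec.const _) (Primrec.const _)
  have := Primrec.nat_strong_rec (fun _ : Unit => trNat) hg (by
    intro _ n
    simp only [g, List.length_map, List.length_range]
    rw [trNat_rec n]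
    split_ifs with h
    · rfl
    all_goals
      rw [List.getElem?_map, List.getElem?_range (by omega)]
      rfl)
  exact this.comp (Primrec.const ()) Primrec.id

/-- Some primitive recursive coding of a finite type. -/
@[reducible]
noncomputable def finPrimcodable (α : Type) [Finite α] : Primcodable α :=
  Primcodable.ofEquiv _ (Finite.equivFin α)

theorem trInit_primrec {K : Type} [DecidableEq K] [Finite K] {Γ : K → Type} [∀ k, Finite (Γ k)]
    [Primcodable (TM2to1.Γ' K Γ)] (k : K) [Primcodable (Γ k)] :
    Primrec (TM2to1.trInit (Γ := Γ) k) := by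
  haveI : Finite (TM2to1.Γ' K Γ) := inferInstanceAs (Finite (Bool × ∀ k, Option (Γ k)))
  let h : Γ k → TM2to1.Γ' K Γ := fun a => (false, Function.update (fun _ => none) k (some a))
  let h2 : TM2to1.Γ' K Γ → TM2to1.Γ' K Γ := fun a => (true, a.2)
  have hh : Primrec h := Primrec.dom_finite h
  have hh2 : Primrec h2 := Primrec.dom_finite h2
  have e : TM2to1.trInit (Γ := Γ) k = fun L =>
    h2 (L.reverse.map h).headI :: (L.reverse.map h).tail := rfl
  rw [e]
  have hm : Primrec fun L : List (Γ k) => L.reverse.map h :=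
    Primrec.list_map Primrec.list_reverse (hh.comp Primrec.snd)
  exact Primrec.list_cons.comp (hh2.comp (Primrec.list_headI.comp hm)) (Primrec.list_tail.comp hm)

theorem exists_undec_tm : ∃ (Γ Λ : Type) (_ : Inhabited Γ) (_ : Inhabited Λ) (_ : Finite Γ)
    (_ : Finite Λ) (_ : Primcodable Γ) (M : TM0.Machine Γ Λ) (f : ℕ → List Γ), Computable f ∧
    ¬ ComputablePred (fun n => (StateTransition.eval (TM0.step M) (TM0.init (f n))).Dom) := by
  obtain ⟨c, hc⟩ := exists_undec_code
  obtain ⟨Λ₂, i1, i2, N, hN⟩ := code_to_tm0 c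
  haveI : Finite PartrecToTM2.K' := by
    refine Finite.of_surjective
      (fun i : Fin 4 => ![PartrecToTM2.K'.main, .rev, .aux, .stack] i) fun k => ?_
    cases k
    exacts [⟨0, rfl⟩, ⟨1, rfl⟩, ⟨2, rfl⟩, ⟨3, rfl⟩]
  haveI hfin : Finite (TM2to1.Γ' PartrecToTM2.K' fun _ => PartrecToTM2.Γ') :=
    inferInstanceAs (Finite (Bool × (PartrecToTM2.K' → Option PartrecToTM2.Γ')))
  letI hp := finPrimcodable (TM2to1.Γ' PartrecToTM2.K' fun _ => PartrecToTM2.Γ')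
  letI := finPrimcodable PartrecToTM2.Γ'
  refine ⟨_, Λ₂, inferInstance, i1, hfin, i2, hp, N,
    fun n => TM2to1.trInit PartrecToTM2.K'.main (PartrecToTM2.trList [n]), ?_, ?_⟩
  · refine Primrec.to_comp ?_
    refine (trInit_primrec (Γ := fun _ => PartrecToTM2.Γ') PartrecToTM2.K'.main).comp ?_
    exact Primrec.list_append.comp trNat_primrec (Primrec.const [PartrecToTM2.Γ'.cons])
  · simp only [hN]
    exact hc

theorem initQ_primrec {Γ Λ : Type} [Inhabited Γ] [Inhabited Λ] [Finite Γ] [Primcodable Γ]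
    [Primcodable (Option (Γ × Option Λ))] : Primrec (initQ : List Γ → List (Option (Γ × Option Λ))) := by
  let h1 : Γ → Option (Γ × Option Λ) := fun a => some (a, some default)
  let h2 : Γ → Option (Γ × Option Λ) := fun a => some (a, none)
  have e : (initQ : List Γ → List (Option (Γ × Option Λ))) = fun l => (h1 l.headI :: l.tail.map h2) ++ [none] := rfl
  rw [e]
  exact Primrec.list_append.comp (Primrec.list_cons.comp
    ((Primrec.dom_finite h1).comp Primrec.list_headI)
    (Primrec.list_map Primrec.list_tail ((Primrec.dom_finite h2).comp Primrec.snd)))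
    (Primrec.const _)

theorem undecidable_main :
    ¬ ComputablePred (fun c : WACode => WAWellFormed c ∧ WAHasAlwaysNonzeroWord c) := by
  intro hdec
  obtain ⟨Γ, Λ, _, _, _, _, hΓ, M, f, hf, hM⟩ := exists_undec_tm
  letI := Fintype.ofFinite (Option (Γ × Option Λ))
  letI := Fintype.ofFinite ((Γ × Option Λ) × (Γ × Option Λ))
  letI := finPrimcodable (Option (Γ × Option Λ))
  obtain ⟨F, hF, hFu⟩ := exists_automaton (caδ ((default : Γ), (none : Option Λ)))
    (caO (default, none) (tmRule M)) (caHalt (tmHal M))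
    (by rintro ⟨_, _⟩ (_ | _) <;> simp [caO]) ((default, none), (default, none))
  apply hM
  have hc : Computable fun n => F (initQ (f n)) :=
    hF.comp (initQ_primrec.to_comp.comp hf)
  obtain ⟨b, hb, e⟩ := ComputablePred.computable_iff.1 hdec.not
  refine ComputablePred.computable_iff.2 ⟨fun n => b (F (initQ (f n))), hb.comp hc,
    funext fun n => ?_⟩
  rw [← congrFun e (F (initQ (f n)))]
  obtain ⟨hw, hq⟩ := hFu (initQ (f n)) (by simp [initQ])
  rw [hq, tm_reduction]
  simp [hw]

end Univ

end WAU

/-- It is undecidable whether, for a given integer weighted automaton, there exists an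
infinite word all of whose path prefixes have nonzero weight. -/
theorem nonuniversality_weighted_automata_undecidable :
    ¬ ComputablePred (fun c : WACode => WAWellFormed c ∧ WAHasAlwaysNonzeroWord c) := by
  exact WAU.undecidable_main
end

section
/- The universality problem for integer weighted automata on infinite words under reverse acceptance is undecidable: the predicate on encoded integer weighted automata ℬ asserting that L_R(ℬ) = A^ω, i.e., that every infinite word over the alphabet is accepted by ℬ under reverse acceptance, is not a computable predicate. -/
/-- The encoded automaton accepts the infinite word `w` under *reverse acceptance*: some
path for `w` has a finite prefix `p = t₀⋯t_k` whose reversal `p^R = t_k⋯t₀` has weight `0`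
(the weights are summed in reversed order), reaching a final state. -/
def WAAcceptsRevCode : WACode → (ℕ → ℕ) → Prop
  | (_, _, ts, q0, fs), w =>
    ∃ π, WAIsPath ts q0 w π ∧
      ∃ k, (∑ j ∈ Finset.range (k + 1), (π (k - j)).2.2.2) = 0 ∧ (π k).2.2.1 ∈ fs

/-- `L_R(ℬ) = A^ω`: every infinite word over the alphabet is accepted under reverse
acceptance. -/
def WAUniversalRev (c : WACode) : Prop :=
  ∀ w : ℕ → ℕ, (∀ i, w i < c.2.1) → WAAcceptsRevCode c w


/-! ### Queue machines -/

/-- One step of a queue machine: read the front letter, append the output at the back. -/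
def QMstep {Q B : Type} (δ : Q → B → Option (Q × List B)) : Q × List B → Option (Q × List B)
  | (_, []) => none
  | (q, a :: v) => (δ q a).map fun r => (r.1, v ++ r.2)

/-- Queue letters simulating a Turing machine. -/
inductive QLet (Γ S : Type) : Type
  | mark : QLet Γ S
  | sym : Γ → QLet Γ S
  | head : S → Γ → QLet Γ S

/-- Control states of the simulating queue machine. -/
inductive QCtl (Γ S : Type) : Type
  | pend : QLet Γ S → QCtl Γ S
  | right : S → Γ → QCtl Γ S

instance {Γ S : Type} [Finite Γ] [Finite S] : Finite (QLet Γ S) := by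
  refine Finite.of_surjective (fun x : Option (Γ ⊕ S × Γ) => match x with
    | none => QLet.mark
    | some (Sum.inl a) => QLet.sym a
    | some (Sum.inr (q, a)) => QLet.head q a) ?_
  rintro (_ | a | ⟨q, a⟩)
  · exact ⟨none, rfl⟩
  · exact ⟨some (Sum.inl a), rfl⟩
  · exact ⟨some (Sum.inr (q, a)), rfl⟩

instance {Γ S : Type} [Finite Γ] [Finite S] : Finite (QCtl Γ S) := by
  refine Finite.of_surjective (fun x : QLet Γ S ⊕ S × Γ => match x with
    | Sum.inl a => QCtl.pend a
    | Sum.inr (q, a) => QCtl.right q a) ?_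
  rintro (a | ⟨q, a⟩)
  · exact ⟨Sum.inl a, rfl⟩
  · exact ⟨Sum.inr (q, a), rfl⟩

section sim
open Turing

variable {Γ Λ : Type} [Inhabited Γ] [Inhabited Λ]

open Classical in
/-- The queue machine simulating a Turing machine. -/
noncomputable def QMofTM (M : TM0.Machine Γ Λ) (S : Set Λ) :
    QCtl Γ S → QLet Γ S → Option (QCtl Γ S × List (QLet Γ S))
  | .pend p, .head q a =>
    match M q.1 a with
    | none => none
    | some (q', st) =>
      if h : q' ∈ S then
        match st with
        | .write b => some (.pend (.head ⟨q', h⟩ b), [p])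
        | .move .left =>
          match p with
          | .sym x => some (.pend (.sym a), [.head ⟨q', h⟩ x])
          | p => some (.pend (.sym a), [p, .head ⟨q', h⟩ default])
        | .move .right => some (.right ⟨q', h⟩ a, [p])
      else none
  | .pend p, c => some (.pend c, [p])
  | .right q a, .sym y => some (.pend (.head q y), [.sym a])
  | .right q a, c => some (.pend c, [.sym a, .head q default])

theorem QMofTM_len (M : TM0.Machine Γ Λ) (S : Set Λ) (q a r) (h : QMofTM M S q a = some r) :
    r.2 ≠ [] ∧ r.2.length ≤ 2 := by
  unfold QMofTM at h
  repeat' split at h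
  all_goals first
    | (cases h; simp)
    | cases h

/-- Configurations as cyclic words. -/
def QRep {Γ S : Type} (W : List (QLet Γ S)) (c : QCtl Γ S × List (QLet Γ S)) : Prop :=
  ∃ p, c.1 = .pend p ∧ c.2 ++ [p] = W

def QLet.plain {Γ S : Type} : QLet Γ S → Prop
  | .head _ _ => False
  | _ => True

theorem QM_rotate (M : TM0.Machine Γ Λ) (S : Set Λ) (A : List (QLet Γ S)) :
    ∀ (B : List (QLet Γ S)) (c), B ≠ [] → (∀ x ∈ A, x.plain) → QRep (A ++ B) c →
      ∃ c', QRep (B ++ A) c' ∧ StateTransition.Reaches (QMstep (QMofTM M S)) c c' := by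
  induction A with
  | nil => intro B c hB _ h; exact ⟨c, by simpa using h, Relation.ReflTransGen.refl⟩
  | cons x A ih =>
    rintro B ⟨_, v⟩ hB hA ⟨p, rfl, h⟩
    have hne : A ++ B ≠ [] := by simp [hB]
    obtain ⟨v', rfl⟩ : ∃ v', v = x :: v' := by
      cases v with
      | nil =>
        simp at h
        exact absurd h.2.2 hB
      | cons y v' =>
        simp at h
        exact ⟨v', by rw [h.1]⟩
    simp at h
    obtain ⟨c', h1, h2⟩ := ih (B ++ [x]) (.pend x, v' ++ [p]) (by simp)
      (fun y hy => hA y (by simp [hy])) ⟨x, rfl, by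
        show (v' ++ [p]) ++ [x] = _
        rw [h, List.append_assoc]⟩
    refine ⟨c', by simpa using h1, Relation.ReflTransGen.head ?_ h2⟩
    have := hA x (by simp)
    cases x <;> simp_all [QMstep, QMofTM, QLet.plain]

/-- Relation between Turing machine configurations and queue configurations. -/
def QTr (S : Set Λ) (c : TM0.Cfg Γ Λ) (d : QCtl Γ S × List (QLet Γ S)) : Prop :=
  ∃ (h : c.q ∈ S) (X Y : List Γ), c.Tape.left = ListBlank.mk X.reverse ∧
    c.Tape.right = ListBlank.mk Y ∧
    QRep (QLet.head ⟨c.q, h⟩ c.Tape.head :: (Y.map QLet.sym ++ QLet.mark :: X.map QLet.sym)) d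

theorem QM_respects (M : TM0.Machine Γ Λ) (S : Set Λ) (hS : TM0.Supports M S) :
    StateTransition.Respects (TM0.step M) (QMstep (QMofTM M S)) (QTr S) := by
  have key : ∀ (d d₁ : QCtl Γ S × List (QLet Γ S)) (c' : TM0.Cfg Γ Λ) (hq : c'.q ∈ S)
      (X Y : List Γ) (A B : List (QLet Γ S)),
      StateTransition.Reaches₁ (QMstep (QMofTM M S)) d d₁ →
      (∀ x ∈ A, x.plain) →
      QRep (A ++ B) d₁ → c'.Tape.left = ListBlank.mk X.reverse →
      c'.Tape.right = ListBlank.mk Y →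
      B ++ A = (QLet.head ⟨c'.q, hq⟩ c'.Tape.head :: (Y.map QLet.sym ++ QLet.mark :: X.map QLet.sym)) →
      B ≠ [] →
      ∃ b₂, QTr S c' b₂ ∧ StateTransition.Reaches₁ (QMstep (QMofTM M S)) d b₂ := by
    intro d d₁ c' hq X Y A B h1 hA hr hl hrt hB hBn
    obtain ⟨e, he, hre⟩ := QM_rotate M S A B d₁ hBn hA hr
    exact ⟨e, ⟨hq, X, Y, hl, hrt, hB ▸ he⟩, Relation.TransGen.trans_left h1 hre⟩
  rintro ⟨q, ⟨a, L, R⟩⟩ ⟨_, v⟩ ⟨hq, X, Y, hL, hR, p, rfl, hv⟩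
  simp only at hL hR hv hq
  subst hL hR
  obtain ⟨v, rfl⟩ : ∃ v', v = QLet.head ⟨q, hq⟩ a :: v' := by
    cases v with
    | nil => simp at hv
    | cons y v' =>
      simp at hv
      exact ⟨v', by rw [hv.1]⟩
  simp only [List.cons_append, List.cons.injEq, true_and] at hv
  have hplain : ∀ (X Y : List Γ), ∀ x ∈ Y.map QLet.sym ++ QLet.mark :: X.map (QLet.sym (S := S)),
      x.plain := by
    intro X Y x hx
    simp at hx
    rcases hx with ⟨_, _, rfl⟩ | rfl | ⟨_, _, rfl⟩ <;> trivial
  rcases hM : M q a with _ | ⟨q', st⟩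
  · simp [TM0.step, hM, QMstep, QMofTM]
  have hq' : q' ∈ S := hS.2 (by rw [hM]; rfl) hq
  simp only [TM0.step, hM, Option.map_some]
  cases st with
  | write b =>
    refine key _ (.pend (.head ⟨q', hq'⟩ b), v ++ [p]) _ hq' X Y _ [.head ⟨q', hq'⟩ b]
      (Relation.TransGen.single ?_) (hplain X Y) ⟨_, rfl, ?_⟩ rfl rfl ?_ (by simp)
    · simp [QMstep, QMofTM, hM, hq']
    · rw [hv]
    · simp
  | move d =>
    cases d with
    | left =>
      rcases List.eq_nil_or_concat X with rfl | ⟨X, x, rfl⟩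
      · have hv' : v ++ [p] = Y.map QLet.sym ++ [QLet.mark] := by simpa using hv
        obtain ⟨rfl, hp⟩ := List.append_inj' hv' rfl
        cases hp
        refine key _ (.pend (.sym a), Y.map QLet.sym ++ [.mark, .head ⟨q', hq'⟩ default])
          _ hq' [] (a :: Y) (Y.map QLet.sym ++ [QLet.mark]) [.head ⟨q', hq'⟩ default, .sym a]
          (Relation.TransGen.single ?_) (hplain [] Y) ⟨_, rfl, ?_⟩ ?_ ?_ ?_ (by simp)
        · simp [QMstep, QMofTM, hM, hq']
        · simp
        · simp [Tape.move]
        · simp [Tape.move]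
        · simp [Tape.move]
      · have hv' : v ++ [p] = (Y.map QLet.sym ++ QLet.mark :: X.map QLet.sym) ++ [QLet.sym x] := by
          simpa using hv
        obtain ⟨rfl, hp⟩ := List.append_inj' hv' rfl
        cases hp
        refine key _ (.pend (.sym a), (Y.map QLet.sym ++ QLet.mark :: X.map QLet.sym) ++
            [.head ⟨q', hq'⟩ x])
          _ hq' X (a :: Y) _ [.head ⟨q', hq'⟩ x, .sym a]
          (Relation.TransGen.single ?_) (hplain X Y) ⟨_, rfl, ?_⟩ ?_ ?_ ?_ (by simp)
        · simp [QMstep, QMofTM, hM, hq']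
        · simp
        · simp [Tape.move]
        · simp [Tape.move]
        · simp [Tape.move]
    | right =>
      have h1 : QMstep (QMofTM M S) (.pend p, QLet.head ⟨q, hq⟩ a :: v) =
          some (.right ⟨q', hq'⟩ a, v ++ [p]) := by
        simp [QMstep, QMofTM, hM, hq']
      rw [hv] at h1
      have h2 : StateTransition.Reaches₁ (QMstep (QMofTM M S))
          (.pend p, QLet.head ⟨q, hq⟩ a :: v) _ := Relation.TransGen.single h1
      cases Y with
      | nil =>
        refine key _ (.pend .mark, X.map QLet.sym ++ [.sym a, .head ⟨q', hq'⟩ default])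
          _ hq' (X ++ [a]) [] ((X ++ [a]).map QLet.sym) [.head ⟨q', hq'⟩ default, .mark]
          (Relation.TransGen.tail h2 ?_) ?_ ⟨_, rfl, ?_⟩ ?_ ?_ ?_ (by simp)
        · simp [QMstep, QMofTM]
        · intro x hx
          refine hplain (X ++ [a]) [] x ?_
          simp at hx ⊢
          exact Or.inr hx
        · simp
        · simp [Tape.move]
        · simp [Tape.move]
        · simp [Tape.move]
      | cons y Y =>
        refine key _ (.pend (.head ⟨q', hq'⟩ y), (Y.map QLet.sym ++ QLet.mark :: X.map QLet.sym) ++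
            [.sym a])
          _ hq' (X ++ [a]) Y (Y.map QLet.sym ++ QLet.mark :: (X ++ [a]).map QLet.sym)
          [.head ⟨q', hq'⟩ y]
          (Relation.TransGen.tail h2 ?_) (hplain _ _) ⟨_, rfl, ?_⟩ ?_ ?_ ?_ (by simp)
        · simp [QMstep, QMofTM]
        · simp
        · simp [Tape.move]
        · simp [Tape.move]
        · simp [Tape.move]

theorem QM_halts_iff (M : TM0.Machine Γ Λ) (S : Set Λ) (hS : TM0.Supports M S) (a t : Γ) (n : ℕ) :
    (StateTransition.eval (QMstep (QMofTM M S))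
      (.pend (.head ⟨default, hS.1⟩ a), List.replicate n (.sym t) ++ [.mark])).Dom ↔
    (TM0.eval M (a :: List.replicate n t)).Dom := by
  obtain ⟨c, hc, hr⟩ := QM_rotate M S (List.replicate n (.sym t) ++ [.mark])
    [.head ⟨default, hS.1⟩ a]
    (.pend (.head ⟨default, hS.1⟩ a), List.replicate n (.sym t) ++ [.mark]) (by simp)
    (by
      intro x hx
      simp at hx
      rcases hx with ⟨_, rfl⟩ | rfl <;> trivial) ⟨_, rfl, rfl⟩
  rw [StateTransition.reaches_eval hr]
  have : QTr S (TM0.init (a :: List.replicate n t)) c := by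
    refine ⟨hS.1, [], List.replicate n t, rfl, rfl, ?_⟩
    convert hc using 1
    simp [TM0.init, Tape.mk₁, Tape.mk₂, Tape.mk']
  exact StateTransition.tr_eval_dom (QM_respects M S hS) this

end sim

/-! ### An undecidable halting problem for a fixed Turing machine with unary input -/

section base
open Turing Turing.PartrecToTM2

theorem trNat_unary (n : ℕ) : trNat (2 ^ n - 1) = List.replicate n Γ'.bit1 := by
  induction n with
  | zero => simp
  | succ n ih =>
    have h : 2 ^ (n + 1) - 1 = 2 * (2 ^ n - 1) + 1 := by
      have := Nat.one_le_two_pow (n := n)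
      rw [pow_succ]; omega
    have h2 : ∀ m : ℕ, trNat (2 * m + 1) = Γ'.bit1 :: trNat m := by
      intro m
      have : ((2 * m + 1 : ℕ) : Num) = Num.bit1 (m : Num) := by
        rw [← Num.bit1_of_bit1]
        push_cast
        ring
      unfold trNat
      rw [this]
      cases (m : Num) <;> rfl
    rw [h, h2, ih, List.replicate_succ]

open Nat.Partrec in
theorem exists_code_unary : ∃ c : ToPartrec.Code,
    ¬ ComputablePred (fun n : ℕ => (c.eval [2 ^ n - 1]).Dom) := by
  let g : ℕ →. ℕ := fun m => (Nat.rfind fun n => Part.some (decide (2 ^ n = m + 1))).bind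
    fun n => Code.eval (Denumerable.ofNat Code n) 0
  have hpow : Primrec₂ (fun a b : ℕ => a ^ b) := Primrec₂.unpaired'.1 Nat.Primrec.pow
  have hg : Partrec g := by
    refine Partrec.bind (Partrec.rfind ?_) ?_
    · refine Computable₂.partrec₂ (f := fun m n : ℕ => decide (2 ^ n = m + 1)) ?_
      refine Primrec.to_comp (f := fun p : ℕ × ℕ => decide (2 ^ p.2 = p.1 + 1)) ?_
      exact Primrec.eq.decide.comp (hpow.comp (Primrec.const 2) Primrec.snd) (Primrec.succ.comp Primrec.fst)
    · exact Code.eval_part.comp ((Computable.ofNat Code).comp Computable.snd) (Computable.const 0)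
  have hgv : ∀ n, g (2 ^ n - 1) = Code.eval (Denumerable.ofNat Code n) 0 := by
    intro n
    have : (Nat.rfind fun k => Part.some (decide (2 ^ k = 2 ^ n - 1 + 1))) = Part.some n := by
      rw [Nat.sub_add_cancel Nat.one_le_two_pow]
      rw [Part.eq_some_iff]
      refine Nat.mem_rfind.2 ⟨by simp, fun {m} hm => ?_⟩
      simp
      omega
    simp only [g]
    rw [this, Part.bind_some]
  obtain ⟨c, hc⟩ := ToPartrec.Code.exists_code (Nat.Partrec'.part_iff₁.2 hg)
  refine ⟨c, fun h => ?_⟩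
  refine ComputablePred.halting_problem 0 ?_
  refine ComputablePred.computable_of_manyOneReducible
    (q := fun n : ℕ => (c.eval [2 ^ n - 1]).Dom) ⟨Encodable.encode, Computable.encode, fun a => ?_⟩ h
  have := hc ((2 ^ (Encodable.encode a) - 1) ::ᵥ List.Vector.nil)
  have h2 : ((2 ^ (Encodable.encode a) - 1) ::ᵥ List.Vector.nil).1 = [2 ^ (Encodable.encode a) - 1] := rfl
  rw [h2] at this
  show (a.eval 0).Dom ↔ (c.eval [2 ^ (Encodable.encode a) - 1]).Dom
  rw [this, List.Vector.head_cons, hgv, Denumerable.ofNat_encode]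
  rfl

instance : Finite K' := by
  refine Finite.of_surjective (fun x : Bool × Bool => match x with
    | (true, true) => K'.main
    | (true, false) => K'.rev
    | (false, true) => K'.aux
    | (false, false) => K'.stack) ?_
  rintro (_ | _ | _ | _)
  · exact ⟨(true, true), rfl⟩
  · exact ⟨(true, false), rfl⟩
  · exact ⟨(false, true), rfl⟩
  · exact ⟨(false, false), rfl⟩

theorem exists_TM_unary : ∃ (Γ Λ : Type) (_ : Inhabited Γ) (_ : Inhabited Λ) (_ : Finite Γ)
    (M : TM0.Machine Γ Λ) (S : Set Λ) (_ : S.Finite) (_ : TM0.Supports M S) (a t : Γ),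
    ¬ ComputablePred (fun n : ℕ => (TM0.eval M (a :: List.replicate n t)).Dom) := by
  obtain ⟨c, hc⟩ := exists_code_unary
  let i1 : Inhabited Λ' := ⟨trNormal c Cont'.halt⟩
  have s1 := tr_supports c Cont'.halt
  have s2 := TM2to1.tr_supports tr s1
  have s3 := TM1to0.tr_supports (TM2to1.tr tr) s2
  have : Fintype K' := Fintype.ofFinite K'
  refine ⟨TM2to1.Γ' K' (fun _ => Γ'), _, inferInstance, inferInstance, inferInstance,
    TM1to0.tr (TM2to1.tr tr), _, Finset.finite_toSet _, s3,
    (true, Function.update (fun _ => none) K'.main (some Γ'.cons)),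
    (false, Function.update (fun _ => none) K'.main (some Γ'.bit1)), ?_⟩
  convert hc using 3 with n
  have e1 : ((true, Function.update (fun _ => none) K'.main (some Γ'.cons)) ::
      List.replicate n (false, Function.update (fun _ => none) K'.main (some Γ'.bit1)) :
        List (TM2to1.Γ' K' (fun _ => Γ'))) = TM2to1.trInit K'.main (trList [2 ^ n - 1]) := by
    have : (trList [2 ^ n - 1]).reverse = Γ'.cons :: List.replicate n Γ'.bit1 := by
      simp [trNat_unary]
    unfold TM2to1.trInit
    rw [this]
    refine congrArg (List.cons _) ?_
    clear this
    induction n with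
    | zero => rfl
    | succ n ih => exact congrArg (List.cons _) ih
  rw [e1, TM1to0.tr_eval]
  refine (TM2to1.tr_eval_dom (M := tr) K'.main (trList [2 ^ n - 1])).trans ?_
  have e2 : TM2.init K'.main (trList [2 ^ n - 1]) = init c [2 ^ n - 1] := by
    unfold TM2.init init
    congr 1
    funext k
    cases k <;> rfl
  unfold TM2.eval
  rw [e2]
  have := tr_eval c [2 ^ n - 1]
  rw [this]
  rfl

end base

/-! ### The weighted automaton of a queue machine -/

/-- States of the weighted automaton. -/
inductive WSt (Q B : Type) : Type
  | init : WSt Q B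
  | run : Q → WSt Q B
  | chk : WSt Q B
  | wait : B → WSt Q B
  | fin : WSt Q B
  | dec : WSt Q B

instance {Q B : Type} [Finite Q] [Finite B] : Finite (WSt Q B) := by
  refine Finite.of_surjective (fun x : (Bool × Bool) ⊕ Q ⊕ B => match x with
    | Sum.inl (true, true) => WSt.init
    | Sum.inl (true, false) => WSt.chk
    | Sum.inl (false, true) => WSt.fin
    | Sum.inl (false, false) => WSt.dec
    | Sum.inr (Sum.inl q) => WSt.run q
    | Sum.inr (Sum.inr b) => WSt.wait b) ?_
  rintro (_ | q | _ | b | _ | _)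
  · exact ⟨Sum.inl (true, true), rfl⟩
  · exact ⟨Sum.inr (Sum.inl q), rfl⟩
  · exact ⟨Sum.inl (true, false), rfl⟩
  · exact ⟨Sum.inr (Sum.inr b), rfl⟩
  · exact ⟨Sum.inl (false, true), rfl⟩
  · exact ⟨Sum.inl (false, false), rfl⟩

section aut

variable {Q B : Type}

/-- The transitions that do not depend on the input. -/
inductive WTr (δ : Q → B → Option (Q × List B)) (t : B) : WSt Q B → B → WSt Q B → ℤ → Prop
  | run (q a q' o) : δ q a = some (q', o) →
      WTr δ t (.run q) a (.run q') ((o.length : ℤ) - 1)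
  | guess (q a q' o i b) : δ q a = some (q', o) → o[i]? = some b →
      WTr δ t (.run q) a (.wait b) (i : ℕ)
  | halt (q a) : δ q a = none → WTr δ t (.run q) a .dec 0
  | chkLoop (a) : WTr δ t .chk a .chk (-1)
  | chkErr (a) : a ≠ t → WTr δ t .chk a .dec (-1)
  | waitLoop (b a) : WTr δ t (.wait b) a (.wait b) (-1)
  | waitErr (b a) : a ≠ b → WTr δ t (.wait b) a .fin 0
  | fin (a) : WTr δ t .fin a .fin 0
  | dec (a) : WTr δ t .dec a .dec (-1)

/-- Targets of the first transition. -/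
def WIni (q₀ : Q) (d : B) (s : WSt Q B) : Prop := s = .run q₀ ∨ s = .chk ∨ s = .wait d

/-- All transitions, for input `n`. -/
def WTn (δ : Q → B → Option (Q × List B)) (t : B) (q₀ : Q) (d : B) (n : ℕ)
    (s : WSt Q B) (a : B) (s' : WSt Q B) (z : ℤ) : Prop :=
  WTr δ t s a s' z ∨ (s = .init ∧ WIni q₀ d s' ∧ z = n)

/-- Reachability of a state with a weight after reading `k` letters. -/
inductive WRch {St B : Type} (T : St → B → St → ℤ → Prop) (i : St) (w : ℕ → B) :
    ℕ → St → ℤ → Prop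
  | zero : WRch T i w 0 i 0
  | succ (k s z s' z') : WRch T i w k s z → T s (w k) s' z' → WRch T i w (k + 1) s' (z + z')

theorem WRch.step {St B : Type} {T : St → B → St → ℤ → Prop} {i : St} {w : ℕ → B} {k s z s' z'}
    (h : WRch T i w k s z) (y : ℤ) (h' : T s (w k) s' y) (hy : z + y = z') :
    WRch T i w (k + 1) s' z' := hy ▸ WRch.succ k s z s' y h h'

variable (δ : Q → B → Option (Q × List B)) (t : B) (q₀ : Q) (d : B) (n : ℕ)

/-- Abstract acceptance. -/
def WAcc (w : ℕ → B) : Prop :=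
  ∃ k s, (s = WSt.fin ∨ s = WSt.dec) ∧ WRch (WTn δ t q₀ d n) .init w k s 0

variable {δ t q₀ d n}

theorem acc_dec {w : ℕ → B} (c : ℕ) : ∀ k, WRch (WTn δ t q₀ d n) .init w k .dec c →
    WAcc δ t q₀ d n w := by
  induction c with
  | zero => intro k h; exact ⟨k, _, Or.inr rfl, by simpa using h⟩
  | succ c ih =>
    intro k h
    exact ih (k + 1) (h.step (-1) (Or.inl (.dec _)) (by push_cast; ring))

theorem acc_wait {w : ℕ → B} {b : B} (c : ℕ) : ∀ k, WRch (WTn δ t q₀ d n) .init w k (.wait b) c →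
    w (k + c) ≠ b → WAcc δ t q₀ d n w := by
  induction c with
  | zero =>
    intro k h hb
    exact ⟨k + 1, _, Or.inl rfl, h.step 0 (Or.inl (.waitErr _ _ (by simpa using hb))) (by simp)⟩
  | succ c ih =>
    intro k h hb
    refine ih (k + 1) (h.step (-1) (Or.inl (.waitLoop _ _)) (by push_cast; ring)) ?_
    rwa [show k + 1 + c = k + (c + 1) by ring]

theorem rch_chk {w : ℕ → B} (j : ℕ) : WRch (WTn δ t q₀ d n) .init w (1 + j) .chk (n - j) := by
  induction j with
  | zero =>
    exact WRch.zero.step n (Or.inr ⟨rfl, Or.inr (Or.inl rfl), rfl⟩) (by simp)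
  | succ j ih => exact ih.step (-1) (Or.inl (.chkLoop _)) (by push_cast; ring)

theorem acc_of_halts (hδ : ∀ q a q' o, δ q a = some (q', o) → o ≠ [])
    (h : (StateTransition.eval (QMstep δ) (q₀, List.replicate n t ++ [d])).Dom) (w : ℕ → B) :
    WAcc δ t q₀ d n w := by
  by_contra hw
  obtain ⟨hr, hf⟩ := StateTransition.mem_eval.1 (Part.get_mem h)
  have key : ∀ c, StateTransition.Reaches (QMstep δ) (q₀, List.replicate n t ++ [d]) c →
      ∃ k, WRch (WTn δ t q₀ d n) .init w (k + 1) (.run c.1) ((c.2.length : ℤ) - 1) ∧ c.2 ≠ [] ∧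
        ∀ i < c.2.length, c.2[i]? = some (w (k + 1 + i)) := by
    intro c hc
    induction hc with
    | refl =>
      refine ⟨0, WRch.zero.step n (Or.inr ⟨rfl, Or.inl rfl, rfl⟩) (by simp), by simp, ?_⟩
      intro i hi
      simp at hi
      rcases Nat.lt_or_eq_of_le hi with hi | rfl
      · rw [List.getElem?_append_left (by simpa using hi), List.getElem?_replicate, if_pos hi]
        by_contra hne
        have hne : w (1 + i) ≠ t := fun h => hne (by simp [h])
        refine hw (acc_dec (n - 1 - i) (1 + i + 1)
          ((rch_chk i).step (-1) (Or.inl (.chkErr _ hne)) ?_))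
        omega
      · simp
        by_contra hne
        refine hw (acc_wait i 1 (WRch.zero.step i (Or.inr ⟨rfl, Or.inr (Or.inr rfl), rfl⟩) (by simp)) ?_)
        exact fun h => hne h.symm
    | @tail b c _ hbc ih =>
      obtain ⟨k, h1, h2, h3⟩ := ih
      obtain ⟨q, v⟩ := b
      cases v with
      | nil => exact absurd rfl h2
      | cons a v =>
        have ha : a = w (k + 1) := by simpa using h3 0 (by simp)
        simp only [QMstep, Option.mem_def, Option.map_eq_some_iff] at hbc
        obtain ⟨⟨q', o⟩, ho, rfl⟩ := hbc
        have hne := hδ _ _ _ _ ho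
        refine ⟨k + 1, h1.step _ (Or.inl (.run _ _ _ o (ha ▸ ho))) ?_, by simp [hne], ?_⟩
        · simp only [List.length_append, List.length_cons]; push_cast; ring
        · intro i hi
          by_cases hiv : i < v.length
          · have := h3 (i + 1) (by simpa using hiv)
            simp only [List.getElem?_cons_succ] at this
            rw [List.getElem?_append_left hiv, this]
            congr 2; omega
          · push Not at hiv
            obtain ⟨j, rfl⟩ := Nat.exists_eq_add_of_le hiv
            simp only [List.length_append] at hi
            have hj : j < o.length := by omega
            simp only [List.getElem?_append_right hiv, Nat.add_sub_cancel_left,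
              List.getElem?_eq_getElem hj]
            by_contra hbad
            refine hw (acc_wait (b := o[j]) (v.length + j) (k + 1 + 1) (h1.step j (Or.inl
              (.guess _ _ _ o j _ (ha ▸ ho) (List.getElem?_eq_getElem hj))) ?_) ?_)
            · simp only [List.length_cons]; push_cast; ring
            · intro hh
              exact hbad (by rw [hh])
  obtain ⟨k, h1, h2, h3⟩ := key _ hr
  generalize (StateTransition.eval (QMstep δ) (q₀, List.replicate n t ++ [d])).get h = c at *
  obtain ⟨q, v⟩ := c
  cases v with
  | nil => exact absurd rfl h2
  | cons a v =>
    have ha : a = w (k + 1) := by simpa using h3 0 (by simp)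
    simp only [QMstep, Option.map_eq_none_iff] at hf
    refine hw (acc_dec v.length (k + 1 + 1) (h1.step 0 (Or.inl (.halt _ _ (ha ▸ hf))) ?_))
    simp

/-- The invariant along the diverging run. -/
def WInv (c : ℕ → Q × List B) (s : ℕ → B) (n : ℕ) : ℕ → WSt Q B → ℤ → Prop
  | 0, st, z => st = .init ∧ z = 0
  | _ + 1, .init, _ => False
  | k + 1, .run q, z => q = (c k).1 ∧ z = ((c k).2.length : ℤ) - 1
  | k + 1, .chk, z => z = (n : ℤ) - k
  | k + 1, .wait b, z => ∀ m : ℕ, z = m → s (k + m) = b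
  | _ + 1, .fin, z => z ≠ 0
  | _ + 1, .dec, z => z < 0

theorem exists_not_acc
    (h : ¬ (StateTransition.eval (QMstep δ) (q₀, List.replicate n t ++ [d])).Dom) :
    ∃ w, ¬ WAcc δ t q₀ d n w := by
  let c : ℕ → Q × List B := fun k =>
    Nat.rec (q₀, List.replicate n t ++ [d]) (fun _ x => (QMstep δ x).getD x) k
  have c0 : c 0 = (q₀, List.replicate n t ++ [d]) := rfl
  have hreach : ∀ k, StateTransition.Reaches (QMstep δ) (q₀, List.replicate n t ++ [d]) (c k) ∧
      QMstep δ (c k) = some (c (k + 1)) := by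
    have aux : ∀ k, StateTransition.Reaches (QMstep δ) (q₀, List.replicate n t ++ [d]) (c k) →
        QMstep δ (c k) = some (c (k + 1)) := by
      intro k hk
      rcases e : QMstep δ (c k) with _ | x
      · exact absurd (Part.dom_iff_mem.2 ⟨_, StateTransition.mem_eval.2 ⟨hk, e⟩⟩) h
      · show some x = some ((QMstep δ (c k)).getD (c k))
        rw [e]; rfl
    intro k
    induction k with
    | zero => exact ⟨Relation.ReflTransGen.refl, aux 0 Relation.ReflTransGen.refl⟩
    | succ k ih =>
      have : StateTransition.Reaches (QMstep δ) (q₀, List.replicate n t ++ [d]) (c (k + 1)) :=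
        Relation.ReflTransGen.tail ih.1 ih.2
      exact ⟨this, aux (k + 1) this⟩
  let s : ℕ → B := fun k => (c k).2.headD d
  have hs : ∀ k, ∃ v o, (c k).2 = s k :: v ∧ δ (c k).1 (s k) = some ((c (k + 1)).1, o) ∧
      (c (k + 1)).2 = v ++ o := by
    intro k
    have h1 := (hreach k).2
    rcases e : c k with ⟨q, _ | ⟨a, v⟩⟩
    · rw [e] at h1; simp [QMstep] at h1
    · rw [e] at h1
      have ha : s k = a := by simp [s, e]
      simp only [QMstep, Option.map_eq_some_iff] at h1
      obtain ⟨⟨q', o⟩, ho, h2⟩ := h1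
      refine ⟨v, o, by rw [ha], ?_, ?_⟩
      · rw [ha, ← h2]; exact ho
      · rw [← h2]
  have hidx : ∀ i k, i < (c k).2.length → (c k).2[i]? = some (s (k + i)) := by
    intro i
    induction i with
    | zero =>
      intro k _
      obtain ⟨v, o, h1, -, -⟩ := hs k
      simp [h1]
    | succ i ih =>
      intro k hk
      obtain ⟨v, o, h1, -, h3⟩ := hs k
      rw [h1] at hk ⊢
      have hi : i < v.length := by simpa using hk
      have := ih (k + 1) (by rw [h3, List.length_append]; exact Nat.lt_add_right _ hi)
      rw [h3, List.getElem?_append_left hi] at this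
      rw [List.getElem?_cons_succ, this, Nat.add_assoc, Nat.add_comm 1 i]
  have hidx' : ∀ i k b, (c k).2[i]? = some b → s (k + i) = b := by
    intro i k b hb
    have hi : i < (c k).2.length := (List.getElem?_eq_some_iff.1 hb).1
    have := hidx i k hi
    rw [hb] at this
    exact (Option.some.inj this).symm
  let w : ℕ → B := fun k => Nat.casesOn k d s
  have hinv : ∀ k st z, WRch (WTn δ t q₀ d n) .init w k st z → WInv c s n k st z := by
    intro k st z hr
    induction hr with
    | zero => exact ⟨rfl, rfl⟩
    | succ k st z st' z' _ htr ih =>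
      cases k with
      | zero =>
        obtain ⟨rfl, rfl⟩ := ih
        rcases htr with htr | ⟨-, htr, rfl⟩
        · cases htr
        · rcases htr with rfl | rfl | rfl
          · simp [WInv, c0]
          · simp [WInv]
          · intro m hm
            have hm : n = m := by simpa using hm
            subst hm
            exact hidx' _ _ _ (by simp [c0])
      | succ k =>
        have hwk : w (k + 1) = s k := rfl
        rw [hwk] at htr
        obtain ⟨v, o, h1, h2, h3⟩ := hs k
        rcases htr with htr | ⟨rfl, -, -⟩
        · cases htr with
          | run q _ q' o' ho =>
            obtain ⟨rfl, rfl⟩ := ih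
            rw [h2] at ho
            cases ho
            refine ⟨rfl, ?_⟩
            rw [h1, h3]
            simp only [List.length_append, List.length_cons]; push_cast; ring
          | guess q _ q' o' i b ho hi =>
            obtain ⟨rfl, rfl⟩ := ih
            rw [h2] at ho
            cases ho
            intro m hm
            have hm : m = v.length + i := by
              rw [h1] at hm
              simp only [List.length_cons] at hm
              push_cast at hm
              omega
            subst hm
            refine hidx' _ _ _ ?_
            rw [h3, List.getElem?_append_right (by omega), Nat.add_sub_cancel_left, hi]
          | halt q _ ho =>
            obtain ⟨rfl, rfl⟩ := ih
            rw [h2] at ho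
            cases ho
          | chkLoop =>
            simp only [WInv] at ih ⊢
            push_cast; linarith
          | chkErr _ hne =>
            simp only [WInv] at ih ⊢
            have : n ≤ k := by
              by_contra hlt
              push Not at hlt
              refine hne ?_
              have := hidx' k 0 t (by
                rw [c0]
                simp only
                rw [List.getElem?_append_left (by simpa using hlt), List.getElem?_replicate,
                  if_pos hlt])
              simpa using this
            omega
          | waitLoop b _ =>
            intro m hm
            have := ih (m + 1) (by push_cast; linarith)
            rwa [show k + 1 + m = k + (m + 1) by ring]
          | waitErr b _ hne =>
            simp only [WInv] at ih ⊢
            intro h0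
            exact hne (ih 0 (by simpa using h0))
          | fin => simpa [WInv] using ih
          | dec =>
            simp only [WInv] at ih ⊢
            omega
        · exact ih.elim
  refine ⟨w, ?_⟩
  rintro ⟨k, st, hst, hr⟩
  have := hinv _ _ _ hr
  rcases hst with rfl | rfl <;> cases k <;> simp [WInv] at this

end aut

/-! ### Encoding -/

section enc

theorem rch_path {St B : Type} {T : St → B → St → ℤ → Prop} {i : St} {w : ℕ → B} {k s z}
    (h : WRch T i w k s z) : ∃ (S : ℕ → St) (Z : ℕ → ℤ), S 0 = i ∧ S k = s ∧
      (∑ j ∈ Finset.range k, Z j) = z ∧ ∀ j < k, T (S j) (w j) (S (j + 1)) (Z j) := by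
  induction h with
  | zero => exact ⟨fun _ => i, fun _ => 0, rfl, rfl, by simp, by simp⟩
  | succ k s z s' z' _ ht ih =>
    obtain ⟨S, Z, h0, hk, hz, hT⟩ := ih
    refine ⟨fun j => if j ≤ k then S j else s', fun j => if j < k then Z j else z',
      by simp [h0], by simp, ?_, ?_⟩
    · rw [Finset.sum_range_succ]
      simp only [lt_irrefl, if_false]
      rw [← hz]
      congr 1
      exact Finset.sum_congr rfl fun j hj => if_pos (Finset.mem_range.1 hj)
    · intro j hj
      rcases Nat.lt_or_eq_of_le (Nat.lt_succ_iff.1 hj) with hj | rfl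
      · simpa [hj, hj.le, Nat.succ_le_of_lt hj] using hT j hj
      · simpa [hk] using ht

theorem accepts_iff {St B : Type} {N m : ℕ} (e : St ≃ Fin N) (f : B ≃ Fin m)
    {T : St → B → St → ℤ → Prop} (hc : ∀ s a, ∃ s' z, T s a s' z)
    (ts : List (ℕ × ℕ × ℕ × ℤ))
    (hts : ∀ x, x ∈ ts ↔ ∃ s a s' z, T s a s' z ∧ x = ((e s : ℕ), (f a : ℕ), (e s' : ℕ), z))
    (i : St) (F : List ℕ) (w : ℕ → B) :
    WAAcceptsRevCode (N, m, ts, (e i : ℕ), F) (fun j => (f (w j) : ℕ)) ↔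
      ∃ k s, (e s : ℕ) ∈ F ∧ WRch T i w (k + 1) s 0 := by
  constructor
  · rintro ⟨π, ⟨h1, h2, h3, h4⟩, k, hk, hF⟩
    have key : ∀ k, ∃ s, (π k).1 = (e s : ℕ) ∧
        WRch T i w k s (∑ j ∈ Finset.range k, (π j).2.2.2) := by
      intro k
      induction k with
      | zero => exact ⟨i, h2, by simpa using WRch.zero⟩
      | succ k ih =>
        obtain ⟨s, hs, hr⟩ := ih
        obtain ⟨s1, a, s', z, hT, hx⟩ := (hts _).1 (h1 k)
        have h3k := h3 k
        have h4k := h4 k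
        rw [hx] at hs h3k h4k
        have e1 : s1 = s := e.injective (Fin.ext hs)
        have e2 : a = w k := f.injective (Fin.ext h4k)
        subst e1 e2
        refine ⟨s', h3k.symm, ?_⟩
        rw [Finset.sum_range_succ]
        refine hr.step _ hT ?_
        rw [hx]
    obtain ⟨s, hs, hr⟩ := key (k + 1)
    refine ⟨k, s, ?_, ?_⟩
    · rw [← hs, ← h3 k]; exact hF
    · have := Finset.sum_range_reflect (fun j => (π j).2.2.2) (k + 1)
      simp only [Nat.add_sub_cancel] at this
      rw [hk] at this
      rwa [← this] at hr
  · rintro ⟨k, s, hF, hr⟩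
    obtain ⟨S, Z, h0, hk, hz, hT⟩ := rch_path hr
    choose nx wt hnx using hc
    let P : ℕ → St := fun j => Nat.rec i
      (fun j x => if j < k + 1 then S (j + 1) else nx x (w j)) j
    have hP : ∀ j, P (j + 1) = if j < k + 1 then S (j + 1) else nx (P j) (w j) := fun j => rfl
    let Y : ℕ → ℤ := fun j => if j < k + 1 then Z j else wt (P j) (w j)
    have hPS : ∀ j ≤ k + 1, P j = S j := by
      intro j hj
      cases j with
      | zero => exact h0.symm
      | succ j => rw [hP, if_pos (Nat.lt_of_succ_le hj)]
    have hPT : ∀ j, T (P j) (w j) (P (j + 1)) (Y j) := by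
      intro j
      by_cases hj : j < k + 1
      · rw [hPS j hj.le, hPS (j + 1) hj]
        simpa only [Y, if_pos hj] using hT j hj
      · rw [hP, if_neg hj]
        simpa only [Y, if_neg hj] using hnx (P j) (w j)
    refine ⟨fun j => ((e (P j) : ℕ), (f (w j) : ℕ), (e (P (j + 1)) : ℕ), Y j),
      ⟨fun j => (hts _).2 ⟨_, _, _, _, hPT j, rfl⟩, rfl, fun j => rfl, fun j => rfl⟩, k, ?_, ?_⟩
    · have := Finset.sum_range_reflect Y (k + 1)
      simp only [Nat.add_sub_cancel] at this
      rw [this, ← hz]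
      exact Finset.sum_congr rfl fun j hj => if_pos (Finset.mem_range.1 hj)
    · show (e (P (k + 1)) : ℕ) ∈ F
      rw [hPS _ le_rfl, hk]; exact hF

theorem wtn_complete {Q B : Type} (δ : Q → B → Option (Q × List B)) (t : B) (q₀ : Q) (d : B)
    (n : ℕ) (s : WSt Q B) (a : B) : ∃ s' z, WTn δ t q₀ d n s a s' z := by
  cases s with
  | init => exact ⟨_, _, Or.inr ⟨rfl, Or.inl rfl, rfl⟩⟩
  | run q =>
    rcases h : δ q a with _ | ⟨q', o⟩
    · exact ⟨_, _, Or.inl (.halt _ _ h)⟩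
    · exact ⟨_, _, Or.inl (.run _ _ _ _ h)⟩
  | chk => exact ⟨_, _, Or.inl (.chkLoop _)⟩
  | wait b => exact ⟨_, _, Or.inl (.waitLoop _ _)⟩
  | fin => exact ⟨_, _, Or.inl (.fin _)⟩
  | dec => exact ⟨_, _, Or.inl (.dec _)⟩

theorem wtr_weight {Q B : Type} {δ : Q → B → Option (Q × List B)} {t : B}
    (hδ : ∀ q a q' o, δ q a = some (q', o) → o.length ≤ 2) {s a s' z}
    (h : WTr δ t s a s' z) : z ∈ Set.Icc (-1 : ℤ) 2 := by
  cases h with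
  | run q _ q' o ho => have := hδ _ _ _ _ ho; constructor <;> omega
  | guess q _ q' o i b ho hi =>
    have := hδ _ _ _ _ ho
    have := (List.getElem?_eq_some_iff.1 hi).1
    constructor <;> omega
  | _ => constructor <;> omega

theorem wtr_list {Q B : Type} [Finite Q] [Finite B] {N m : ℕ} (e : WSt Q B ≃ Fin N)
    (f : B ≃ Fin m) {δ : Q → B → Option (Q × List B)} (t : B)
    (hδ : ∀ q a q' o, δ q a = some (q', o) → o.length ≤ 2) :
    ∃ l : List (ℕ × ℕ × ℕ × ℤ), ∀ x, x ∈ l ↔ ∃ s a s' z, WTr δ t s a s' z ∧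
      x = ((e s : ℕ), (f a : ℕ), (e s' : ℕ), z) := by
  have hfin : {x : ℕ × ℕ × ℕ × ℤ | ∃ s a s' z, WTr δ t s a s' z ∧
      x = ((e s : ℕ), (f a : ℕ), (e s' : ℕ), z)}.Finite := by
    refine Set.Finite.subset ((Set.finite_Iio N).prod ((Set.finite_Iio m).prod
      ((Set.finite_Iio N).prod (Set.finite_Icc (-1 : ℤ) 2)))) ?_
    rintro x ⟨s, a, s', z, h, rfl⟩
    exact ⟨(e s).2, (f a).2, (e s').2, wtr_weight hδ h⟩
  exact ⟨hfin.toFinset.toList, fun x => by simp⟩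

theorem wini_list {Q B : Type} [Finite Q] [Finite B] {N m : ℕ} (e : WSt Q B ≃ Fin N)
    (f : B ≃ Fin m) (q₀ : Q) (d : B) :
    ∃ l : List (ℕ × ℕ × ℕ), ∀ x, x ∈ l ↔ ∃ a s', WIni q₀ d s' ∧
      x = ((e .init : ℕ), (f a : ℕ), (e s' : ℕ)) := by
  have hfin : {x : ℕ × ℕ × ℕ | ∃ a s', WIni q₀ d s' ∧
      x = ((e .init : ℕ), (f a : ℕ), (e s' : ℕ))}.Finite := by
    refine Set.Finite.subset ((Set.finite_Iio N).prod ((Set.finite_Iio m).prod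
      (Set.finite_Iio N))) ?_
    rintro x ⟨a, s', h, rfl⟩
    exact ⟨(e .init).2, (f a).2, (e s').2⟩
  exact ⟨hfin.toFinset.toList, fun x => by simp⟩

theorem primrec_intCast : Primrec (fun n : ℕ => (n : ℤ)) := by
  refine Primrec.encode_iff.1 ?_
  have : (fun n : ℕ => Encodable.encode (n : ℤ)) = fun n => 2 * n := by
    funext n
    rfl
  rw [this]
  exact Primrec.nat_mul.comp (Primrec.const 2) Primrec.id

theorem reduction {Q B : Type} [Finite Q] [Finite B] (δ : Q → B → Option (Q × List B))
    (hδ : ∀ q a q' o, δ q a = some (q', o) → o ≠ [] ∧ o.length ≤ 2) (t : B) (q₀ : Q) (d : B) :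
    ∃ c : ℕ → WACode, Computable c ∧ ∀ n, (WAWellFormed (c n) ∧ WAUniversalRev (c n)) ↔
      (StateTransition.eval (QMstep δ) (q₀, List.replicate n t ++ [d])).Dom := by
  obtain ⟨N, ⟨e⟩⟩ := Finite.exists_equiv_fin (WSt Q B)
  obtain ⟨m, ⟨f⟩⟩ := Finite.exists_equiv_fin B
  obtain ⟨l1, hl1⟩ := wtr_list e f t (fun q a q' o h => (hδ q a q' o h).2)
  obtain ⟨l2, hl2⟩ := wini_list e f q₀ d
  let ts : ℕ → List (ℕ × ℕ × ℕ × ℤ) := fun n =>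
    l1 ++ l2.map fun x => (x.1, x.2.1, x.2.2, (n : ℤ))
  have hts : ∀ n x, x ∈ ts n ↔ ∃ s a s' z, WTn δ t q₀ d n s a s' z ∧
      x = ((e s : ℕ), (f a : ℕ), (e s' : ℕ), z) := by
    intro n x
    simp only [ts, List.mem_append, List.mem_map, hl1, hl2]
    constructor
    · rintro (⟨s, a, s', z, h, rfl⟩ | ⟨_, ⟨a, s', h, rfl⟩, rfl⟩)
      · exact ⟨s, a, s', z, Or.inl h, rfl⟩
      · exact ⟨_, a, s', n, Or.inr ⟨rfl, h, rfl⟩, rfl⟩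
    · rintro ⟨s, a, s', z, h | ⟨rfl, h, rfl⟩, rfl⟩
      · exact Or.inl ⟨s, a, s', z, h, rfl⟩
      · exact Or.inr ⟨_, ⟨a, s', h, rfl⟩, rfl⟩
  refine ⟨fun n => (N, m, ts n, (e .init : ℕ), [(e .fin : ℕ), (e .dec : ℕ)]), ?_, ?_⟩
  · refine Primrec.to_comp ?_
    refine (Primrec.const N).pair ((Primrec.const m).pair (Primrec.pair ?_ (Primrec.const _)))
    refine Primrec.list_append.comp (Primrec.const l1) (Primrec.list_map (Primrec.const l2) ?_)
    refine Primrec.pair (Primrec.fst.comp Primrec.snd) (Primrec.pair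
      (Primrec.fst.comp (Primrec.snd.comp Primrec.snd)) (Primrec.pair
      (Primrec.snd.comp (Primrec.snd.comp Primrec.snd)) (primrec_intCast.comp Primrec.fst)))
  · intro n
    have hacc : ∀ w : ℕ → B, WAAcceptsRevCode
        (N, m, ts n, (e .init : ℕ), [(e .fin : ℕ), (e .dec : ℕ)]) (fun j => (f (w j) : ℕ)) ↔
        WAcc δ t q₀ d n w := by
      intro w
      rw [accepts_iff e f (wtn_complete δ t q₀ d n) (ts n) (hts n)]
      have hmem : ∀ s, (e s : ℕ) ∈ [(e .fin : ℕ), (e .dec : ℕ)] ↔ (s = .fin ∨ s = .dec) := by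
        intro s
        simp only [List.mem_cons, List.not_mem_nil, or_false, ← Fin.ext_iff,
          e.injective.eq_iff]
      simp only [hmem]
      constructor
      · rintro ⟨k, s, hs, hr⟩
        exact ⟨_, s, hs, hr⟩
      · rintro ⟨k, s, hs, hr⟩
        cases k with
        | zero => cases hr; rcases hs with h | h <;> cases h
        | succ k => exact ⟨k, s, hs, hr⟩
    constructor
    · rintro ⟨-, hu⟩
      by_contra hd
      obtain ⟨w, hw⟩ := exists_not_acc hd
      exact hw ((hacc w).1 (hu _ fun i => (f (w i)).2))
    · intro hd
      refine ⟨⟨(e _).2, ?_, ?_, ?_⟩, ?_⟩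
      · intro q hq
        simp only [List.mem_cons, List.not_mem_nil, or_false] at hq
        rcases hq with rfl | rfl <;> exact (e _).2
      · intro x hx
        obtain ⟨s, a, s', z, -, rfl⟩ := (hts n x).1 hx
        exact ⟨(e s).2, (f a).2, (e s').2⟩
      · intro q hq x hx
        obtain ⟨s', z, h⟩ := wtn_complete δ t q₀ d n (e.symm ⟨q, hq⟩) (f.symm ⟨x, hx⟩)
        exact ⟨(e s' : ℕ), z, (hts n _).2 ⟨_, _, _, _, h, by simp⟩⟩
      · intro w hw
        have := (hacc fun i => f.symm ⟨w i, hw i⟩).2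
          (acc_of_halts (fun q a q' o h => (hδ q a q' o h).1) hd _)
        simpa using this

end enc

/-- The universality problem for integer weighted automata on infinite words under reverse
acceptance is undecidable. -/
theorem universality_reverse_weighted_automata_undecidable :
    ¬ ComputablePred (fun c : WACode => WAWellFormed c ∧ WAUniversalRev c) := by
  intro hcomp
  obtain ⟨Γ, Λ, _, _, _, M, S, hfin, hS, a, t, hM⟩ := exists_TM_unary
  have : Finite S := hfin
  obtain ⟨c, hc, hcn⟩ := reduction (QMofTM M S)
    (fun q x q' o h => QMofTM_len M S q x (q', o) h) (.sym t) (.pend (.head ⟨default, hS.1⟩ a)) .mark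
  refine hM (ComputablePred.computable_of_manyOneReducible ⟨c, hc, fun n => ?_⟩ hcomp)
  exact (QM_halts_iff M S hS a t n).symm.trans (hcn n).symm
end
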